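/- arXiv:2409.01868 — 7 statements merged into one kernel-verified Lean document; each statement's English description precedes it below -/
import Mathlib

section
/- Let U be a positive bounded linear operator on X = L^p(E, μ) with spectral radius r(U) > 0, and assume U admits a splitting U = W + K with bounded linear operators W and K such that ‖W‖ < r(U) and K(λ − W)⁻¹ is power compact for every real λ > ‖W‖. Then there exist f₀ ∈ X₊ \ {0} and φ₀ ∈ X'₊ \ {0} such that U f₀ = r(U) f₀ and U* φ₀ = r(U) φ₀. -/
open MeasureTheory Filter ENNReal

set_option linter.unusedSectionVars false

section Abstract

variable {E : Type*} [NormedAddCommGroup E] [Lattice E] [HasSolidNorm E] [IsOrderedAddMonoid E]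
  [NormedSpace ℝ E] [IsOrderedModule ℝ E]

lemma fl_pow_pos {V : E →L[ℝ] E} (hV : ∀ f, 0 ≤ f → 0 ≤ V f) (n : ℕ) :
    ∀ f, 0 ≤ f → 0 ≤ (V ^ n) f := by
  induction n with
  | zero => intro f hf; simpa using hf
  | succ n ih => intro f hf; rw [pow_succ]; exact ih _ (hV f hf)

lemma fl_neumann_pos {V : E →L[ℝ] E} (hV : ∀ f, 0 ≤ f → 0 ≤ V f)
    (hs : Summable (fun n : ℕ => V ^ n)) : ∀ f, 0 ≤ f → 0 ≤ (∑' n : ℕ, V ^ n) f := by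
  intro f hf
  have h1 := (ContinuousLinearMap.apply ℝ E f).hasSum hs.hasSum
  have h2 : Tendsto (fun s : Finset ℕ => ∑ n ∈ s, (V ^ n) f) atTop
      (nhds ((∑' n : ℕ, V ^ n) f)) := h1
  exact ge_of_tendsto' h2 fun s => Finset.sum_nonneg fun n _ => fl_pow_pos hV n f hf

lemma fl_abs_le {V : E →L[ℝ] E} (hV : ∀ f, 0 ≤ f → 0 ≤ V f) (x : E) : |V x| ≤ V |x| := by
  rw [abs_le']
  constructor
  · have := hV (|x| - x) (sub_nonneg.2 (le_abs_self x))
    rwa [map_sub, sub_nonneg] at this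
  · have := hV (|x| + x) (by rw [← neg_le_iff_add_nonneg]; exact neg_le_abs x)
    rwa [map_add, ← neg_le_iff_add_nonneg] at this

lemma fl_norm_le_of_nonneg {a b : E} (ha : 0 ≤ a) (hab : a ≤ b) : ‖a‖ ≤ ‖b‖ := by
  apply norm_le_norm_of_abs_le_abs
  rwa [abs_of_nonneg ha, abs_of_nonneg (ha.trans hab)]

lemma fl_norm_le {V : E →L[ℝ] E} (hV : ∀ f, 0 ≤ f → 0 ≤ V f) (x : E) : ‖V x‖ ≤ ‖V |x|‖ := by
  rw [← norm_abs_eq_norm (V x)]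
  exact fl_norm_le_of_nonneg (abs_nonneg _) (fl_abs_le hV x)

lemma fl_norm_dom {V S : E →L[ℝ] E} (hV : ∀ f, 0 ≤ f → 0 ≤ V f)
    (h : ∀ f, 0 ≤ f → V f ≤ S f) : ‖V‖ ≤ ‖S‖ := by
  refine V.opNorm_le_bound (norm_nonneg _) fun x => ?_
  calc ‖V x‖ ≤ ‖V |x|‖ := fl_norm_le hV x
    _ ≤ ‖S |x|‖ := fl_norm_le_of_nonneg (hV _ (abs_nonneg _)) (h _ (abs_nonneg _))
    _ ≤ ‖S‖ * ‖|x|‖ := S.le_opNorm _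
    _ = ‖S‖ * ‖x‖ := by rw [norm_abs_eq_norm]

lemma fl_pow_bdd {V S : E →L[ℝ] E} (hV : ∀ f, 0 ≤ f → 0 ≤ V f) (hS : ∀ f, 0 ≤ f → 0 ≤ S f)
    (h : S = 1 + S * V) (n : ℕ) : ‖V ^ n‖ ≤ ‖S‖ := by
  have e : ∀ f, S f = f + S (V f) := fun f => by
    conv_lhs => rw [h]
    simp
  have h1 : ∀ n : ℕ, ∀ f, 0 ≤ f → S ((V ^ n) f) ≤ S f := by
    intro n
    induction n with
    | zero => intro f _; simp
    | succ n ih =>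
      intro f hf
      rw [pow_succ]
      refine (ih _ (hV f hf)).trans ?_
      rw [e f]
      exact le_add_of_nonneg_left hf
  refine fl_norm_dom (fl_pow_pos hV n) fun f hf => le_trans ?_ (h1 n f hf)
  rw [e ((V ^ n) f)]
  exact le_add_of_nonneg_right (hS _ (hV _ (fl_pow_pos hV n f hf)))

lemma fl_smul_sup_le {c : ℝ} (hc : 0 < c) (x : E) : (c • x) ⊔ 0 ≤ c • (x ⊔ 0) :=
  sup_le (smul_le_smul_of_nonneg_left le_sup_left hc.le) (smul_nonneg hc.le le_sup_right)

lemma fl_smul_sup {c : ℝ} (hc : 0 < c) (x : E) : (c • x) ⊔ 0 = c • (x ⊔ 0) := by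
  refine le_antisymm (fl_smul_sup_le hc x) ?_
  have := smul_le_smul_of_nonneg_left (fl_smul_sup_le (inv_pos.2 hc) (c • x)) hc.le
  rwa [smul_smul, smul_smul, inv_mul_cancel₀ hc.ne', mul_inv_cancel₀ hc.ne', one_smul,
    one_smul] at this

lemma fl_norming (f : E) (hf : 0 ≤ f) (hf0 : f ≠ 0) :
    ∃ φ : E →L[ℝ] ℝ, (∀ x, 0 ≤ x → 0 ≤ φ x) ∧ ‖φ‖ ≤ 1 ∧ φ f = ‖f‖ := by
  obtain ⟨g, hg1, hg2⟩ := exists_extension_of_le_sublinear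
    (LinearPMap.mkSpanSingleton (K := ℝ) f ‖f‖ hf0) (fun x => ‖x ⊔ 0‖)
    (by
      intro c hc x
      rw [fl_smul_sup hc, norm_smul, Real.norm_of_nonneg hc.le])
    (by
      intro x y
      refine le_trans (fl_norm_le_of_nonneg le_sup_right ?_) (norm_add_le _ _)
      exact sup_le (add_le_add le_sup_left le_sup_left) (add_nonneg le_sup_right le_sup_right))
    (by
      rintro ⟨x, hx⟩
      obtain ⟨c, rfl⟩ := Submodule.mem_span_singleton.1 hx
      have hv : (LinearPMap.mkSpanSingleton (K := ℝ) f ‖f‖ hf0) ⟨c • f, hx⟩ = c * ‖f‖ :=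
        LinearPMap.mkSpanSingleton'_apply f ‖f‖ _ c hx
      rw [hv]
      change c * ‖f‖ ≤ ‖(c • f) ⊔ 0‖
      rcases le_or_gt c 0 with hc | hc
      · exact (mul_nonpos_of_nonpos_of_nonneg hc (norm_nonneg _)).trans (norm_nonneg _)
      · rw [fl_smul_sup hc, norm_smul, Real.norm_of_nonneg hc.le, sup_of_le_left hf])
  have hle : ∀ x, g x ≤ ‖x‖ := fun x => (hg2 x).trans (by
    rw [← norm_abs_eq_norm x]
    exact fl_norm_le_of_nonneg le_sup_right (sup_le (le_abs_self x) (abs_nonneg x)))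
  have hb : ∀ x, ‖g x‖ ≤ 1 * ‖x‖ := fun x => by
    rw [one_mul, Real.norm_eq_abs, abs_le']
    refine ⟨hle x, ?_⟩
    rw [← map_neg, ← norm_neg x]
    exact hle _
  refine ⟨g.mkContinuous 1 hb, ?_, g.mkContinuous_norm_le zero_le_one hb, ?_⟩
  · intro x hx
    have := hg2 (-x)
    rw [sup_of_le_right (neg_nonpos.2 hx), norm_zero, map_neg] at this
    simpa using this
  · have := hg1 ⟨f, Submodule.mem_span_singleton_self f⟩
    simp only at this
    rw [LinearMap.mkContinuous_apply, this]
    have h2 := LinearPMap.mkSpanSingleton_apply ℝ ℝ (σ := RingHom.id ℝ) hf0 ‖f‖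
    exact h2

variable [CompleteSpace E]

lemma fl_summable {U : E →L[ℝ] E} {r : ℝ}
    (hr : Tendsto (fun n : ℕ => ‖U ^ n‖ ^ (1 / (n : ℝ))) atTop (nhds r)) (hr0 : 0 < r)
    {l : ℝ} (hl : r < l) : Summable (fun n : ℕ => (l⁻¹ • U) ^ n) := by
  obtain ⟨s, hs1, hs2⟩ := exists_between hl
  have hl0 : 0 < l := hr0.trans hl
  have hs0 : 0 < s := hr0.trans hs1
  have hq : s / l < 1 := (div_lt_one hl0).2 hs2
  refine Summable.of_norm_bounded_eventually_nat
    (summable_geometric_of_lt_one (by positivity) hq) ?_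
  filter_upwards [hr.eventually (gt_mem_nhds hs1), eventually_gt_atTop 0] with n hn hn0
  have h1 : ‖U ^ n‖ ≤ s ^ n := by
    have := pow_le_pow_left₀ (by positivity) hn.le n
    rwa [one_div, Real.rpow_inv_natCast_pow (norm_nonneg _) hn0.ne'] at this
  rw [smul_pow, norm_smul, norm_pow, norm_inv, Real.norm_of_nonneg hl0.le, div_pow,
    div_eq_inv_mul, inv_pow]
  gcongr

lemma fl_resolvent {U : E →L[ℝ] E} (hU : ∀ f, 0 ≤ f → 0 ≤ U f) {r : ℝ}
    (hr : Tendsto (fun n : ℕ => ‖U ^ n‖ ^ (1 / (n : ℝ))) atTop (nhds r)) (hr0 : 0 < r)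
    {l : ℝ} (hl : r < l) : ∃ R : E →L[ℝ] E, (∀ f, 0 ≤ f → 0 ≤ R f) ∧
      R * (l • 1 - U) = 1 ∧ (l • 1 - U) * R = 1 := by
  have hs := fl_summable hr hr0 hl
  have hl0 : 0 < l := hr0.trans hl
  have hV : ∀ f, 0 ≤ f → 0 ≤ (l⁻¹ • U) f := fun f hf =>
    smul_nonneg (inv_nonneg.2 hl0.le) (hU f hf)
  have e : l • 1 - U = l • (1 - l⁻¹ • U) := by
    rw [smul_sub, smul_smul, mul_inv_cancel₀ hl0.ne', one_smul]
  refine ⟨l⁻¹ • ∑' n : ℕ, (l⁻¹ • U) ^ n, fun f hf =>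
    smul_nonneg (inv_nonneg.2 hl0.le) (fl_neumann_pos hV hs f hf), ?_, ?_⟩
  · rw [e, smul_mul_smul_comm, hs.tsum_pow_mul_one_sub, inv_mul_cancel₀ hl0.ne', one_smul]
  · rw [e, smul_mul_smul_comm, hs.one_sub_mul_tsum_pow, mul_inv_cancel₀ hl0.ne', one_smul]

lemma fl_blowup {U : E →L[ℝ] E} (hU : ∀ f, 0 ≤ f → 0 ≤ U f) {r : ℝ}
    (hr : Tendsto (fun n : ℕ => ‖U ^ n‖ ^ (1 / (n : ℝ))) atTop (nhds r)) (hr0 : 0 < r)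
    {ε M : ℝ} (hε : 0 < ε) (hM : 0 < M) : ∃ l : ℝ, r < l ∧ l < r + ε ∧
      ∃ R : E →L[ℝ] E, (∀ f, 0 ≤ f → 0 ≤ R f) ∧
      R * (l • 1 - U) = 1 ∧ (l • 1 - U) * R = 1 ∧ M ≤ ‖R‖ := by
  obtain ⟨d, hd0, hd⟩ : ∃ d : ℝ, 0 < d ∧ d < min (min ε r) (1 / (2 * M)) :=
    exists_between (by positivity)
  rw [lt_min_iff, lt_min_iff] at hd
  obtain ⟨⟨hd1, hd2⟩, hd3⟩ := hd
  obtain ⟨R, hR, hR1, hR2⟩ := fl_resolvent hU hr hr0 (l := r + d) (by linarith)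
  refine ⟨r + d, by linarith, by linarith, R, hR, hR1, hR2, ?_⟩
  by_contra! hlt
  have hl0 : 0 < r - d := by linarith
  have hsm : ‖(2 * d) • R‖ < 1 := by
    rw [norm_smul, Real.norm_of_nonneg (by positivity)]
    rw [lt_div_iff₀ (by positivity)] at hd3
    nlinarith [norm_nonneg R]
  have hs := summable_geometric_of_norm_lt_one hsm
  have hQ : ∀ f, 0 ≤ f → 0 ≤ ((2 * d) • R) f := fun f hf =>
    smul_nonneg (by positivity) (hR f hf)
  set N := ∑' n : ℕ, ((2 * d) • R) ^ n with hN
  have hNpos := fl_neumann_pos hQ hs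
  have hN1 : N * (1 - (2 * d) • R) = 1 := hs.tsum_pow_mul_one_sub
  have e : (r - d) • (1 : E →L[ℝ] E) - U = (1 - (2 * d) • R) * ((r + d) • 1 - U) := by
    rw [sub_mul, smul_mul_assoc, hR1, one_mul]
    module
  have hinv : (R * N) * ((r - d) • 1 - U) = 1 := by
    rw [e, mul_assoc, ← mul_assoc N, hN1, one_mul, hR1]
  have key : ∀ n : ℕ, ‖((r - d)⁻¹ • U) ^ n‖ ≤ ‖(r - d) • (R * N)‖ := by
    intro n
    refine fl_pow_bdd (fun f hf => smul_nonneg (inv_nonneg.2 hl0.le) (hU f hf))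
      (fun f hf => smul_nonneg hl0.le (hR _ (hNpos f hf))) ?_ n
    rw [smul_mul_smul_comm, mul_inv_cancel₀ hl0.ne', one_smul]
    rw [mul_sub, mul_smul_comm, mul_one, sub_eq_iff_eq_add] at hinv
    exact hinv
  set C := ‖(r - d) • (R * N)‖ + 1 with hC
  have hC0 : 0 < C := by positivity
  have hb : ∀ n : ℕ, ‖U ^ n‖ ≤ C * (r - d) ^ n := by
    intro n
    have := key n
    rw [smul_pow, norm_smul, norm_pow, norm_inv, Real.norm_of_nonneg hl0.le, inv_pow,
      inv_mul_le_iff₀ (by positivity)] at this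
    nlinarith [pow_pos hl0 n]
  have hlim : Tendsto (fun n : ℕ => C ^ (1 / (n : ℝ)) * (r - d)) atTop (nhds (1 * (r - d))) := by
    refine Tendsto.mul_const _ ?_
    have h0 : Tendsto (fun n : ℕ => 1 / (n : ℝ)) atTop (nhds 0) := tendsto_one_div_atTop_nhds_zero_nat
    have := (tendsto_const_nhds (x := C)).rpow h0 (Or.inl hC0.ne')
    simpa using this
  have : r ≤ 1 * (r - d) := by
    refine le_of_tendsto_of_tendsto hr hlim ?_
    filter_upwards [eventually_gt_atTop 0] with n hn
    calc ‖U ^ n‖ ^ (1 / (n : ℝ)) ≤ (C * (r - d) ^ n) ^ (1 / (n : ℝ)) :=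
          Real.rpow_le_rpow (norm_nonneg _) (hb n) (by positivity)
      _ = C ^ (1 / (n : ℝ)) * (r - d) := by
          rw [Real.mul_rpow hC0.le (by positivity), one_div,
            Real.pow_rpow_inv_natCast hl0.le hn.ne']
  linarith

lemma fl_seq {U : E →L[ℝ] E} (hU : ∀ f, 0 ≤ f → 0 ≤ U f) {r : ℝ}
    (hr : Tendsto (fun n : ℕ => ‖U ^ n‖ ^ (1 / (n : ℝ))) atTop (nhds r)) (hr0 : 0 < r)
    {ε : ℝ} (hε : 0 < ε) : ∃ (f g : E) (φ : E →L[ℝ] ℝ), 0 ≤ f ∧ ‖f‖ = 1 ∧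
      ‖(r • (1 : E →L[ℝ] E) - U) f‖ ≤ ε ∧ ‖g‖ ≤ 1 ∧ (∀ x, 0 ≤ x → 0 ≤ φ x) ∧ ‖φ‖ ≤ 2 ∧
      φ g = 1 ∧ ∀ x, |φ ((r • (1 : E →L[ℝ] E) - U) x)| ≤ ε * ‖x‖ := by
  obtain ⟨l, hl1, hl2, R, hR, hR1, hR2, hM⟩ :=
    fl_blowup hU hr hr0 (ε := ε / 4) (M := 4 / ε) (by positivity) (by positivity)
  have hRn : 0 < ‖R‖ := lt_of_lt_of_le (by positivity) hM
  obtain ⟨x, hx1, hx2⟩ := R.exists_lt_apply_of_lt_opNorm (r := ‖R‖ / 2) (by linarith)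
  set g := |x| with hg
  have hg1 : ‖g‖ ≤ 1 := by rw [hg, norm_abs_eq_norm]; exact hx1.le
  have hg0 : 0 ≤ g := abs_nonneg x
  set t := ‖R g‖ with ht
  have ht1 : ‖R‖ / 2 < t := hx2.trans_le (fl_norm_le hR x)
  have ht0 : 0 < t := by linarith
  have htinv : t⁻¹ ≤ ε / 2 := by
    have : 2 / ε ≤ t := by
      have : 4 / ε = 2 * (2 / ε) := by ring
      linarith
    calc t⁻¹ ≤ (2 / ε)⁻¹ := inv_anti₀ (by positivity) this
      _ = ε / 2 := inv_div _ _
  have hRg0 : R g ≠ 0 := norm_pos_iff.1 ht0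
  obtain ⟨φ, hφ, hφ1, hφ2⟩ := fl_norming (R g) (hR g hg0) hRg0
  have e : ∀ y, (r • (1 : E →L[ℝ] E) - U) y = (l • (1 : E →L[ℝ] E) - U) y + (r - l) • y := by
    intro y
    simp
    module
  have hrl : |r - l| ≤ ε / 4 := by rw [abs_le]; constructor <;> linarith
  have hfn : ‖t⁻¹ • R g‖ = 1 := by
    rw [norm_smul, norm_inv, Real.norm_of_nonneg ht0.le, inv_mul_cancel₀ ht0.ne']
  have hψ : ‖t⁻¹ • (φ ∘L R)‖ ≤ 2 := by
    rw [norm_smul, norm_inv, Real.norm_of_nonneg ht0.le, inv_mul_le_iff₀ ht0]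
    have := φ.opNorm_comp_le R
    nlinarith [norm_nonneg R]
  refine ⟨t⁻¹ • R g, g, t⁻¹ • (φ ∘L R), smul_nonneg (by positivity) (hR g hg0), hfn, ?_, hg1,
    ?_, hψ, ?_, ?_⟩
  · rw [e, map_smul]
    have : (l • (1 : E →L[ℝ] E) - U) (R g) = g := congrArg (fun T : E →L[ℝ] E => T g) hR2
    rw [this]
    refine (norm_add_le _ _).trans ?_
    rw [norm_smul, norm_smul (r - l), hfn, norm_inv, Real.norm_of_nonneg ht0.le, Real.norm_eq_abs]
    have : t⁻¹ * ‖g‖ ≤ t⁻¹ * 1 := by gcongr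
    linarith
  · intro x hx
    exact mul_nonneg (by positivity) (hφ _ (hR x hx))
  · simp [hφ2, ← ht, inv_mul_cancel₀ ht0.ne']
  · intro y
    rw [e, map_add, map_smul]
    have h1 : R ((l • (1 : E →L[ℝ] E) - U) y) = y := congrArg (fun T : E →L[ℝ] E => T y) hR1
    have h2 : (t⁻¹ • (φ ∘L R)) ((l • (1 : E →L[ℝ] E) - U) y) = t⁻¹ * φ y := by
      change t⁻¹ * φ (R ((l • (1 : E →L[ℝ] E) - U) y)) = _
      rw [h1]
    rw [h2]
    refine (abs_add_le _ _).trans ?_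
    rw [abs_mul, smul_eq_mul, abs_mul, abs_of_pos (inv_pos.2 ht0)]
    have h3 : |φ y| ≤ 1 * ‖y‖ := φ.le_of_opNorm_le hφ1 y
    have h4 : |(t⁻¹ • (φ ∘L R)) y| ≤ 2 * ‖y‖ := ContinuousLinearMap.le_of_opNorm_le _ hψ y
    calc _ ≤ (ε / 2) * (1 * ‖y‖) + (ε / 4) * (2 * ‖y‖) := by gcongr
      _ = ε * ‖y‖ := by ring

lemma fl_main (U W K : E →L[ℝ] E) (hU : ∀ f, 0 ≤ f → 0 ≤ U f) (r : ℝ)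
    (hr : Tendsto (fun n : ℕ => ‖U ^ n‖ ^ (1 / (n : ℝ))) atTop (nhds r)) (hr0 : 0 < r)
    (hsplit : U = W + K) (hW : ‖W‖ < r) (m : ℕ)
    (hcomp : IsCompactOperator ⇑((K * Ring.inverse (r • (1 : E →L[ℝ] E) - W)) ^ m)) :
    (∃ f₀ : E, 0 ≤ f₀ ∧ f₀ ≠ 0 ∧ U f₀ = r • f₀) ∧
    (∃ φ₀ : E →L[ℝ] ℝ, (∀ f, 0 ≤ f → 0 ≤ φ₀ f) ∧ φ₀ ≠ 0 ∧ ∀ f, φ₀ (U f) = r * φ₀ f) := by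
  have hunit : IsUnit (r • (1 : E →L[ℝ] E) - W) := by
    have e : r • (1 : E →L[ℝ] E) - W = r • (1 - r⁻¹ • W) := by
      rw [smul_sub, smul_smul, mul_inv_cancel₀ hr0.ne', one_smul]
    rw [e]
    have : IsUnit (1 - r⁻¹ • W) := by
      apply isUnit_one_sub_of_norm_lt_one
      rw [norm_smul, norm_inv, Real.norm_of_nonneg hr0.le, inv_mul_lt_iff₀ hr0]
      simpa using hW
    exact (this.smul (Units.mk0 r hr0.ne') : _)
  set D := r • (1 : E →L[ℝ] E) - W with hD
  set B := Ring.inverse D with hB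
  have hBD : B * D = 1 := Ring.inverse_mul_cancel _ hunit
  have hDB : D * B = 1 := Ring.mul_inverse_cancel _ hunit
  set A := K * B with hA
  set Z := r • (1 : E →L[ℝ] E) - U with hZ
  have hZ1 : Z = (1 - A) * D := by
    rw [sub_mul, hA, mul_assoc, hBD, one_mul, mul_one, hD, hZ, hsplit]; abel
  have hZ2 : 1 - A = Z * B := by rw [hZ1, mul_assoc, hDB, mul_one]
  set G := ∑ i ∈ Finset.range m, A ^ i with hG
  have hG1 : G * Z = D - A ^ m * D := by
    rw [hZ1, ← mul_assoc, hG, geom_sum_mul_neg, sub_mul, one_mul]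
  have hG2 : Z * (B * G) = 1 - A ^ m := by
    rw [← mul_assoc, ← hZ2, hG, mul_neg_geom_sum]
  choose f g φ hf0 hf1 hfZ hg1 hφ0 hφ1 hφg hφZ using
    fun n : ℕ => fl_seq hU hr hr0 (ε := 1 / ((n : ℝ) + 1)) (by positivity)
  have hε : Tendsto (fun n : ℕ => 1 / ((n : ℝ) + 1)) atTop (nhds 0) :=
    tendsto_one_div_add_atTop_nhds_zero_nat
  let 𝓤 : Ultrafilter ℕ := hyperfilter ℕ
  have hle : (𝓤 : Filter ℕ) ≤ atTop := Nat.hyperfilter_le_atTop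
  have hε' := hε.mono_left hle
  have hcl : ∀ (C : ℝ) (h : ℕ → E), (∀ n, ‖h n‖ ≤ C) →
      ∃ y, Tendsto (fun n => (A ^ m) (h n)) 𝓤 (nhds y) := by
    intro C h hh
    obtain ⟨Q, hQ, hQ'⟩ := IsCompactOperator.image_closedBall_subset_compact
      (f := ((A ^ m : E →L[ℝ] E) : E →ₗ[ℝ] E)) hcomp C
    obtain ⟨y, -, hy⟩ := hQ.ultrafilter_le_nhds' (𝓤.map fun n => (A ^ m) (h n))
      (Ultrafilter.mem_map.2 (Filter.univ_mem' fun n =>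
        hQ' ⟨h n, by simpa using hh n, rfl⟩))
    exact ⟨y, hy⟩
  constructor
  · have hZ0 : Tendsto (fun n => Z (f n)) 𝓤 (nhds 0) := squeeze_zero_norm hfZ hε'
    obtain ⟨y, hy⟩ := hcl ‖D‖ (fun n => D (f n)) (fun n => by
      simpa [hf1 n] using D.le_opNorm (f n))
    have h1 : Tendsto (fun n => G (Z (f n))) 𝓤 (nhds 0) := by
      have := (G.continuous.tendsto 0).comp hZ0
      rw [map_zero] at this
      exact this
    have h2 : Tendsto (fun n => D (f n)) 𝓤 (nhds y) := by
      have := h1.add hy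
      rw [zero_add] at this
      refine this.congr fun n => ?_
      have := congrArg (fun T : E →L[ℝ] E => T (f n)) hG1
      have h5 : G (Z (f n)) = D (f n) - (A ^ m) (D (f n)) := this
      rw [h5, sub_add_cancel]
    have h3 : Tendsto f 𝓤 (nhds (B y)) := by
      refine ((B.continuous.tendsto y).comp h2).congr fun n => ?_
      exact congrArg (fun T : E →L[ℝ] E => T (f n)) hBD
    refine ⟨B y, ge_of_tendsto' h3 hf0, ?_, ?_⟩
    · have : ‖B y‖ = 1 := tendsto_nhds_unique h3.norm (by simp [hf1])
      intro h0
      simp [h0] at this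
    · have := tendsto_nhds_unique ((Z.continuous.tendsto _).comp h3) hZ0
      have h4 : r • B y - U (B y) = 0 := by simpa [hZ] using this
      exact (sub_eq_zero.1 h4).symm
  · obtain ⟨y, hy⟩ := hcl 1 g hg1
    obtain ⟨ψ, -, hψ⟩ := (WeakDual.isCompact_closedBall (𝕜 := ℝ) (E := E) 0 2).ultrafilter_le_nhds'
      (𝓤.map fun n => StrongDual.toWeakDual (φ n))
      (Ultrafilter.mem_map.2 (Filter.univ_mem' fun n => by
        simpa using hφ1 n))
    have hlim : ∀ x, Tendsto (fun n => φ n x) 𝓤 (nhds (ψ x)) := by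
      intro x
      have h1 : Tendsto (fun n => StrongDual.toWeakDual (φ n)) 𝓤 (nhds ψ) := hψ
      exact ((WeakDual.eval_continuous x).tendsto ψ).comp h1
    have hψy : ψ y = 1 := by
      have h1 : Tendsto (fun n => φ n (Z ((B * G) (g n)))) 𝓤 (nhds 0) := by
        refine squeeze_zero_norm (a := fun n : ℕ => 1 / ((n : ℝ) + 1) * ‖B * G‖) (fun n => ?_) ?_
        · refine (hφZ n _).trans ?_
          have := (B * G).le_of_opNorm_le_of_le le_rfl (hg1 n)
          rw [mul_one] at this
          gcongr
        · simpa using hε'.mul_const ‖B * G‖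
      have h2 : Tendsto (fun n => φ n ((A ^ m) (g n) - y)) 𝓤 (nhds 0) := by
        refine squeeze_zero_norm (a := fun n : ℕ => 2 * ‖(A ^ m) (g n) - y‖)
          (fun n => ContinuousLinearMap.le_of_opNorm_le _ (hφ1 n) _) ?_
        have := (tendsto_iff_norm_sub_tendsto_zero.1 hy).const_mul 2
        simpa using this
      have h3 : Tendsto (fun n => φ n y) 𝓤 (nhds (1 - 0 - 0)) := by
        refine ((tendsto_const_nhds.sub h1).sub h2).congr fun n => ?_
        have := congrArg (fun T : E →L[ℝ] E => T (g n)) hG2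
        have h4 : Z ((B * G) (g n)) = g n - (A ^ m) (g n) := this
        rw [h4, map_sub, map_sub, hφg]
        ring
      have := tendsto_nhds_unique (hlim y) h3
      simpa using this
    refine ⟨WeakDual.toStrongDual ψ, ?_, ?_, ?_⟩
    · intro x hx
      exact ge_of_tendsto' (hlim x) fun n => hφ0 n x hx
    · intro h0
      have : (WeakDual.toStrongDual ψ) y = 1 := hψy
      rw [h0] at this
      simp at this
    · intro x
      have h1 : Tendsto (fun n => φ n (Z x)) 𝓤 (nhds 0) := by
        refine squeeze_zero_norm (a := fun n : ℕ => 1 / ((n : ℝ) + 1) * ‖x‖)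
          (fun n => hφZ n x) ?_
        simpa using hε'.mul_const ‖x‖
      have h2 : WeakDual.toStrongDual ψ (Z x) = 0 := tendsto_nhds_unique (hlim (Z x)) h1
      have h3 : Z x = r • x - U x := by simp [hZ]
      rw [h3, map_sub, map_smul, smul_eq_mul] at h2
      linarith

end Abstract

lemma fl_ordered {α : Type*} [MeasurableSpace α] {μ : Measure α} {p : ℝ≥0∞} [Fact (1 ≤ p)] :
    IsOrderedModule ℝ (Lp ℝ p μ) := by
  refine IsOrderedModule.of_smul_nonneg fun c hc f hf => ?_
  rw [← Lp.coeFn_nonneg] at hf ⊢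
  filter_upwards [hf, Lp.coeFn_smul c f] with x h1 h2
  rw [h2]
  exact mul_nonneg hc h1




/-- **Theorem 2.1 i).** Let `U` be a positive bounded linear operator on `X = L^p(E, μ)`
with spectral radius `r(U) > 0` (characterized via the Gelfand formula
`r(U) = lim ‖Uⁿ‖^(1/n)`), admitting a splitting `U = W + K` with `‖W‖ < r(U)` and
`K (λ - W)⁻¹` power compact for every real `λ > ‖W‖`.  Then there exist a nonzero
nonnegative `f₀ ∈ X` and a nonzero nonnegative continuous linear functional `φ₀` such that
`U f₀ = r(U) f₀` and `U* φ₀ = r(U) φ₀`. -/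
theorem floquet_existence_eigenelements
    {α : Type*} [MeasurableSpace α] {μ : Measure α} [SigmaFinite μ]
    {p : ℝ≥0∞} [Fact (1 ≤ p)] (hp : p ≠ ∞)
    (U W K : Lp ℝ p μ →L[ℝ] Lp ℝ p μ)
    (hpos : ∀ f : Lp ℝ p μ, 0 ≤ f → 0 ≤ U f)
    (r : ℝ) (hr : Tendsto (fun n : ℕ => ‖U ^ n‖ ^ (1 / (n : ℝ))) atTop (nhds r))
    (hr0 : 0 < r) (hsplit : U = W + K) (hW : ‖W‖ < r)
    (hcomp : ∀ lam : ℝ, ‖W‖ < lam → ∃ n : ℕ, 0 < n ∧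
      IsCompactOperator ⇑((K * Ring.inverse (lam • (1 : Lp ℝ p μ →L[ℝ] Lp ℝ p μ) - W)) ^ n)) :
    (∃ f₀ : Lp ℝ p μ, 0 ≤ f₀ ∧ f₀ ≠ 0 ∧ U f₀ = r • f₀) ∧
    (∃ φ₀ : Lp ℝ p μ →L[ℝ] ℝ, (∀ f, 0 ≤ f → 0 ≤ φ₀ f) ∧ φ₀ ≠ 0 ∧
      ∀ f, φ₀ (U f) = r * φ₀ f) := by
  have : IsOrderedModule ℝ (Lp ℝ p μ) := fl_ordered
  obtain ⟨m, -, hm⟩ := hcomp r hW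
  exact fl_main U W K hpos r hr hr0 hsplit hW m hm
end

section
/- Let U be a positive bounded linear operator on the complex space X_ℂ = L^p(E, μ; ℂ) with spectral radius r(U) > 0, and assume U admits a splitting U = W + K with bounded linear operators W and K such that ‖W‖ < r(U) and K(λ − W)⁻¹ is power compact for every λ ∈ ℂ with |λ| > ‖W‖. Then for every κ with ‖W‖ < κ < r(U), the set σ(U) ∩ {z ∈ ℂ : |z| ≥ κ} is finite and is contained in the point spectrum σ_p(U) (i.e., it consists of eigenvalues of U). -/
open MeasureTheory Filter ENNReal

section Aux

variable {X : Type*} [NormedAddCommGroup X] [NormedSpace ℂ X] [CompleteSpace X]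

theorem aux_parametrix (U W K : X →L[ℂ] X) (hsplit : U = W + K) (l : ℂ) (hl : ‖W‖ < ‖l‖)
    (n : ℕ)
    (hc : IsCompactOperator ⇑((K * Ring.inverse (l • (1 : X →L[ℂ] X) - W)) ^ n)) :
    ∃ B C : X →L[ℂ] X, IsCompactOperator ⇑C ∧ B * (l • 1 - U) = 1 - C := by
  have hu : IsUnit (l • (1 : X →L[ℂ] X) - W) := by
    have : l ∈ resolventSet ℂ W := by
      apply spectrum.mem_resolventSet_of_norm_lt_mul
      refine lt_of_le_of_lt ?_ hl
      have h1 : ‖(1 : X →L[ℂ] X)‖ ≤ 1 := ContinuousLinearMap.norm_id_le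
      exact mul_le_of_le_one_right (norm_nonneg _) h1
    rw [spectrum.mem_resolventSet_iff, Algebra.algebraMap_eq_smul_one] at this
    exact this
  set V := l • (1 : X →L[ℂ] X) - W with hV
  set R := Ring.inverse V with hR
  have hRV : R * V = 1 := Ring.inverse_mul_cancel _ hu
  set T := K * R with hT
  have hS : l • (1 : X →L[ℂ] X) - U = (1 - T) * V := by
    rw [sub_mul, hT, mul_assoc, hRV, hV, hsplit]; simp [sub_sub]
  refine ⟨R * ∑ i ∈ Finset.range n, T ^ i, R * T ^ n * V, ?_, ?_⟩
  · exact (hc.comp_clm V).clm_comp R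
  · have h := geom_sum_mul T n
    have h' : (∑ i ∈ Finset.range n, T ^ i) * (1 - T) = 1 - T ^ n := by
      rw [← neg_sub T 1, mul_neg, h, neg_sub]
    rw [hS, mul_assoc, ← mul_assoc _ (1 - T), h', sub_mul, mul_sub, one_mul, hRV, mul_assoc]

theorem aux_eig (U B C R : X →L[ℂ] X) (l0 l1 l : ℂ) (hC : IsCompactOperator ⇑C)
    (hB : B * (l0 • 1 - U) = 1 - C)
    (hR1 : (l1 • 1 - U) * R = 1) (hR2 : R * (l1 • 1 - U) = 1)
    (h1 : ‖l0 - l1‖ * ‖B‖ < 1) (h2 : ‖l0 - l‖ * ‖B‖ < 1)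
    (hl : l ∈ spectrum ℂ U) : ∃ f : X, f ≠ 0 ∧ U f = l • f := by
  have hD : IsUnit (1 - (l0 - l1) • B) := by
    apply isUnit_one_sub_of_norm_lt_one
    rwa [norm_smul]
  have hG : IsUnit (1 - (l0 - l) • B) := by
    apply isUnit_one_sub_of_norm_lt_one
    rwa [norm_smul]
  obtain ⟨D, hD⟩ := hD
  obtain ⟨G, hG⟩ := hG
  have hS0 : (l0 • 1 - U) * R = 1 + (l0 - l1) • R := by
    have : (l0 • 1 - U : X →L[ℂ] X) = (l1 • 1 - U) + (l0 - l1) • 1 := by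
      rw [sub_smul]; abel
    rw [this, add_mul, hR1]; simp
  have hkey : (1 - C) * R = B + (l0 - l1) • (B * R) := by
    rw [← hB, mul_assoc, hS0, mul_add, mul_one, mul_smul_comm]
  have hSl : (l • 1 - U : X →L[ℂ] X) = (l1 • 1 - U) * (1 + (l - l1) • R) := by
    rw [mul_add, mul_one, mul_smul_comm, hR1, sub_smul]; abel
  set Q : X →L[ℂ] X := (-(l - l1)) • ((↑G⁻¹ : X →L[ℂ] X) * C * R) with hQ
  have hQc : IsCompactOperator ⇑Q := ((hC.comp_clm R).clm_comp (↑G⁻¹ : X →L[ℂ] X)).smul (-(l - l1))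
  have hfac : (D : X →L[ℂ] X) * (1 + (l - l1) • R) = G * (1 - Q) := by
    have e1 : (G : X →L[ℂ] X) * Q = (-(l - l1)) • (C * R) := by
      rw [hQ, mul_smul_comm, ← mul_assoc, ← mul_assoc, Units.mul_inv, one_mul]
    rw [mul_sub, e1, hD, hG, mul_one, mul_add, mul_one, sub_mul, one_mul]
    have e2 : R = B + (l0 - l1) • (B * R) + C * R := by
      rw [← hkey, sub_mul, one_mul]; abel
    rw [mul_smul_comm, smul_mul_assoc]
    have e4 : B + (l0 - l1) • (B * R) = R - C * R := by rw [← hkey, sub_mul, one_mul]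
    have e5 : (l0 - l1) • (B * R) = R - C * R - B := by rw [← e4]; abel
    rw [e5]
    module
  rcases hQc.hasEigenvalue_or_mem_resolventSet (one_ne_zero (α := ℂ)) with h | h
  · obtain ⟨f, hf⟩ := h.exists_hasEigenvector
    refine ⟨f, hf.2, ?_⟩
    have hQf : Q f = f := by simpa using hf.apply_eq_smul
    have h3 : (D : X →L[ℂ] X) ((1 + (l - l1) • R) f) = 0 := by
      have := congrArg (fun A : X →L[ℂ] X => A f) hfac
      simpa [hQf] using this
    have h4 : (1 + (l - l1) • R) f = 0 := by
      have h5 : ((↑D⁻¹ : X →L[ℂ] X) * (D : X →L[ℂ] X)) ((1 + (l - l1) • R) f) = 0 := by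
        rw [ContinuousLinearMap.mul_apply, h3, map_zero]
      rwa [Units.inv_mul] at h5
    have h6 : (l • 1 - U : X →L[ℂ] X) f = 0 := by
      rw [hSl, ContinuousLinearMap.mul_apply, h4, map_zero]
    have h7 : l • f - U f = 0 := by simpa using h6
    exact (sub_eq_zero.mp h7).symm
  · exfalso
    rw [spectrum.mem_resolventSet_iff, map_one] at h
    apply hl
    rw [spectrum.mem_resolventSet_iff, Algebra.algebraMap_eq_smul_one, hSl]
    have hu1 : IsUnit (l1 • 1 - U : X →L[ℂ] X) := ⟨⟨_, R, hR1, hR2⟩, rfl⟩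
    refine hu1.mul ?_
    have h8 : (1 + (l - l1) • R : X →L[ℂ] X) = ↑D⁻¹ * (G * (1 - Q)) := by
      rw [← hfac, ← mul_assoc, Units.inv_mul, one_mul]
    rw [h8]
    exact (D⁻¹).isUnit.mul (G.isUnit.mul h)

theorem aux_riesz (Y Z : Submodule ℂ X) (hY : IsClosed (Y : Set X)) (x : X) (hx : x ∈ Z)
    (hx' : x ∉ Y) : ∃ y ∈ Z, ‖y‖ ≤ 2 ∧ ∀ w ∈ Y, w ∈ Z → 1 ≤ ‖y - w‖ := by
  have h₁ : IsClosed ((Y.comap Z.subtype : Submodule ℂ Z) : Set Z) := by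
    exact hY.preimage continuous_subtype_val
  have hc : 1 < ‖(3 / 2 : ℂ)‖ := by norm_num
  have hc2 : ‖(3 / 2 : ℂ)‖ < 2 := by norm_num
  obtain ⟨y, hy1, hy2⟩ := riesz_lemma_of_norm_lt hc hc2 h₁ ⟨⟨x, hx⟩, by simpa using hx'⟩
  refine ⟨y, y.2, hy1, fun w hw hw' => ?_⟩
  exact hy2 ⟨w, hw'⟩ (by simpa using hw)

theorem aux_fin (U B C R : X →L[ℂ] X) (l0 l1 : ℂ) (hC : IsCompactOperator ⇑C)
    (hB : B * (l0 • 1 - U) = 1 - C)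
    (hR1 : (l1 • 1 - U) * R = 1) (hR2 : R * (l1 • 1 - U) = 1)
    (h1 : ‖l0 - l1‖ < 1 / (20 * (‖B‖ + 1))) :
    {l : ℂ | ‖l1 - l‖ < 1 / (10 * (‖B‖ + 1)) ∧ ∃ f : X, f ≠ 0 ∧ U f = l • f}.Finite := by
  by_contra hinf
  have hinf : Set.Infinite _ := hinf
  set b := ‖B‖ + 1 with hb
  have hBn := norm_nonneg B
  have hb1 : 1 ≤ b := by linarith
  let e := hinf.natEmbedding
  let lam : ℕ → ℂ := fun n => (e n : ℂ)
  have hlam : Function.Injective lam := fun m n h => e.injective (Subtype.ext h)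
  have hl : ∀ n, ‖l1 - lam n‖ < 1 / (10 * b) := fun n => (e n).2.1
  have hex : ∀ n, ∃ f : X, f ≠ 0 ∧ U f = lam n • f := fun n => (e n).2.2
  choose x hx0 hx using hex
  have hli : LinearIndependent ℂ x := by
    refine Module.End.eigenvectors_linearIndependent' (U : Module.End ℂ X) lam hlam x fun n => ?_
    rw [Module.End.hasEigenvector_iff]
    exact ⟨by rw [Module.End.mem_eigenspace_iff]; exact hx n, hx0 n⟩
  have hS0 : (l0 • 1 - U) * R = 1 + (l0 - l1) • R := by
    have : (l0 • 1 - U : X →L[ℂ] X) = (l1 • 1 - U) + (l0 - l1) • 1 := by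
      rw [sub_smul]; abel
    rw [this, add_mul, hR1]; simp
  have hkey : (1 - C) * R = B + (l0 - l1) • (B * R) := by
    rw [← hB, mul_assoc, hS0, mul_add, mul_one, mul_smul_comm]
  have hRx' : ∀ n, (l1 - lam n) • R (x n) = x n := by
    intro n
    have := congrArg (fun A : X →L[ℂ] X => A (x n)) hR2
    simp only [ContinuousLinearMap.mul_apply, ContinuousLinearMap.sub_apply,
      ContinuousLinearMap.smul_apply, ContinuousLinearMap.one_apply, hx n] at this
    rw [← sub_smul, map_smul] at this
    exact this
  have hne : ∀ n, l1 - lam n ≠ 0 := by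
    intro n h
    have := hRx' n
    rw [h, zero_smul] at this
    exact hx0 n this.symm
  let z : ℕ → ℂ := fun n => (l1 - lam n)⁻¹
  have hRx : ∀ n, R (x n) = z n • x n := by
    intro n
    conv_rhs => rw [← hRx' n]
    rw [smul_smul, inv_mul_cancel₀ (hne n), one_smul]
  have hz0 : ∀ n, z n ≠ 0 := fun n => inv_ne_zero (hne n)
  have hz : ∀ n, 10 * b ≤ ‖z n‖ := by
    intro n
    have h := hl n
    have hp : 0 < ‖l1 - lam n‖ := norm_pos_iff.mpr (hne n)
    rw [norm_inv, le_inv_comm₀ (by positivity) hp, ← one_div]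
    exact h.le
  let Y : ℕ → Submodule ℂ X := fun n => Submodule.span ℂ (x '' Set.Iio n)
  have hYmono : Monotone Y := fun m n h =>
    Submodule.span_mono (Set.image_mono (Set.Iio_subset_Iio h))
  have hYc : ∀ n, IsClosed (Y n : Set X) := by
    intro n
    have : FiniteDimensional ℂ (Y n) :=
      FiniteDimensional.span_of_finite ℂ ((Set.finite_Iio n).image x)
    exact (Y n).closed_of_finiteDimensional
  have hxY : ∀ n, x n ∉ Y n := fun n => hli.notMem_span_image (by simp)
  have hxY' : ∀ n, x n ∈ Y (n + 1) := fun n =>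
    Submodule.subset_span ⟨n, by simp, rfl⟩
  have hRY : ∀ n, ∀ y ∈ Y n, R y ∈ Y n := by
    intro n y hy
    have : Y n ≤ (Y n).comap (R : X →ₗ[ℂ] X) := by
      refine Submodule.span_le.mpr ?_
      rintro _ ⟨k, hk, rfl⟩
      show R (x k) ∈ Y n
      rw [hRx]
      exact (Y n).smul_mem _ (Submodule.subset_span ⟨k, hk, rfl⟩)
    exact this hy
  have hRzY : ∀ n, ∀ y ∈ Y (n + 1), R y - z n • y ∈ Y n := by
    intro n y hy
    have : Y (n + 1) ≤ (Y n).comap ((R - z n • 1 : X →L[ℂ] X) : X →ₗ[ℂ] X) := by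
      refine Submodule.span_le.mpr ?_
      rintro _ ⟨k, hk, rfl⟩
      show (R - z n • 1 : X →L[ℂ] X) (x k) ∈ Y n
      have : (R - z n • 1 : X →L[ℂ] X) (x k) = (z k - z n) • x k := by
        simp [hRx, sub_smul]
      rw [this]
      rcases Nat.lt_succ_iff_lt_or_eq.mp hk with h | h
      · exact (Y n).smul_mem _ (Submodule.subset_span ⟨k, h, rfl⟩)
      · simp [h]
    simpa using this hy
  have hy : ∀ n, ∃ y ∈ Y (n + 1), ‖y‖ ≤ 2 ∧ ∀ w ∈ Y n, w ∈ Y (n + 1) → 1 ≤ ‖y - w‖ :=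
    fun n => aux_riesz (Y n) (Y (n + 1)) (hYc n) (x n) (hxY' n) (hxY n)
  choose y hyY hy2 hyd using hy
  have hv : ∀ m n, m < n → 10 * b ≤ ‖R (y n - y m)‖ := by
    intro m n hmn
    have hmY : y m ∈ Y n := hYmono hmn (hyY m)
    set w := (z n)⁻¹ • (R (y m) - (R (y n) - z n • y n)) with hw
    have hwY : w ∈ Y n :=
      (Y n).smul_mem _ ((Y n).sub_mem (hRY n _ hmY) (hRzY n _ (hyY n)))
    have he : R (y n - y m) = z n • (y n - w) := by
      rw [hw, smul_sub (z n) (y n), smul_smul, mul_inv_cancel₀ (hz0 n), one_smul, map_sub]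
      abel
    rw [he, norm_smul]
    have := hyd n w hwY (hYmono (Nat.le_succ n) hwY)
    nlinarith [hz n]
  have hQ : ∀ m n, m < n → 1 ≤ ‖(C * R) (y n) - (C * R) (y m)‖ := by
    intro m n hmn
    set d := y n - y m with hd
    have hdn : ‖d‖ ≤ 4 := by
      have := norm_sub_le (y n) (y m)
      linarith [hy2 n, hy2 m]
    have h3 := hv m n hmn
    rw [← map_sub]
    have h4 : R d = B d + (l0 - l1) • B (R d) + (C * R) d := by
      have := congrArg (fun A : X →L[ℂ] X => A d) hkey
      simp only [ContinuousLinearMap.mul_apply, ContinuousLinearMap.sub_apply,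
        ContinuousLinearMap.smul_apply, ContinuousLinearMap.one_apply,
        ContinuousLinearMap.add_apply] at this
      rw [← this, ContinuousLinearMap.mul_apply]; abel
    have h5 : ‖R d‖ ≤ ‖B d‖ + ‖(l0 - l1) • B (R d)‖ + ‖(C * R) d‖ := by
      conv_lhs => rw [h4]
      exact norm_add₃_le
    have h6 : ‖B d‖ ≤ 4 * b := by
      have := B.le_opNorm d
      nlinarith [norm_nonneg d]
    have h7 : ‖(l0 - l1) • B (R d)‖ ≤ ‖R d‖ / 20 := by
      rw [norm_smul]
      have h8 : ‖B (R d)‖ ≤ b * ‖R d‖ := by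
        have := B.le_opNorm (R d)
        nlinarith [norm_nonneg (R d)]
      calc ‖l0 - l1‖ * ‖B (R d)‖ ≤ 1 / (20 * b) * (b * ‖R d‖) := by gcongr
        _ = ‖R d‖ / 20 := by field_simp
    rw [← hd] at *
    linarith
  have hQc : IsCompactOperator ⇑(C * R) := hC.comp_clm R
  obtain ⟨Kc, hK, hK'⟩ := hQc.image_closedBall_subset_compact (𝕜₁ := ℂ) (f := ((C * R : X →L[ℂ] X) : X →ₗ[ℂ] X)) 2
  obtain ⟨a, -, φ, hφ, hlim⟩ := hK.tendsto_subseq (x := fun n => (C * R) (y n))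
    (fun n => hK' ⟨y n, by simpa using hy2 n, rfl⟩)
  have hcau := hlim.cauchySeq
  rw [Metric.cauchySeq_iff'] at hcau
  obtain ⟨N, hN⟩ := hcau 1 one_pos
  have h9 := hN (N + 1) (Nat.le_succ N)
  rw [dist_eq_norm] at h9
  exact absurd (hQ _ _ (hφ (Nat.lt_succ_self N))) (not_le.mpr h9)

theorem aux_local (U B C : X →L[ℂ] X) (l0 : ℂ) (hC : IsCompactOperator ⇑C)
    (hB : B * (l0 • 1 - U) = 1 - C) (hcl : l0 ∈ closure (resolventSet ℂ U)) :
    ∃ ε > 0, (spectrum ℂ U ∩ Metric.ball l0 ε).Finite ∧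
      ∀ l ∈ spectrum ℂ U ∩ Metric.ball l0 ε, ∃ f : X, f ≠ 0 ∧ U f = l • f := by
  have hBn := norm_nonneg B
  set ε := 1 / (20 * (‖B‖ + 1)) with hε
  have hε0 : 0 < ε := by positivity
  have hεB : ε * ‖B‖ < 1 := by
    rw [hε, one_div, inv_mul_lt_iff₀ (by positivity)]; linarith
  have h2ε : ε + ε = 1 / (10 * (‖B‖ + 1)) := by rw [hε]; field_simp; norm_num
  obtain ⟨l1, hl1, hd⟩ := Metric.mem_closure_iff.mp hcl ε hε0
  rw [spectrum.mem_resolventSet_iff, Algebra.algebraMap_eq_smul_one] at hl1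
  obtain ⟨u, hu⟩ := hl1
  have hR1 : (l1 • 1 - U) * (↑u⁻¹ : X →L[ℂ] X) = 1 := by rw [← hu, Units.mul_inv]
  have hR2 : (↑u⁻¹ : X →L[ℂ] X) * (l1 • 1 - U) = 1 := by rw [← hu, Units.inv_mul]
  rw [dist_eq_norm] at hd
  have heig : ∀ l ∈ spectrum ℂ U ∩ Metric.ball l0 ε, ∃ f : X, f ≠ 0 ∧ U f = l • f := by
    rintro l ⟨hl, hlb⟩
    rw [Metric.mem_ball', dist_eq_norm] at hlb
    refine aux_eig U B C _ l0 l1 l hC hB hR1 hR2 ?_ ?_ hl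
    · exact lt_of_le_of_lt (by gcongr) hεB
    · exact lt_of_le_of_lt (by gcongr) hεB
  refine ⟨ε, hε0, (aux_fin U B C _ l0 l1 hC hB hR1 hR2 hd).subset ?_, heig⟩
  intro l hl
  refine ⟨?_, heig l hl⟩
  have hlb := hl.2
  rw [Metric.mem_ball', dist_eq_norm] at hlb
  rw [← h2ε]
  calc ‖l1 - l‖ = ‖(l0 - l) - (l0 - l1)‖ := by congr 1; ring
    _ ≤ ‖l0 - l‖ + ‖l0 - l1‖ := norm_sub_le _ _
    _ < ε + ε := by linarith

theorem aux_main (U W K : X →L[ℂ] X) (hsplit : U = W + K)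
    (hcomp : ∀ lam : ℂ, ‖W‖ < ‖lam‖ → ∃ n : ℕ, 0 < n ∧
      IsCompactOperator ⇑((K * Ring.inverse (lam • (1 : X →L[ℂ] X) - W)) ^ n))
    (κ : ℝ) (hκ : ‖W‖ < κ) :
      {z : ℂ | z ∈ spectrum ℂ U ∧ κ ≤ ‖z‖}.Finite ∧
      ∀ z ∈ spectrum ℂ U, κ ≤ ‖z‖ → ∃ f : X, f ≠ 0 ∧ U f = z • f := by
  have hloc : ∀ l0 : ℂ, ‖W‖ < ‖l0‖ → l0 ∈ closure (resolventSet ℂ U) →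
      ∃ ε > 0, (spectrum ℂ U ∩ Metric.ball l0 ε).Finite ∧
        ∀ l ∈ spectrum ℂ U ∩ Metric.ball l0 ε, ∃ f : X, f ≠ 0 ∧ U f = l • f := by
    intro l0 h0 hcl
    obtain ⟨n, -, hn⟩ := hcomp l0 h0
    obtain ⟨B, C, hC, hB⟩ := aux_parametrix U W K hsplit l0 h0 n hn
    exact aux_local U B C l0 hC hB hcl
  have hall : ∀ l0 : ℂ, ‖W‖ < ‖l0‖ → l0 ∈ closure (resolventSet ℂ U) := by
    intro l0 h0
    have hl0 : 0 < ‖l0‖ := lt_of_le_of_lt (norm_nonneg _) h0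
    let s : Set ℂ := (fun t : ℝ => (t : ℂ) * l0) '' Set.Ici 1
    have hs : IsPreconnected s := isPreconnected_Ici.image _ (by fun_prop)
    have hsW : ∀ z ∈ s, ‖W‖ < ‖z‖ := by
      rintro _ ⟨t, ht, rfl⟩
      have ht : 1 ≤ t := ht
      simp only [norm_mul, Complex.norm_real, Real.norm_eq_abs]
      rw [abs_of_nonneg (by linarith)]
      nlinarith
    have hsub : s ⊆ interior (closure (resolventSet ℂ U)) := by
      apply hs.subset_of_closure_inter_subset isOpen_interior
      · set M := ‖U‖ * ‖(1 : X →L[ℂ] X)‖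
        have hM : 0 ≤ M := by positivity
        refine ⟨((1 + M / ‖l0‖ : ℝ) : ℂ) * l0, ⟨_, ?_, rfl⟩, ?_⟩
        · have : 0 ≤ M / ‖l0‖ := by positivity
          show (1 : ℝ) ≤ _
          linarith
        · apply interior_mono subset_closure
          rw [(spectrum.isOpen_resolventSet U).interior_eq]
          apply spectrum.mem_resolventSet_of_norm_lt_mul
          rw [norm_mul, Complex.norm_real, Real.norm_eq_abs, abs_of_nonneg (by positivity)]
          have : (1 + M / ‖l0‖) * ‖l0‖ = ‖l0‖ + M := by field_simp
          rw [this]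
          show M < _
          linarith
      · rintro z ⟨hz1, hz2⟩
        have hzc : z ∈ closure (resolventSet ℂ U) :=
          closure_minimal interior_subset isClosed_closure hz1
        obtain ⟨ε, hε, hfin, -⟩ := hloc z (hsW z hz2) hzc
        rw [mem_interior]
        refine ⟨Metric.ball z ε, ?_, Metric.isOpen_ball, Metric.mem_ball_self hε⟩
        have hd : Dense ((spectrum ℂ U ∩ Metric.ball z ε)ᶜ) := Set.Countable.dense_compl ℂ hfin.countable
        refine (hd.open_subset_closure_inter Metric.isOpen_ball).trans (closure_mono ?_)
        rintro w ⟨hw1, hw2⟩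
        by_contra hw3
        exact hw2 ⟨hw3, hw1⟩
    exact interior_subset (hsub ⟨1, by simp, by simp⟩)
  constructor
  · have hcpt : IsCompact {z : ℂ | z ∈ spectrum ℂ U ∧ κ ≤ ‖z‖} :=
      (spectrum.isCompact U).inter_right (isClosed_le continuous_const continuous_norm)
    refine hcpt.induction_on (p := fun t => (t ∩ spectrum ℂ U).Finite) (by simp)
      (fun s t hst ht => ht.subset (Set.inter_subset_inter_left _ hst))
      (fun s t hs ht => by rw [Set.union_inter_distrib_right]; exact hs.union ht) ?_ |>.subset ?_
    · rintro z ⟨hz, hzκ⟩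
      have hzW := lt_of_lt_of_le hκ hzκ
      obtain ⟨ε, hε, hfin, -⟩ := hloc z hzW (hall z hzW)
      exact ⟨Metric.ball z ε, mem_nhdsWithin_of_mem_nhds (Metric.ball_mem_nhds z hε),
        by rwa [Set.inter_comm]⟩
    · exact fun z hz => ⟨hz, hz.1⟩
  · intro z hz hzκ
    have hzW := lt_of_lt_of_le hκ hzκ
    obtain ⟨ε, hε, -, heig⟩ := hloc z hzW (hall z hzW)
    exact heig z ⟨hz, Metric.mem_ball_self hε⟩

end Aux

/-- **Theorem 2.1 ii).** Let `U` be a positive bounded linear operator on the complex space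
`X_ℂ = L^p(E, μ; ℂ)` (mapping a.e. real-valued functions to a.e. real-valued functions and
a.e. nonnegative functions to a.e. nonnegative functions), with spectral radius `r(U) > 0`
(Gelfand formula), admitting a splitting `U = W + K` with `‖W‖ < r(U)` and `K (λ - W)⁻¹`
power compact for every `λ ∈ ℂ` with `|λ| > ‖W‖`.  Then for every `κ` with
`‖W‖ < κ < r(U)`, the part of the spectrum `σ(U) ∩ {|z| ≥ κ}` is a finite set consisting
of eigenvalues of `U`. -/
theorem spectrum_outside_ball_finite_eigenvalues
    {α : Type*} [MeasurableSpace α] {μ : Measure α} [SigmaFinite μ]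
    {p : ℝ≥0∞} [Fact (1 ≤ p)] (hp : p ≠ ∞)
    (U W K : Lp ℂ p μ →L[ℂ] Lp ℂ p μ)
    (hreal : ∀ f : Lp ℂ p μ, (∀ᵐ x ∂μ, (f x).im = 0) → (∀ᵐ x ∂μ, ((U f) x).im = 0))
    (hpos : ∀ f : Lp ℂ p μ, (∀ᵐ x ∂μ, (f x).im = 0 ∧ 0 ≤ (f x).re) →
      (∀ᵐ x ∂μ, ((U f) x).im = 0 ∧ 0 ≤ ((U f) x).re))
    (r : ℝ) (hr : Tendsto (fun n : ℕ => ‖U ^ n‖ ^ (1 / (n : ℝ))) atTop (nhds r))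
    (hr0 : 0 < r) (hsplit : U = W + K) (hW : ‖W‖ < r)
    (hcomp : ∀ lam : ℂ, ‖W‖ < ‖lam‖ → ∃ n : ℕ, 0 < n ∧
      IsCompactOperator ⇑((K * Ring.inverse (lam • (1 : Lp ℂ p μ →L[ℂ] Lp ℂ p μ) - W)) ^ n)) :
    ∀ κ : ℝ, ‖W‖ < κ → κ < r →
      {z : ℂ | z ∈ spectrum ℂ U ∧ κ ≤ ‖z‖}.Finite ∧
      ∀ z ∈ spectrum ℂ U, κ ≤ ‖z‖ → ∃ f : Lp ℂ p μ, f ≠ 0 ∧ U f = z • f := by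
  intro κ hκ _
  exact aux_main U W K hsplit hcomp κ hκ
end

section
/- Let U be a strictly positive bounded linear operator on X = L^p(E, μ) with spectral radius r(U) > 0, and suppose there exist f₀ ∈ X₊ \ {0} and φ₀ ∈ X'₊ \ {0} with U f₀ = r(U) f₀ and U* φ₀ = r(U) φ₀. Then the eigenspace {f ∈ X : U f = r(U) f} equals the span of f₀, and the eigenspace {φ ∈ X' : U* φ = r(U) φ} equals the span of φ₀. -/
open MeasureTheory Filter ENNReal

section helpers
variable {α : Type*} [MeasurableSpace α] {μ : Measure α} {p : ℝ≥0∞} [Fact (1 ≤ p)]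

lemma aux_dct (hp : p ≠ ∞) {ι : Type*} {l : Filter ι} [l.IsCountablyGenerated]
    (F : ι → Lp ℝ p μ) (f g : Lp ℝ p μ) (hb : ∀ n, ∀ᵐ x ∂μ, |F n x| ≤ g x)
    (hf : ∀ᵐ x ∂μ, |f x| ≤ g x)
    (hl : ∀ᵐ x ∂μ, Tendsto (fun n => F n x) l (nhds (f x))) : Tendsto F l (nhds f) := by
  have hp1 : (1 : ℝ≥0∞) ≤ p := Fact.out
  have hp0 : p ≠ 0 := (lt_of_lt_of_le zero_lt_one hp1).ne'
  have hpr : 0 < p.toReal := ENNReal.toReal_pos hp0 hp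
  rw [Lp.tendsto_Lp_iff_tendsto_eLpNorm']
  simp_rw [eLpNorm_eq_lintegral_rpow_enorm_toReal hp0 hp]
  have key : Tendsto (fun n => ∫⁻ x, ‖(⇑(F n) - ⇑f) x‖ₑ ^ p.toReal ∂μ) l
      (nhds (∫⁻ x, (0 : ℝ≥0∞) ∂μ)) := by
    refine tendsto_lintegral_filter_of_dominated_convergence'
      (fun x => ‖((2 : ℝ) • g : Lp ℝ p μ) x‖ₑ ^ p.toReal) ?_ ?_ ?_ ?_
    · refine Eventually.of_forall fun n => ?_
      exact (((Lp.aestronglyMeasurable (F n)).sub (Lp.aestronglyMeasurable f)).enorm).pow_const _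
    · refine Eventually.of_forall fun n => ?_
      filter_upwards [hb n, hf, Lp.coeFn_smul (2 : ℝ) g] with x h1 h2 h3
      refine ENNReal.rpow_le_rpow ?_ hpr.le
      rw [enorm_le_iff_norm_le, h3]
      simp only [Pi.sub_apply, Pi.smul_apply, smul_eq_mul, Real.norm_eq_abs]
      rw [abs_mul, abs_of_nonneg ((abs_nonneg _).trans h2), abs_two]
      linarith [abs_sub (F n x) (f x)]
    · exact (lintegral_rpow_enorm_lt_top_of_eLpNorm_lt_top hp0 hp (Lp.eLpNorm_lt_top _)).ne
    · filter_upwards [hl] with x hx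
      have h1 : Tendsto (fun n => ‖F n x - f x‖ₑ) l (nhds 0) := by
        have := (hx.sub_const (f x)).enorm
        simpa using this
      have h2 := h1.ennrpow_const p.toReal
      simpa [ENNReal.zero_rpow_of_pos hpr] using h2
  have h2 := key.ennrpow_const (1 / p.toReal)
  simpa [hpr] using h2

/-- multiplication by an indicator -/
noncomputable def auxIndFun (A : Set α) (hA : MeasurableSet A) (f : Lp ℝ p μ) : Lp ℝ p μ :=
  MemLp.toLp (A.indicator (fun y => f y)) ((Lp.memLp f).indicator hA)

lemma auxIndFun_coe (A : Set α) (hA : MeasurableSet A) (f : Lp ℝ p μ) :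
    ∀ᵐ x ∂μ, auxIndFun A hA f x = A.indicator (fun y => f y) x := by
  have h : MemLp (A.indicator (fun y => f y)) p μ := (Lp.memLp f).indicator hA
  exact h.coeFn_toLp

lemma auxIndFun_add (A : Set α) (hA : MeasurableSet A) (f g : Lp ℝ p μ) :
    auxIndFun A hA (f + g) = auxIndFun A hA f + auxIndFun A hA g := by
  ext1
  filter_upwards [auxIndFun_coe A hA (f + g), auxIndFun_coe A hA f, auxIndFun_coe A hA g,
    Lp.coeFn_add f g, Lp.coeFn_add (auxIndFun A hA f) (auxIndFun A hA g)] with x h1 h2 h3 h4 h5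
  rw [h1, h5, Pi.add_apply, h2, h3]
  by_cases hx : x ∈ A
  · simp only [Set.indicator_of_mem hx]; exact h4
  · simp [hx]

lemma auxIndFun_smul (A : Set α) (hA : MeasurableSet A) (c : ℝ) (f : Lp ℝ p μ) :
    auxIndFun A hA (c • f) = c • auxIndFun A hA f := by
  ext1
  filter_upwards [auxIndFun_coe A hA (c • f), auxIndFun_coe A hA f,
    Lp.coeFn_smul c f, Lp.coeFn_smul c (auxIndFun A hA f)] with x h1 h2 h4 h5
  rw [h1, h5, Pi.smul_apply, h2]
  by_cases hx : x ∈ A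
  · simp only [Set.indicator_of_mem hx]; exact h4
  · simp [hx]

lemma auxIndFun_norm (A : Set α) (hA : MeasurableSet A) (f : Lp ℝ p μ) :
    ‖auxIndFun A hA f‖ ≤ 1 * ‖f‖ := by
  rw [one_mul]
  refine Lp.norm_le_norm_of_ae_le ?_
  filter_upwards [auxIndFun_coe A hA f] with x h1
  rw [h1]
  exact norm_indicator_le_norm_self _ _

/-- multiplication by an indicator, as a continuous linear map -/
noncomputable def auxInd (A : Set α) (hA : MeasurableSet A) : Lp ℝ p μ →L[ℝ] Lp ℝ p μ :=
  LinearMap.mkContinuous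
    { toFun := auxIndFun A hA
      map_add' := auxIndFun_add A hA
      map_smul' := auxIndFun_smul A hA } 1 (auxIndFun_norm A hA)

lemma auxInd_coe (A : Set α) (hA : MeasurableSet A) (f : Lp ℝ p μ) :
    ∀ᵐ x ∂μ, auxInd A hA f x = A.indicator (fun y => f y) x := auxIndFun_coe A hA f

/-- A positive functional vanishing at an a.e. positive function vanishes. -/
lemma aux_zero (hp : p ≠ ∞) (φ : Lp ℝ p μ →L[ℝ] ℝ) (hφ : ∀ f, 0 ≤ f → 0 ≤ φ f)
    (g : Lp ℝ p μ) (hg : ∀ᵐ x ∂μ, 0 < g x) (h0 : φ g = 0) : φ = 0 := by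
  have hpos : ∀ f, 0 ≤ f → φ f = 0 := by
    intro f hf
    have hf' := (Lp.coeFn_nonneg f).2 hf
    have hco : ∀ n : ℕ, ∀ᵐ x ∂μ, (f ⊓ (n : ℝ) • g : Lp ℝ p μ) x = min (f x) (n * g x) := by
      intro n
      filter_upwards [Lp.coeFn_inf f ((n : ℝ) • g), Lp.coeFn_smul (n : ℝ) g] with x h1 h2
      rw [h1, Pi.inf_apply, h2]; rfl
    have ht : Tendsto (fun n : ℕ => f ⊓ (n : ℝ) • g) atTop (nhds f) := by
      refine aux_dct hp _ f f ?_ ?_ ?_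
      · intro n
        filter_upwards [hco n, hf', hg] with x h1 h2 h3
        have h2' : 0 ≤ f x := h2
        rw [h1, abs_of_nonneg (le_min h2' (by positivity))]
        exact min_le_left _ _
      · filter_upwards [hf'] with x h
        exact (abs_of_nonneg h).le
      · filter_upwards [ae_all_iff.2 hco, hg] with x h1 h2
        refine tendsto_const_nhds.congr' ?_
        obtain ⟨N, hN⟩ := exists_nat_ge (f x / g x)
        filter_upwards [eventually_ge_atTop N] with n hn
        rw [h1, min_eq_left]
        rw [← div_le_iff₀ h2]
        exact hN.trans (by exact_mod_cast hn)
    have hz : ∀ n : ℕ, φ (f ⊓ (n : ℝ) • g) ≤ 0 := by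
      intro n
      have := hφ ((n : ℝ) • g - f ⊓ (n : ℝ) • g) (sub_nonneg.2 inf_le_right)
      rw [map_sub, map_smul, h0] at this
      simpa using this
    exact le_antisymm (le_of_tendsto' ((φ.continuous.tendsto f).comp ht) hz) (hφ f hf)
  ext f
  have h1 := hpos |f| (abs_nonneg f)
  have h2 := hpos (|f| - f) (sub_nonneg.2 (le_abs_self f))
  rw [map_sub, h1] at h2
  simpa using h2


lemma aux_simple (ψ : Lp ℝ p μ →L[ℝ] ℝ) (f₀ : Lp ℝ p μ)
    (hψ : ∀ (A : Set α) (hA : MeasurableSet A), 0 ≤ ψ (auxInd A hA f₀))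
    (s : SimpleFunc α NNReal) :
    ∃ g : Lp ℝ p μ, (∀ᵐ x ∂μ, g x = (s x : ℝ) * f₀ x) ∧ 0 ≤ ψ g := by
  induction s using SimpleFunc.induction with
  | const c hs =>
    rename_i A
    refine ⟨(c : ℝ) • auxInd A hs f₀, ?_, ?_⟩
    · filter_upwards [Lp.coeFn_smul (c : ℝ) (auxInd A hs f₀), auxInd_coe A hs f₀] with x h1 h2
      rw [h1, Pi.smul_apply, h2]
      by_cases hx : x ∈ A <;> simp [hx]
    · rw [map_smul]
      exact mul_nonneg c.2 (hψ A hs)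
  | add hd h1 h2 =>
    obtain ⟨g1, h1, h1'⟩ := h1
    obtain ⟨g2, h2, h2'⟩ := h2
    refine ⟨g1 + g2, ?_, ?_⟩
    · filter_upwards [h1, h2, Lp.coeFn_add g1 g2] with x h1 h2 h3
      rw [h3, Pi.add_apply, h1, h2]
      simp [add_mul]
    · rw [map_add]; exact add_nonneg h1' h2'

lemma aux_pos (hp : p ≠ ∞) (ψ : Lp ℝ p μ →L[ℝ] ℝ) (f₀ : Lp ℝ p μ)
    (hf₀ : ∀ᵐ x ∂μ, 0 < f₀ x)
    (hψ : ∀ (A : Set α) (hA : MeasurableSet A), 0 ≤ ψ (auxInd A hA f₀))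
    (f : Lp ℝ p μ) (hf : 0 ≤ f) : 0 ≤ ψ f := by
  have hf' := (Lp.coeFn_nonneg f).2 hf
  set h : α → ℝ≥0∞ := fun x => ENNReal.ofReal (f x / f₀ x) with hh
  have hm : Measurable h := ((Lp.stronglyMeasurable f).measurable.div
    (Lp.stronglyMeasurable f₀).measurable).ennreal_ofReal
  choose F hF hF0 using fun n : ℕ => aux_simple ψ f₀ hψ
    ((SimpleFunc.eapprox h n).map ENNReal.toNNReal)
  have ht : Tendsto F atTop (nhds f) := by
    refine aux_dct hp F f f ?_ ?_ ?_
    · intro n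
      filter_upwards [hF n, hf', hf₀] with x h1 h2 h3
      have h2' : 0 ≤ f x := h2
      rw [h1, abs_of_nonneg (by positivity), ← le_div_iff₀ h3]
      have h4 : SimpleFunc.eapprox h n x ≤ h x := by
        rw [← SimpleFunc.iSup_eapprox_apply hm x]
        exact le_iSup (fun k => SimpleFunc.eapprox h k x) n
      have h5 := ENNReal.toReal_mono (by simp [hh]) h4
      rw [hh] at h5
      simp only at h5
      rw [ENNReal.toReal_ofReal (by positivity)] at h5
      exact h5
    · filter_upwards [hf'] with x h
      exact (abs_of_nonneg h).le
    · filter_upwards [ae_all_iff.2 hF, hf', hf₀] with x h1 h2 h3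
      have h2' : 0 ≤ f x := h2
      have h4 := (ENNReal.tendsto_toReal (by simp [hh] : h x ≠ ∞)).comp
        (SimpleFunc.tendsto_eapprox hm x)
      have h5 : (h x).toReal = f x / f₀ x := ENNReal.toReal_ofReal (by positivity)
      rw [h5] at h4
      have h6 := h4.mul_const (f₀ x)
      rw [div_mul_cancel₀ _ h3.ne'] at h6
      refine h6.congr fun n => ?_
      rw [h1]; rfl
  exact ge_of_tendsto' ((ψ.continuous.tendsto f).comp ht) hF0

open Classical in
lemma aux_hahn (hp : p ≠ ∞) (ψ : Lp ℝ p μ →L[ℝ] ℝ) (f₀ : Lp ℝ p μ) :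
    ∃ (P : Set α) (_ : MeasurableSet P),
      (∀ (A : Set α) (hA : MeasurableSet A), A ⊆ P → 0 ≤ ψ (auxInd A hA f₀)) ∧
      (∀ (A : Set α) (hA : MeasurableSet A), A ⊆ Pᶜ → ψ (auxInd A hA f₀) ≤ 0) := by
  let ν : SignedMeasure α :=
    { measureOf' := fun A => if hA : MeasurableSet A then ψ (auxInd A hA f₀) else 0
      empty' := by
        rw [dif_pos MeasurableSet.empty]
        have : auxInd ∅ MeasurableSet.empty f₀ = 0 := by
          ext1
          filter_upwards [auxInd_coe ∅ MeasurableSet.empty f₀, Lp.coeFn_zero ℝ p μ] with x h1 h2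
          rw [h1, h2]; simp
        rw [this, map_zero]
      not_measurable' := fun A hA => dif_neg hA
      m_iUnion' := fun A hA hd => by
        rw [dif_pos (MeasurableSet.iUnion hA)]
        simp only [hA, dif_pos]
        have hs : HasSum (fun i => auxInd (A i) (hA i) f₀)
            (auxInd (⋃ i, A i) (MeasurableSet.iUnion hA) f₀) := by
          have hco : ∀ s : Finset ℕ, ∀ᵐ x ∂μ, (∑ i ∈ s, auxInd (A i) (hA i) f₀ : Lp ℝ p μ) x
              = (⋃ i ∈ s, A i).indicator f₀ x := by
            intro s
            have h1 := ae_all_iff.2 fun i => auxInd_coe (A i) (hA i) f₀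
            filter_upwards [h1, Lp.coeFn_finsetSum s (fun i => auxInd (A i) (hA i) f₀)]
              with x h1 h2
            rw [h2, Finset.sum_apply, Finset.indicator_biUnion_apply]
            · exact Finset.sum_congr rfl fun i _ => h1 i
            · exact fun i _ j _ hij => hd hij
          refine aux_dct hp _ _ |f₀| ?_ ?_ ?_
          · intro s
            filter_upwards [hco s, Lp.coeFn_abs f₀] with x h1 h2
            rw [h1, h2]
            exact norm_indicator_le_norm_self (f := (f₀ : α → ℝ)) x
          · filter_upwards [auxInd_coe _ (MeasurableSet.iUnion hA) f₀, Lp.coeFn_abs f₀] with x h1 h2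
            rw [h1, h2]
            exact norm_indicator_le_norm_self (f := (f₀ : α → ℝ)) x
          · filter_upwards [ae_all_iff.2 hco, auxInd_coe _ (MeasurableSet.iUnion hA) f₀] with x h1 h2
            simp only [h1, h2]
            exact (tendsto_indicator_biUnion_finset A f₀ x).mono_right (pure_le_nhds _)
        exact hs.mapL ψ }
  have hν : ∀ A (hA : MeasurableSet A), ν A = ψ (auxInd A hA f₀) := fun A hA => dif_pos hA
  obtain ⟨P, hP, h1, h2⟩ := SignedMeasure.exists_compl_positive_negative ν
  refine ⟨P, hP, fun A hA h => ?_, fun A hA h => ?_⟩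
  · rw [← hν]
    simpa using VectorMeasure.subset_le_of_restrict_le_restrict _ _ hP h1 h
  · rw [← hν]
    simpa using VectorMeasure.subset_le_of_restrict_le_restrict _ _ hP.compl h2 h

end helpers

/-- **Theorem 2.2 ii).** Let `U` be a strictly positive bounded linear operator on
`X = L^p(E, μ)` with spectral radius `r(U) > 0` (Gelfand formula), and suppose there exist
`f₀ ∈ X₊ \ {0}` and `φ₀ ∈ X'₊ \ {0}` with `U f₀ = r(U) f₀` and `U* φ₀ = r(U) φ₀`.
Then `N(U - r(U)) = span f₀` and `N(U* - r(U)) = span φ₀`. -/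
theorem eigenspaces_one_dimensional
    {α : Type*} [MeasurableSpace α] {μ : Measure α} [SigmaFinite μ]
    {p : ℝ≥0∞} [Fact (1 ≤ p)] (hp : p ≠ ∞)
    (U : Lp ℝ p μ →L[ℝ] Lp ℝ p μ)
    (hstrict : ∀ f : Lp ℝ p μ, 0 ≤ f → f ≠ 0 → ∀ᵐ x ∂μ, 0 < (U f) x)
    (r : ℝ) (hr : Tendsto (fun n : ℕ => ‖U ^ n‖ ^ (1 / (n : ℝ))) atTop (nhds r))
    (hr0 : 0 < r)
    (f₀ : Lp ℝ p μ) (hf₀pos : 0 ≤ f₀) (hf₀ne : f₀ ≠ 0) (hf₀ : U f₀ = r • f₀)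
    (φ₀ : Lp ℝ p μ →L[ℝ] ℝ) (hφ₀pos : ∀ f, 0 ≤ f → 0 ≤ φ₀ f) (hφ₀ne : φ₀ ≠ 0)
    (hφ₀ : ∀ f, φ₀ (U f) = r * φ₀ f) :
    (∀ f : Lp ℝ p μ, U f = r • f ↔ ∃ c : ℝ, f = c • f₀) ∧
    (∀ φ : Lp ℝ p μ →L[ℝ] ℝ, (∀ f, φ (U f) = r * φ f) ↔ ∃ c : ℝ, φ = c • φ₀) := by
  have hUpos : ∀ f : Lp ℝ p μ, 0 ≤ f → 0 ≤ U f := by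
    intro f hf
    by_cases h : f = 0
    · simp [h]
    · rw [← Lp.coeFn_nonneg]
      filter_upwards [hstrict f hf h] with x hx using hx.le
  have heig : ∀ f : Lp ℝ p μ, 0 ≤ f → f ≠ 0 → U f = r • f → ∀ᵐ x ∂μ, 0 < f x := by
    intro f hf hne he
    have h := hstrict f hf hne
    rw [he] at h
    filter_upwards [h, Lp.coeFn_smul r f] with x h1 h2
    rw [h2, Pi.smul_apply, smul_eq_mul] at h1
    exact pos_of_mul_pos_right h1 hr0.le
  have hf₀' := heig f₀ hf₀pos hf₀ne hf₀
  have hst : ∀ f : Lp ℝ p μ, 0 ≤ f → φ₀ f = 0 → f = 0 := by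
    intro f hf h0
    by_contra hne
    exact hφ₀ne (aux_zero hp φ₀ hφ₀pos (U f) (hstrict f hf hne) (by rw [hφ₀, h0, mul_zero]))
  have hc0 : φ₀ f₀ ≠ 0 := fun h => hf₀ne (hst f₀ hf₀pos h)
  refine ⟨fun f => ⟨fun hf => ?_, ?_⟩, fun φ => ⟨fun hφ => ?_, ?_⟩⟩
  · refine ⟨φ₀ f / φ₀ f₀, ?_⟩
    rw [← sub_eq_zero]
    set g := f - (φ₀ f / φ₀ f₀) • f₀ with hg
    have hgU : U g = r • g := by
      rw [hg, map_sub, map_smul, hf, hf₀, smul_sub, smul_comm]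
    have hg0 : φ₀ g = 0 := by
      rw [hg, map_sub, map_smul, smul_eq_mul, div_mul_cancel₀ _ hc0, sub_self]
    have h1 : r • g ≤ U |g| := by
      rw [← hgU, ← sub_nonneg, ← map_sub]
      exact hUpos _ (sub_nonneg.2 (le_abs_self g))
    have h2 : -(r • g) ≤ U |g| := by
      rw [← hgU, ← map_neg, ← sub_nonneg, ← map_sub]
      exact hUpos _ (sub_nonneg.2 (neg_le_abs g))
    have h3 : r • |g| ≤ U |g| := by
      rw [← Lp.coeFn_le] at h1 h2 ⊢
      filter_upwards [h1, h2, Lp.coeFn_smul r g, Lp.coeFn_smul r |g|, Lp.coeFn_abs g,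
        Lp.coeFn_neg (r • g)] with x h1 h2 h3 h4 h5 h6
      rw [h6, Pi.neg_apply] at h2
      rw [h3, Pi.smul_apply, smul_eq_mul] at h1 h2
      rw [h4, Pi.smul_apply, h5, smul_eq_mul, ← abs_of_pos hr0, ← abs_mul]
      exact abs_le'.2 ⟨h1, h2⟩
    have h4 : U |g| = r • |g| := by
      rw [← sub_eq_zero]
      refine hst _ (sub_nonneg.2 h3) ?_
      rw [map_sub, map_smul, hφ₀, smul_eq_mul, sub_self]
    have hu0 : 0 ≤ |g| + g := by
      rw [← neg_le_iff_add_nonneg]; exact neg_le_abs g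
    have hv0 : 0 ≤ |g| - g := sub_nonneg.2 (le_abs_self g)
    have fin : φ₀ |g| = 0 → g = 0 := by
      intro h
      have hz : |g| = 0 := hst _ (abs_nonneg g) h
      rw [← norm_eq_zero, ← norm_abs_eq_norm, hz, norm_zero]
    by_cases hu : |g| + g = 0
    · apply fin
      have := congrArg φ₀ hu
      rwa [map_add, hg0, add_zero, map_zero] at this
    by_cases hv : |g| - g = 0
    · apply fin
      have := congrArg φ₀ hv
      rwa [map_sub, hg0, sub_zero, map_zero] at this
    exfalso
    apply hf₀ne
    have p1 := heig _ hu0 hu (by rw [map_add, h4, hgU, smul_add])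
    have p2 := heig _ hv0 hv (by rw [map_sub, h4, hgU, ← smul_sub])
    ext1
    filter_upwards [p1, p2, Lp.coeFn_add |g| g, Lp.coeFn_sub |g| g, Lp.coeFn_abs g]
      with x p1 p2 h1 h2 h3
    exfalso
    rw [h1, Pi.add_apply, h3] at p1
    rw [h2, Pi.sub_apply, h3] at p2
    rcases abs_cases (g x) with h | h <;> linarith
  · rintro ⟨c, rfl⟩
    rw [map_smul, hf₀, smul_comm]
  · refine ⟨φ f₀ / φ₀ f₀, ?_⟩
    rw [← sub_eq_zero]
    set ψ := φ - (φ f₀ / φ₀ f₀) • φ₀ with hψ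
    have hψ0 : ψ f₀ = 0 := by
      simp [hψ, div_mul_cancel₀ _ hc0]
    have hψU : ∀ f, ψ (U f) = r * ψ f := by
      intro f
      simp only [hψ, ContinuousLinearMap.sub_apply, ContinuousLinearMap.smul_apply, hφ, hφ₀,
        smul_eq_mul]
      ring
    clear_value ψ
    obtain ⟨P, hP, hp1, hp2⟩ := aux_hahn hp ψ f₀
    have hII : ∀ (A B : Set α) (hA : MeasurableSet A) (hB : MeasurableSet B) (f : Lp ℝ p μ),
        auxInd A hA (auxInd B hB f) = auxInd (A ∩ B) (hA.inter hB) f := by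
      intro A B hA hB f
      ext1
      filter_upwards [auxInd_coe A hA (auxInd B hB f), auxInd_coe B hB f,
        auxInd_coe (A ∩ B) (hA.inter hB) f] with x h1 h2 h3
      rw [h1, h3]
      by_cases ha : x ∈ A <;> by_cases hb : x ∈ B <;> simp [ha, hb, h2]
    have hempty : ∀ (A : Set α) (hA : MeasurableSet A) (f : Lp ℝ p μ), A = ∅ →
        auxInd A hA f = 0 := by
      intro A hA f h
      ext1
      filter_upwards [auxInd_coe A hA f, Lp.coeFn_zero ℝ p μ] with x h1 h2
      rw [h1, h2, h]; simp
    have hsum : ∀ f : Lp ℝ p μ, auxInd P hP f + auxInd Pᶜ hP.compl f = f := by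
      intro f
      ext1
      filter_upwards [auxInd_coe P hP f, auxInd_coe Pᶜ hP.compl f,
        Lp.coeFn_add (auxInd P hP f) (auxInd Pᶜ hP.compl f)] with x h1 h2 h3
      rw [h3, Pi.add_apply, h1, h2]
      by_cases ha : x ∈ P <;> simp [ha]
    set ψ₁ : Lp ℝ p μ →L[ℝ] ℝ := ψ.comp (auxInd P hP) with hψ₁
    set ψ₂ : Lp ℝ p μ →L[ℝ] ℝ := -(ψ.comp (auxInd Pᶜ hP.compl)) with hψ₂
    have hdec : ∀ f, ψ f = ψ₁ f - ψ₂ f := by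
      intro f
      conv_lhs => rw [← hsum f, map_add]
      simp [hψ₁, hψ₂]
    have pos1 : ∀ f, 0 ≤ f → 0 ≤ ψ₁ f := by
      refine aux_pos hp ψ₁ f₀ hf₀' fun A hA => ?_
      rw [hψ₁, ContinuousLinearMap.comp_apply, hII]
      exact hp1 _ _ Set.inter_subset_left
    have pos2 : ∀ f, 0 ≤ f → 0 ≤ ψ₂ f := by
      refine aux_pos hp ψ₂ f₀ hf₀' fun A hA => ?_
      rw [hψ₂, ContinuousLinearMap.neg_apply, ContinuousLinearMap.comp_apply, hII]
      exact neg_nonneg.2 (hp2 _ _ Set.inter_subset_left)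
    set a := auxInd P hP f₀ with ha
    set b := auxInd Pᶜ hP.compl f₀ with hb
    have hind0 : ∀ (A : Set α) (hA : MeasurableSet A), 0 ≤ auxInd A hA f₀ := by
      intro A hA
      rw [← Lp.coeFn_nonneg]
      filter_upwards [auxInd_coe A hA f₀, hf₀'] with x h1 h2
      rw [h1]
      by_cases hx : x ∈ A <;> simp [hx, h2.le]
    have ha0 : 0 ≤ a := hind0 _ _
    have hb0 : 0 ≤ b := hind0 _ _
    have hab : a + b = f₀ := hsum f₀
    have hs : ψ₁ f₀ = ψ₂ f₀ := by have := hdec f₀; linarith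
    have e1 : ψ₂ a = 0 := by
      rw [hψ₂, ContinuousLinearMap.neg_apply, ContinuousLinearMap.comp_apply, ha, hII,
        hempty _ _ _ (by simp), map_zero, neg_zero]
    have e2 : ψ₁ b = 0 := by
      rw [hψ₁, ContinuousLinearMap.comp_apply, hb, hII, hempty _ _ _ (by simp), map_zero]
    have e3 : ψ₁ a = ψ₁ f₀ := by rw [← hab, map_add, e2, add_zero]
    have e4 : ψ₁ (U a) + ψ₁ (U b) = r * ψ₁ f₀ := by
      rw [← map_add, ← map_add, hab, hf₀, map_smul, smul_eq_mul]
    have e5 : ψ₁ (U a) - ψ₂ (U a) = r * ψ₁ f₀ := by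
      rw [← hdec, hψU, hdec, e1, e3, sub_zero]
    have e6 : ψ₂ (U a) = 0 := by
      have := pos1 _ (hUpos b hb0)
      have := pos2 _ (hUpos a ha0)
      linarith
    have hs0 : ψ₁ f₀ = 0 := by
      by_cases hane : a = 0
      · rw [← e3, hane, map_zero]
      · have h2 := aux_zero hp ψ₂ pos2 (U a) (hstrict a ha0 hane) e6
        rw [hs, h2]; rfl
    have z1 := aux_zero hp ψ₁ pos1 f₀ hf₀' hs0
    have z2 := aux_zero hp ψ₂ pos2 f₀ hf₀' (hs ▸ hs0)
    ext f
    rw [hdec, z1, z2]; simp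
  · rintro ⟨c, rfl⟩ f
    simp only [ContinuousLinearMap.smul_apply, smul_eq_mul, hφ₀]
    ring
end

section
/- Let U be a positive bounded linear operator on the complex space X_ℂ = L^p(E, μ; ℂ) whose restriction to the real subspace is strictly positive, with spectral radius r(U) > 0, and suppose there exist real a.e.-nonnegative f₀ ≠ 0 and φ₀ ≠ 0 with U f₀ = r(U) f₀ and U* φ₀ = r(U) φ₀. Then the peripheral point spectrum of Ũ := U / r(U), namely the set of eigenvalues of Ũ of modulus 1, is a multiplicative subgroup of the unit circle S¹ = {z ∈ ℂ : |z| = 1}: it contains 1 and is closed under multiplication and inverses. -/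
open MeasureTheory Filter ENNReal

namespace PPS
variable {α : Type*} [MeasurableSpace α] {μ : Measure α} {p : ℝ≥0∞}

/-- a.e. nonnegative -/
def NN (f : Lp ℂ p μ) : Prop := ∀ᵐ x ∂μ, (f x).im = 0 ∧ 0 ≤ (f x).re

lemma exists_re (f : Lp ℂ p μ) : ∃ g : Lp ℂ p μ, ∀ᵐ x ∂μ, g x = ((f x).re : ℂ) :=
  ⟨_, (Lp.memLp f).re.ofReal.coeFn_toLp⟩

lemma exists_im (f : Lp ℂ p μ) : ∃ g : Lp ℂ p μ, ∀ᵐ x ∂μ, g x = ((f x).im : ℂ) :=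
  ⟨_, (Lp.memLp f).im.ofReal.coeFn_toLp⟩

lemma exists_norm (f : Lp ℂ p μ) : ∃ g : Lp ℂ p μ, ∀ᵐ x ∂μ, g x = ((‖f x‖ : ℝ) : ℂ) :=
  ⟨_, (Lp.memLp f).norm.ofReal.coeFn_toLp⟩

lemma exists_ind (f : Lp ℂ p μ) {A : Set α} (hA : MeasurableSet A) :
    ∃ g : Lp ℂ p μ, ∀ᵐ x ∂μ, g x = A.indicator f x :=
  ⟨_, ((Lp.memLp f).indicator hA).coeFn_toLp⟩

lemma decomp (f : Lp ℂ p μ) : ∃ a b : Lp ℂ p μ, (∀ᵐ x ∂μ, a x = ((f x).re : ℂ)) ∧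
    (∀ᵐ x ∂μ, b x = ((f x).im : ℂ)) ∧ f = a + Complex.I • b := by
  obtain ⟨a, ha⟩ := exists_re f
  obtain ⟨b, hb⟩ := exists_im f
  refine ⟨a, b, ha, hb, ?_⟩
  apply Lp.ext
  filter_upwards [ha, hb, Lp.coeFn_add a (Complex.I • b), Lp.coeFn_smul Complex.I b] with x h1 h2 h3 h4
  rw [h3, Pi.add_apply, h4, Pi.smul_apply, h1, h2, smul_eq_mul, mul_comm, Complex.re_add_im]

variable [Fact (1 ≤ p)]

lemma re_le (U : Lp ℂ p μ →L[ℂ] Lp ℂ p μ)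
    (hreal : ∀ f : Lp ℂ p μ, (∀ᵐ x ∂μ, (f x).im = 0) → (∀ᵐ x ∂μ, ((U f) x).im = 0))
    (hpos : ∀ f : Lp ℂ p μ, NN f → NN (U f))
    (f h : Lp ℂ p μ) (hfh : ∀ᵐ x ∂μ, (h x).im = 0 ∧ (f x).re ≤ (h x).re) :
    ∀ᵐ x ∂μ, (U f x).re ≤ (U h x).re := by
  obtain ⟨a, b, ha, hb, hab⟩ := decomp f
  have h1 : NN (h - a) := by
    filter_upwards [ha, hfh, Lp.coeFn_sub h a] with x h1 h2 h3
    rw [h3, Pi.sub_apply, h1]; simp [h2]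
  have e1 : U f = U a + Complex.I • U b := by rw [← map_smul, ← map_add, ← hab]
  have e2 := hpos _ h1
  rw [map_sub] at e2
  have e3 := hreal b (by filter_upwards [hb] with x hx; simp [hx])
  rw [e1]
  filter_upwards [e2, e3, Lp.coeFn_sub (U h) (U a), Lp.coeFn_add (U a) (Complex.I • U b),
    Lp.coeFn_smul Complex.I (U b)] with x h1 h2 h3 h4 h5
  rw [h4, Pi.add_apply, h5, Pi.smul_apply]
  rw [h3, Pi.sub_apply] at h1
  have := h1.2
  simp [h2] at this ⊢
  linarith

lemma dom (U : Lp ℂ p μ →L[ℂ] Lp ℂ p μ)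
    (hreal : ∀ f : Lp ℂ p μ, (∀ᵐ x ∂μ, (f x).im = 0) → (∀ᵐ x ∂μ, ((U f) x).im = 0))
    (hpos : ∀ f : Lp ℂ p μ, NN f → NN (U f))
    (f h : Lp ℂ p μ) (hfh : ∀ᵐ x ∂μ, (h x).im = 0 ∧ ‖f x‖ ≤ (h x).re) :
    ∀ᵐ x ∂μ, ‖U f x‖ ≤ (U h x).re := by
  have hnn : NN h := by
    filter_upwards [hfh] with x hx using ⟨hx.1, (norm_nonneg _).trans hx.2⟩
  have key : ∀ c : ℂ, ∀ᵐ x ∂μ, (c * U f x).re ≤ ‖c‖ * (U h x).re := by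
    intro c
    have := re_le U hreal hpos (c • f) ((‖c‖ : ℂ) • h) (by
      filter_upwards [hfh, Lp.coeFn_smul c f, Lp.coeFn_smul (‖c‖ : ℂ) h] with x h1 h2 h3
      rw [h2, h3]
      refine ⟨by simp [h1.1], ?_⟩
      have h4 : (c * f x).re ≤ ‖c‖ * ‖f x‖ := by
        rw [← norm_mul]; exact Complex.re_le_norm _
      simp only [Pi.smul_apply, smul_eq_mul, Complex.re_ofReal_mul]
      exact h4.trans (by gcongr; exact h1.2))
    rw [map_smul, map_smul] at this
    filter_upwards [this, Lp.coeFn_smul c (U f), Lp.coeFn_smul (‖c‖ : ℂ) (U h)] with x h1 h2 h3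
    rw [h2, h3] at h1
    simpa only [Pi.smul_apply, smul_eq_mul, Complex.re_ofReal_mul] using h1
  have key2 : ∀ᵐ x ∂μ, ∀ n : ℕ, (TopologicalSpace.denseSeq ℂ n * U f x).re
      ≤ ‖TopologicalSpace.denseSeq ℂ n‖ * (U h x).re := ae_all_iff.2 fun n => key _
  filter_upwards [key2, hpos h hnn] with x hx hx0
  have key3 : ∀ c : ℂ, (c * U f x).re ≤ ‖c‖ * (U h x).re := by
    intro c
    refine (TopologicalSpace.denseRange_denseSeq ℂ).induction_on (p := fun c : ℂ => (c * U f x).re ≤ ‖c‖ * (U h x).re) c ?_ hx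
    exact isClosed_le (by fun_prop) (by fun_prop)
  have h4 := key3 (starRingEnd ℂ (U f x))
  rw [mul_comm, Complex.mul_conj, Complex.ofReal_re, Complex.normSq_eq_norm_sq, RCLike.norm_conj] at h4
  rcases (norm_nonneg (U f x)).eq_or_lt with h5 | h5
  · rw [← h5]; exact hx0.2
  · nlinarith

lemma phi_zero (hp : p ≠ ∞) (φ : Lp ℂ p μ →L[ℂ] ℂ)
    (hφ : ∀ f : Lp ℂ p μ, NN f → (φ f).im = 0 ∧ 0 ≤ (φ f).re)
    (e : Lp ℂ p μ) (he : ∀ᵐ x ∂μ, (e x).im = 0 ∧ 0 < (e x).re) (h0 : φ e = 0) : φ = 0 := by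
  have main : ∀ h : Lp ℂ p μ, NN h → φ h = 0 := by
    intro h hh
    let A : ℕ → Set α := fun n => {x | (h x).re ≤ n * (e x).re}
    have mh := (Lp.stronglyMeasurable h).measurable
    have me := (Lp.stronglyMeasurable e).measurable
    have hA : ∀ n, MeasurableSet (A n) := fun n =>
      measurableSet_le (Complex.measurable_re.comp mh)
        ((Complex.measurable_re.comp me).const_mul _)
    choose k hk using fun n => exists_ind h (hA n)
    have hk0 : ∀ n, φ (k n) = 0 := by
      intro n
      have h1 := hφ (k n) (by
        filter_upwards [hk n, hh] with x h1 h2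
        rw [h1]; by_cases hx : x ∈ A n <;> simp [hx, h2])
      have h2 := hφ ((n : ℂ) • e - k n) (by
        filter_upwards [hk n, hh, he, Lp.coeFn_sub ((n : ℂ) • e) (k n),
          Lp.coeFn_smul (n : ℂ) e] with x h1 h2 h3 h4 h5
        rw [h4, Pi.sub_apply, h5, Pi.smul_apply, h1]
        by_cases hx : x ∈ A n
        · have : (h x).re ≤ n * (e x).re := hx
          simp [hx, h2, h3, this]
        · simp only [hx, not_false_eq_true, Set.indicator_of_notMem]
          simp [h3])
      rw [map_sub, map_smul, h0, smul_zero, zero_sub] at h2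
      apply Complex.ext
      · have := h2.2
        simp at this ⊢
        linarith [h1.2]
      · simpa using h1.1
    have hlim : Tendsto k atTop (nhds h) := by
      rw [Lp.tendsto_Lp_iff_tendsto_eLpNorm']
      have hp0 : p ≠ 0 := (lt_of_lt_of_le one_pos (Fact.out : 1 ≤ p)).ne'
      have hpr : 0 < p.toReal := ENNReal.toReal_pos hp0 hp
      simp_rw [eLpNorm_eq_lintegral_rpow_enorm_toReal hp0 hp]
      have := tendsto_lintegral_of_dominated_convergence' (μ := μ)
        (F := fun n x => ‖(k n - h : α → ℂ) x‖ₑ ^ p.toReal) (f := fun _ => 0)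
        (fun x => ‖h x‖ₑ ^ p.toReal) (fun n => by
          have := (Lp.stronglyMeasurable (k n)).measurable
          fun_prop) (fun n => by
          filter_upwards [hk n] with x hx
          rw [Pi.sub_apply, hx]
          gcongr
          by_cases hx : x ∈ A n <;> simp [hx]) (by
          have := (Lp.memLp h).2
          exact (lintegral_rpow_enorm_lt_top_of_eLpNorm_lt_top hp0 hp this).ne) (by
          filter_upwards [he, ae_all_iff.2 hk] with x hx hkx
          obtain ⟨N, hN⟩ := exists_nat_ge ((h x).re / (e x).re)
          apply tendsto_const_nhds.congr'
          filter_upwards [eventually_ge_atTop N] with n hn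
          have : x ∈ A n := by
            change (h x).re ≤ n * (e x).re
            rw [div_le_iff₀ hx.2] at hN
            refine hN.trans ?_
            have := hx.2.le
            gcongr
          rw [Pi.sub_apply, hkx n]
          simp [this, hpr])
      have h2 := this.ennrpow_const (1 / p.toReal)
      simpa [hpr] using h2
    have := (φ.continuous.tendsto h).comp hlim
    refine tendsto_nhds_unique this ?_
    simp [Function.comp_def, hk0]
  have main2 : ∀ f : Lp ℂ p μ, (∀ᵐ x ∂μ, (f x).im = 0) → φ f = 0 := by
    intro f hf
    obtain ⟨g, hg⟩ := exists_norm f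
    have h1 := main g (by filter_upwards [hg] with x hx; simp [hx])
    have h2 := main (g - f) (by
      filter_upwards [hg, hf, Lp.coeFn_sub g f] with x h1 h2 h3
      rw [h3, Pi.sub_apply, h1]
      simp [h2, Complex.re_le_norm])
    rw [map_sub, h1] at h2
    simpa using h2
  ext f
  obtain ⟨a, b, ha, hb, hab⟩ := decomp f
  rw [hab, map_add, map_smul, main2 a, main2 b]
  · simp
  · filter_upwards [hb] with x hx; simp [hx]
  · filter_upwards [ha] with x hx; simp [hx]

lemma alg {a b f z : ℂ} {s t r : ℝ} (hz : ‖z‖ = 1) (hf : 0 < ‖f‖)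
    (ha : ‖a‖ ≤ s) (hb : ‖b‖ ≤ t) (h1 : a + b = r * z * f) (h2 : s + t = r * ‖f‖) :
    a = z * (f / ‖f‖) * s := by
  set w := z * (f / ‖f‖) with hw
  have hwn : ‖w‖ = 1 := by simp [hw, hz, hf.ne']
  have hwc : starRingEnd ℂ w * w = 1 := by
    rw [mul_comm, Complex.mul_conj, Complex.normSq_eq_norm_sq, hwn]; simp
  have hab : a + b = w * (s + t) := by
    rw [h1, ← Complex.ofReal_add, h2, hw]
    have : (‖f‖ : ℂ) ≠ 0 := by exact_mod_cast hf.ne'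
    push_cast
    field_simp
  have e1 : (starRingEnd ℂ w * a) + starRingEnd ℂ w * b = ((s + t : ℝ) : ℂ) := by
    rw [← mul_add, hab, ← mul_assoc, hwc]; simp
  have n1 : ‖starRingEnd ℂ w * a‖ ≤ s := by rw [norm_mul, RCLike.norm_conj, hwn, one_mul]; exact ha
  have n2 : ‖starRingEnd ℂ w * b‖ ≤ t := by rw [norm_mul, RCLike.norm_conj, hwn, one_mul]; exact hb
  have e2 := congrArg Complex.re e1
  simp only [Complex.add_re, Complex.ofReal_re] at e2
  have q1 := Complex.re_le_norm (starRingEnd ℂ w * a)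
  have q2 := Complex.re_le_norm (starRingEnd ℂ w * b)
  have q3 : (starRingEnd ℂ w * a).re = s := by linarith
  have q4 : starRingEnd ℂ w * a = s := by
    have h5 : (starRingEnd ℂ w * a).re = ‖starRingEnd ℂ w * a‖ := by linarith
    have := Complex.re_eq_norm.1 h5
    rw [Complex.eq_coe_norm_of_nonneg this, ← h5, q3]
  rw [← q4, ← mul_assoc, mul_comm w, hwc, one_mul]

lemma z_eq_one (hp : p ≠ ∞) (U : Lp ℂ p μ →L[ℂ] Lp ℂ p μ)
    (hreal : ∀ f : Lp ℂ p μ, (∀ᵐ x ∂μ, (f x).im = 0) → (∀ᵐ x ∂μ, ((U f) x).im = 0))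
    (hpos : ∀ f : Lp ℂ p μ, NN f → NN (U f))
    (hstrict : ∀ f : Lp ℂ p μ, NN f → f ≠ 0 →
      (∀ᵐ x ∂μ, ((U f) x).im = 0 ∧ 0 < ((U f) x).re))
    (r : ℝ) (hr0 : 0 < r) (φ : Lp ℂ p μ →L[ℂ] ℂ)
    (hφpos : ∀ f : Lp ℂ p μ, NN f → (φ f).im = 0 ∧ 0 ≤ (φ f).re)
    (hφne : φ ≠ 0) (hφ : ∀ f, φ (U f) = (r : ℂ) * φ f)
    (z : ℂ) (hz : ‖z‖ = 1) (f : Lp ℂ p μ) (hf0 : f ≠ 0) (hf : U f = ((r : ℂ) * z) • f) :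
    z = 1 := by
  obtain ⟨g, hg⟩ := exists_norm f
  have hgnn : NN g := by filter_upwards [hg] with x hx; simp [hx]
  have hfx : ∀ᵐ x ∂μ, U f x = r * z * f x := by
    rw [hf]
    filter_upwards [Lp.coeFn_smul ((r : ℂ) * z) f] with x hx
    rw [hx, Pi.smul_apply, smul_eq_mul]
  have hUg : U g = (r : ℂ) • g := by
    by_contra hne
    have hk : NN (U g - (r : ℂ) • g) := by
      filter_upwards [dom U hreal hpos f g (by filter_upwards [hg] with x hx; simp [hx]),
        hg, hpos g hgnn, hfx, Lp.coeFn_sub (U g) ((r : ℂ) • g), Lp.coeFn_smul (r : ℂ) g]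
        with x h1 h2 h3 h4 h5 h6
      rw [h5, Pi.sub_apply, h6, Pi.smul_apply, h2]
      rw [h4, norm_mul, norm_mul, hz, Complex.norm_real, Real.norm_of_nonneg hr0.le, mul_one] at h1
      simp [h3, h1]
    have h1 := hstrict _ hk (sub_ne_zero.2 hne)
    refine hφne (phi_zero hp φ hφpos _ h1 ?_)
    rw [hφ, map_sub, hφ, map_smul, smul_eq_mul, sub_self, mul_zero]
  have hg0 : g ≠ 0 := by
    intro h0
    apply hf0
    apply Lp.ext
    have h1 := Lp.coeFn_zero ℂ p μ
    rw [h0] at hg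
    filter_upwards [hg, h1] with x h2 h3
    rw [h3] at h2 ⊢
    simpa using h2.symm
  have hUgx : ∀ᵐ x ∂μ, U g x = ((r * ‖f x‖ : ℝ) : ℂ) := by
    rw [hUg]
    filter_upwards [Lp.coeFn_smul (r : ℂ) g, hg] with x hx h2
    rw [hx, Pi.smul_apply, smul_eq_mul, h2]; push_cast; rfl
  have hfpos : ∀ᵐ x ∂μ, 0 < ‖f x‖ := by
    filter_upwards [hUgx, hstrict g hgnn hg0] with x h1 h2
    rw [h1, Complex.ofReal_re] at h2
    exact pos_of_mul_pos_right h2.2 hr0.le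
  have mf := (Lp.stronglyMeasurable f).measurable
  have mu : Measurable (fun x => f x / (‖f x‖ : ℂ)) := by fun_prop
  have hμ : μ ≠ 0 := by
    rintro rfl
    exact hf0 (Lp.ext (by simp [Filter.EventuallyEq]))
  have hν : μ.map (fun x => f x / (‖f x‖ : ℂ)) Set.univ ≠ 0 := by
    rw [Measure.map_apply mu MeasurableSet.univ]
    simpa using hμ
  obtain ⟨c, -, hc⟩ := exists_mem_forall_mem_nhdsWithin_pos_measure hν
  have key : ∀ ε : ℝ, 0 < ε → ∀ᵐ x ∂μ, ‖z * (f x / ‖f x‖) - c‖ ≤ ε := by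
    intro ε hε
    let A : Set α := (fun x => f x / (‖f x‖ : ℂ)) ⁻¹' Metric.ball c ε
    have hA : MeasurableSet A := mu Metric.isOpen_ball.measurableSet
    have hAμ : 0 < μ A := by
      have := hc (Metric.ball c ε) (by simpa using Metric.ball_mem_nhds c hε)
      rwa [Measure.map_apply mu Metric.isOpen_ball.measurableSet] at this
    obtain ⟨f1, hf1⟩ := exists_ind f hA
    obtain ⟨g1, hg1⟩ := exists_ind g hA
    have hg1nn : NN g1 := by
      filter_upwards [hg1, hgnn] with x h1 h2
      rw [h1]; by_cases hx : x ∈ A <;> simp [hx, h2]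
    have hg10 : g1 ≠ 0 := by
      intro h0
      rw [h0] at hg1
      have h1 : ∀ᵐ x ∂μ, x ∉ A := by
        filter_upwards [hg1, Lp.coeFn_zero ℂ p μ, hg, hfpos] with x h1 h2 h3 h4 hx
        rw [h2, Set.indicator_of_mem hx, h3, Pi.zero_apply] at h1
        have : (0 : ℝ) = ‖f x‖ := by exact_mod_cast h1
        linarith
      have h2 : μ A = 0 := by simpa using measure_eq_zero_iff_ae_notMem.2 h1
      exact hAμ.ne' h2
    have d1 := dom U hreal hpos f1 g1 (by
      filter_upwards [hf1, hg1, hg] with x h1 h2 h3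
      rw [h1, h2]; by_cases hx : x ∈ A <;> simp [hx, h3])
    have d2 := dom U hreal hpos (f - f1) (g - g1) (by
      filter_upwards [hf1, hg1, hg, Lp.coeFn_sub f f1, Lp.coeFn_sub g g1] with x h1 h2 h3 h4 h5
      rw [h4, h5, Pi.sub_apply, Pi.sub_apply, h1, h2]
      by_cases hx : x ∈ A <;> simp [hx, h3])
    have d3 := dom U hreal hpos (f1 - c • g1) ((ε : ℂ) • g1) (by
      filter_upwards [hf1, hg1, hg, hfpos, Lp.coeFn_sub f1 (c • g1), Lp.coeFn_smul c g1,
        Lp.coeFn_smul (ε : ℂ) g1] with x h1 h2 h3 h0 h4 h5 h6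
      rw [h4, h6, Pi.sub_apply, Pi.smul_apply, h5, Pi.smul_apply, h1, h2]
      by_cases hx : x ∈ A
      · have h7 : ‖f x / ‖f x‖ - c‖ < ε := by simpa [A, dist_eq_norm] using hx
        have h8 : f x - c * ‖f x‖ = (f x / ‖f x‖ - c) * ‖f x‖ := by
          have : (‖f x‖ : ℂ) ≠ 0 := by exact_mod_cast h0.ne'
          field_simp
        simp only [hx, Set.indicator_of_mem, h3, smul_eq_mul]
        rw [h8, norm_mul, Complex.norm_real, norm_norm]
        refine ⟨by simp, ?_⟩
        rw [Complex.re_ofReal_mul, Complex.ofReal_re]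
        gcongr
      · simp [hx])
    rw [map_sub, map_sub] at d2
    rw [map_sub, map_smul, map_smul] at d3
    filter_upwards [d1, d2, d3, hfx, hUgx, hfpos, hstrict g1 hg1nn hg10,
      Lp.coeFn_sub (U f) (U f1), Lp.coeFn_sub (U g) (U g1), Lp.coeFn_sub (U f1) (c • U g1),
      Lp.coeFn_smul c (U g1), Lp.coeFn_smul (ε : ℂ) (U g1)]
      with x d1 d2 d3 hfx hUgx hfpos hs e1 e2 e3 e4 e5
    rw [e1, e2, Pi.sub_apply, Pi.sub_apply] at d2
    rw [e3, e5, Pi.sub_apply, e4, Pi.smul_apply, Pi.smul_apply, smul_eq_mul, smul_eq_mul,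
      Complex.re_ofReal_mul] at d3
    have ha := alg (r := r) hz hfpos d1 d2 (by rw [← hfx]; ring) (by
      rw [Complex.sub_re, hUgx, Complex.ofReal_re]; ring)
    have hs' : U g1 x = ((U g1 x).re : ℂ) := Complex.ext (by simp) (by simp [hs.1])
    rw [ha, hs', Complex.ofReal_re, ← sub_mul, norm_mul, Complex.norm_real,
      Real.norm_of_nonneg hs.2.le] at d3
    exact le_of_mul_le_mul_right d3 hs.2
  have key2 : ∀ᵐ x ∂μ, ∀ n : ℕ, ‖z * (f x / ‖f x‖) - c‖ ≤ 1 / ((n : ℝ) + 1) :=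
    ae_all_iff.2 fun n => key _ (by positivity)
  have hfin : ∀ᵐ x ∂μ, z * f x = c * g x := by
    filter_upwards [key2, hfpos, hg] with x h1 h2 h3
    have h4 : ‖z * (f x / ‖f x‖) - c‖ ≤ 0 :=
      ge_of_tendsto' tendsto_one_div_add_atTop_nhds_zero_nat h1
    have h5 := sub_eq_zero.1 (norm_le_zero_iff.1 h4)
    rw [h3, ← h5]
    have : (‖f x‖ : ℂ) ≠ 0 := by exact_mod_cast h2.ne'
    field_simp
  have hzf : z • f = c • g := by
    apply Lp.ext
    filter_upwards [hfin, Lp.coeFn_smul z f, Lp.coeFn_smul c g] with x h1 h2 h3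
    rw [h2, h3]; exact h1
  have hz0 : z ≠ 0 := by rintro rfl; simp at hz
  have hr0' : (r : ℂ) ≠ 0 := by exact_mod_cast hr0.ne'
  have h1 : U (z • f) = (r : ℂ) • (z • f) := by
    rw [hzf, map_smul, hUg, smul_comm]
  rw [map_smul, hf, smul_smul, smul_smul] at h1
  have h2 := smul_left_injective ℂ hf0 h1
  have h3 : (r : ℂ) * z * z = r * z * 1 := by rw [mul_one]; exact (mul_comm _ _).trans h2
  exact mul_left_cancel₀ (mul_ne_zero hr0' hz0) h3

end PPS

/-- **Theorem 2.2 iii).** Let `U` be a positive bounded linear operator on the complex space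
`X_ℂ = L^p(E, μ; ℂ)` whose restriction to the real subspace is strictly positive, with
spectral radius `r(U) > 0` (Gelfand formula), and suppose there exist real a.e.-nonnegative
`f₀ ≠ 0` and a nonnegative functional `φ₀ ≠ 0` with `U f₀ = r(U) f₀` and
`U* φ₀ = r(U) φ₀`.  Then the peripheral point spectrum of `Ũ = U / r(U)`, i.e. the set of
eigenvalues of `Ũ` of modulus `1`, is a multiplicative subgroup of the unit circle: it
contains `1` and is closed under multiplication and inverses. -/
theorem peripheral_point_spectrum_subgroup
    {α : Type*} [MeasurableSpace α] {μ : Measure α} [SigmaFinite μ]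
    {p : ℝ≥0∞} [Fact (1 ≤ p)] (hp : p ≠ ∞)
    (U : Lp ℂ p μ →L[ℂ] Lp ℂ p μ)
    (hreal : ∀ f : Lp ℂ p μ, (∀ᵐ x ∂μ, (f x).im = 0) → (∀ᵐ x ∂μ, ((U f) x).im = 0))
    (hpos : ∀ f : Lp ℂ p μ, (∀ᵐ x ∂μ, (f x).im = 0 ∧ 0 ≤ (f x).re) →
      (∀ᵐ x ∂μ, ((U f) x).im = 0 ∧ 0 ≤ ((U f) x).re))
    (hstrict : ∀ f : Lp ℂ p μ, (∀ᵐ x ∂μ, (f x).im = 0 ∧ 0 ≤ (f x).re) → f ≠ 0 →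
      (∀ᵐ x ∂μ, ((U f) x).im = 0 ∧ 0 < ((U f) x).re))
    (r : ℝ) (hr : Tendsto (fun n : ℕ => ‖U ^ n‖ ^ (1 / (n : ℝ))) atTop (nhds r))
    (hr0 : 0 < r)
    (f₀ : Lp ℂ p μ) (hf₀pos : ∀ᵐ x ∂μ, (f₀ x).im = 0 ∧ 0 ≤ (f₀ x).re) (hf₀ne : f₀ ≠ 0)
    (hf₀ : U f₀ = (r : ℂ) • f₀)
    (φ₀ : Lp ℂ p μ →L[ℂ] ℂ)
    (hφ₀pos : ∀ f : Lp ℂ p μ, (∀ᵐ x ∂μ, (f x).im = 0 ∧ 0 ≤ (f x).re) →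
      (φ₀ f).im = 0 ∧ 0 ≤ (φ₀ f).re)
    (hφ₀ne : φ₀ ≠ 0) (hφ₀ : ∀ f, φ₀ (U f) = (r : ℂ) * φ₀ f) :
    (1 : ℂ) ∈ {z : ℂ | ‖z‖ = 1 ∧ ∃ f : Lp ℂ p μ, f ≠ 0 ∧ U f = ((r : ℂ) * z) • f} ∧
    (∀ z w : ℂ, z ∈ {z : ℂ | ‖z‖ = 1 ∧ ∃ f : Lp ℂ p μ, f ≠ 0 ∧ U f = ((r : ℂ) * z) • f} →
      w ∈ {z : ℂ | ‖z‖ = 1 ∧ ∃ f : Lp ℂ p μ, f ≠ 0 ∧ U f = ((r : ℂ) * z) • f} →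
      z * w ∈ {z : ℂ | ‖z‖ = 1 ∧ ∃ f : Lp ℂ p μ, f ≠ 0 ∧ U f = ((r : ℂ) * z) • f}) ∧
    (∀ z : ℂ, z ∈ {z : ℂ | ‖z‖ = 1 ∧ ∃ f : Lp ℂ p μ, f ≠ 0 ∧ U f = ((r : ℂ) * z) • f} →
      z⁻¹ ∈ {z : ℂ | ‖z‖ = 1 ∧ ∃ f : Lp ℂ p μ, f ≠ 0 ∧ U f = ((r : ℂ) * z) • f}) := by
  have h1 : ∀ z : ℂ, (‖z‖ = 1 ∧ ∃ f : Lp ℂ p μ, f ≠ 0 ∧ U f = ((r : ℂ) * z) • f) → z = 1 := by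
    rintro z ⟨hz, f, hf0, hf⟩
    exact PPS.z_eq_one hp U hreal hpos hstrict r hr0 φ₀ hφ₀pos hφ₀ne hφ₀ z hz f hf0 hf
  have h2 : ‖(1 : ℂ)‖ = 1 ∧ ∃ f : Lp ℂ p μ, f ≠ 0 ∧ U f = ((r : ℂ) * 1) • f :=
    ⟨by simp, f₀, hf₀ne, by rw [mul_one, hf₀]⟩
  refine ⟨h2, ?_, ?_⟩
  · intro z w hz hw
    rw [h1 z hz, h1 w hw, mul_one]
    exact h2
  · intro z hz
    rw [h1 z hz, inv_one]
    exact h2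
end

section
/- Let f ∈ X with f > 0 a.e., let X_f = {g ∈ X : ∃ C > 0, |g| ≤ C f a.e.}, and for g ∈ X_f set [g]_f = inf{C > 0 : |g| ≤ C f a.e.}. If Q : X_f → X_f is a linear operator such that Q f = f and [Q g]_f ≤ [g]_f for every g ∈ X_f, then Q is positive: for every g ∈ X_f with g ≥ 0 a.e., one has Q g ≥ 0 a.e. -/
open MeasureTheory Filter ENNReal

/-- **Lemma 2.3 (from [FGM, Lemma 5.3]).** Let `f ∈ X = L^p(E, μ)` with `f > 0` a.e.,
let `X_f = {g : ∃ C > 0, |g| ≤ C f}` and, for `g ∈ X_f`,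
`[g]_f = inf {C > 0 : |g| ≤ C f}`.  If `Q` maps `X_f` into `X_f`, is linear on `X_f`,
satisfies `Q f = f` and `[Q g]_f ≤ [g]_f` for every `g ∈ X_f`, then `Q` is positive on
`X_f`: `g ∈ X_f` and `g ≥ 0` imply `Q g ≥ 0`. -/
theorem contraction_fixing_positive_function_is_positive
    {α : Type*} [MeasurableSpace α] {μ : Measure α} [SigmaFinite μ]
    {p : ℝ≥0∞} [Fact (1 ≤ p)] (hp : p ≠ ∞)
    (f : Lp ℝ p μ) (hf : ∀ᵐ x ∂μ, 0 < f x)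
    (Q : Lp ℝ p μ → Lp ℝ p μ)
    (hQmap : ∀ g : Lp ℝ p μ, (∃ C > (0:ℝ), |g| ≤ C • f) → ∃ C > (0:ℝ), |Q g| ≤ C • f)
    (hQadd : ∀ g h : Lp ℝ p μ, (∃ C > (0:ℝ), |g| ≤ C • f) → (∃ C > (0:ℝ), |h| ≤ C • f) →
      Q (g + h) = Q g + Q h)
    (hQsmul : ∀ (c : ℝ) (g : Lp ℝ p μ), (∃ C > (0:ℝ), |g| ≤ C • f) → Q (c • g) = c • Q g)
    (hQf : Q f = f)
    (hQcontr : ∀ g : Lp ℝ p μ, (∃ C > (0:ℝ), |g| ≤ C • f) →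
      sInf {C : ℝ | 0 < C ∧ |Q g| ≤ C • f} ≤ sInf {C : ℝ | 0 < C ∧ |g| ≤ C • f}) :
    ∀ g : Lp ℝ p μ, (∃ C > (0:ℝ), |g| ≤ C • f) → 0 ≤ g → 0 ≤ Q g := by
  intro g hg hg0
  obtain ⟨C, hC, hgC⟩ := hg
  have hf0 : 0 ≤ f := by
    rw [← Lp.coeFn_nonneg]
    filter_upwards [hf] with x hx using hx.le
  have hsm : ∀ c : ℝ, 0 ≤ c → 0 ≤ c • f := by
    intro c hc
    rw [← Lp.coeFn_nonneg]
    filter_upwards [hf, Lp.coeFn_smul c f] with x hx h2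
    rw [h2]
    exact mul_nonneg hc hx.le
  have hmono : ∀ a b : ℝ, a ≤ b → a • f ≤ b • f := by
    intro a b hab
    have := hsm (b - a) (sub_nonneg.2 hab)
    rw [sub_smul] at this
    exact sub_nonneg.1 this
  have hfX : ∃ C > (0:ℝ), |f| ≤ C • f := ⟨1, one_pos, by rw [abs_of_nonneg hf0, one_smul]⟩
  have hgX : ∃ C > (0:ℝ), |g| ≤ C • f := ⟨C, hC, hgC⟩
  have hCfX : ∃ D > (0:ℝ), |C • f| ≤ D • f := ⟨C, hC, by rw [abs_of_nonneg (hsm C hC.le)]⟩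
  have hngX : ∃ D > (0:ℝ), |(-1 : ℝ) • g| ≤ D • f := ⟨C, hC, by rwa [neg_one_smul, abs_neg]⟩
  have hgle : g ≤ C • f := (le_abs_self g).trans hgC
  have hk : |C • f + (-1 : ℝ) • g| ≤ C • f := by
    rw [neg_one_smul, ← sub_eq_add_neg, abs_of_nonneg (sub_nonneg.2 hgle)]
    exact sub_le_self _ hg0
  have hQk : Q (C • f + (-1 : ℝ) • g) = C • f - Q g := by
    rw [hQadd _ _ hCfX hngX, hQsmul _ _ hfX, hQsmul _ _ hgX, hQf, neg_one_smul, sub_eq_add_neg]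
  have hcon := hQcontr _ ⟨C, hC, hk⟩
  have hle : sInf {D : ℝ | 0 < D ∧ |C • f + (-1 : ℝ) • g| ≤ D • f} ≤ C :=
    csInf_le ⟨0, fun _ h => h.1.le⟩ ⟨hC, hk⟩
  have hne : {D : ℝ | 0 < D ∧ |Q (C • f + (-1 : ℝ) • g)| ≤ D • f}.Nonempty := by
    obtain ⟨D, h1, h2⟩ := hQmap _ ⟨C, hC, hk⟩
    exact ⟨D, h1, h2⟩
  have key : ∀ ε : ℝ, 0 < ε → 0 ≤ Q g + ε • f := by
    intro ε hε
    obtain ⟨D, ⟨_, hD⟩, hlt⟩ := exists_lt_of_csInf_lt hne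
      (lt_of_le_of_lt (hcon.trans hle) (lt_add_of_pos_right C hε))
    rw [hQk] at hD
    have h1 : C • f - Q g ≤ C • f + ε • f := by
      rw [← add_smul]
      exact (le_abs_self _).trans (hD.trans (hmono _ _ hlt.le))
    have h2 := sub_nonneg.2 h1
    have h3 : C • f + ε • f - (C • f - Q g) = Q g + ε • f := by abel
    rwa [h3] at h2
  have hlim : Tendsto (fun ε : ℝ => Q g + ε • f) (nhdsWithin 0 (Set.Ioi 0)) (nhds (Q g)) := by
    have hc : Continuous (fun ε : ℝ => Q g + ε • f) := by fun_prop
    have := hc.tendsto 0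
    rw [zero_smul, add_zero] at this
    exact this.mono_left nhdsWithin_le_nhds
  exact ge_of_tendsto hlim (by filter_upwards [self_mem_nhdsWithin] with ε hε using key ε hε)
end

section
/- Let U be a positive bounded linear operator on the complex space X_ℂ = L^p(E, μ; ℂ) whose restriction to the real subspace is strictly positive, with spectral radius r(U) > 0, and assume U admits a splitting U = W + K with bounded linear operators W and K such that ‖W‖ < r(U) and K(λ − W)⁻¹ is power compact for every λ ∈ ℂ with |λ| > ‖W‖. Then every eigenvalue of U of modulus r(U) is equal to r(U); equivalently, the peripheral point spectrum of Ũ := U / r(U) is reduced to {1}. -/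
open MeasureTheory Filter ENNReal

lemma aux_limit {E : Type*} [NormedAddCommGroup E] [NormedSpace ℂ E]
    (V A R : E →L[ℂ] E) (hVR : V * R = 1 - A) (m : ℕ) (hA : IsCompactOperator ⇑(A ^ m))
    (φ : ℕ → E →L[ℂ] ℂ) (hφ : ∀ n, ‖φ n‖ = 1)
    (hφV : Tendsto (fun n => ‖(φ n).comp V‖) atTop (nhds 0)) :
    ∃ (φ₀ : E →L[ℂ] ℂ) (l : Ultrafilter ℕ), φ₀ ≠ 0 ∧ (l : Filter ℕ) ≤ atTop ∧
      ∀ x, Tendsto (fun n => φ n x) l (nhds (φ₀ x)) := by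
  have hc := WeakDual.isCompact_closedBall (𝕜 := ℂ) (E := E) 0 1
  let l : Ultrafilter ℕ := Filter.hyperfilter ℕ
  have hl : (l : Filter ℕ) ≤ atTop := by
    rw [← Nat.cofinite_eq_atTop]; exact Filter.hyperfilter_le_cofinite
  let Φ : ℕ → WeakDual ℂ E := fun n => StrongDual.toWeakDual (φ n)
  obtain ⟨ψ, -, hψ⟩ := hc.ultrafilter_le_nhds (l.map Φ) (by
    simp only [Ultrafilter.coe_map, le_principal_iff]
    refine Filter.mem_map.2 (Filter.univ_mem' fun n => ?_)
    simp only [Set.mem_preimage, Metric.mem_closedBall, dist_zero_right]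
    exact (hφ n).le)
  have hlim : ∀ x, Tendsto (fun n => φ n x) l (nhds (ψ x)) := fun x =>
    ((WeakDual.eval_continuous x).tendsto ψ).comp (hψ : Tendsto Φ l (nhds ψ))
  refine ⟨WeakDual.toStrongDual ψ, l, ?_, hl, hlim⟩
  intro h0
  have h0' : ∀ x, ψ x = 0 := fun x => by
    have := congrArg (fun g : E →L[ℂ] ℂ => g x) h0
    simpa using this
  -- norms
  set S := ∑ i ∈ Finset.range m, A ^ i with hS
  have hfac : V * (R * S) = 1 - A ^ m := by
    rw [← mul_assoc, hVR, hS, mul_neg_geom_sum]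
  have hev1 : ∀ᶠ n in (l : Filter ℕ), ‖(φ n).comp (V * (R * S))‖ ≤ 1/4 := by
    have h1 : Tendsto (fun n => ‖(φ n).comp V‖ * ‖R * S‖) l (nhds 0) := by
      simpa using (hφV.mono_left hl).mul_const ‖R * S‖
    filter_upwards [h1.eventually (gt_mem_nhds (show (0:ℝ) < 1/4 by norm_num))] with n hn
    refine le_trans ?_ hn.le
    exact ContinuousLinearMap.opNorm_comp_le ((φ n).comp V) (R * S)
  have hcpt := hA.isCompact_closure_image_closedBall (f := (A ^ m : E →L[ℂ] E).toLinearMap) 1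
  obtain ⟨t, -, htf, ht⟩ := hcpt.finite_cover_balls (show (0:ℝ) < 1/4 by norm_num)
  have hev2 : ∀ᶠ n in (l : Filter ℕ), ∀ y ∈ t, ‖φ n y‖ < 1/4 := by
    rw [Filter.eventually_all_finite htf]
    intro y _
    have := (hlim y).norm
    rw [h0', norm_zero] at this
    exact this.eventually (gt_mem_nhds (by norm_num))
  obtain ⟨n, hn1, hn2⟩ := (hev1.and hev2).exists
  have key : ‖(φ n)‖ ≤ 3/4 := by
    refine ContinuousLinearMap.opNorm_le_of_unit_norm (𝕜 := ℂ) (by norm_num) ?_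
    intro x hx
    have hmem : (A ^ m) x ∈ closure ((A ^ m : E →L[ℂ] E).toLinearMap '' Metric.closedBall 0 1) :=
      subset_closure ⟨x, by simp [hx], rfl⟩
    obtain ⟨y, hy, hxy⟩ := Set.mem_iUnion₂.1 (ht hmem)
    rw [Metric.mem_ball, dist_eq_norm] at hxy
    have e : φ n x = (φ n).comp (V * (R * S)) x + (φ n ((A ^ m) x - y) + φ n y) := by
      rw [hfac]; simp
    have b1 := ((φ n).comp (V * (R * S))).le_opNorm x
    have b2 := (φ n).le_opNorm ((A ^ m) x - y)
    have b3 := hn2 y hy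
    rw [hx, mul_one] at b1
    rw [hφ, one_mul] at b2
    rw [e]
    refine (norm_add_le _ _).trans ?_
    have := norm_add_le (φ n ((A ^ m) x - y)) (φ n y)
    linarith
  rw [hφ] at key
  norm_num at key

/-- resolvent functional -/
lemma aux_resolvent {E : Type*} [NormedAddCommGroup E] [NormedSpace ℂ E]
    (U : E →L[ℂ] E) (r : ℝ) (hr0 : 0 < r)
    (hr : Tendsto (fun n : ℕ => ‖U ^ n‖ ^ (1 / (n : ℝ))) atTop (nhds r))
    (ψ : E →L[ℂ] ℂ) (s : ℝ) (hs : r < s) :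
    ∃ χ : E →L[ℂ] ℂ, (∀ x, HasSum (fun k : ℕ => ((s ^ k : ℝ) : ℂ)⁻¹ * ψ ((U ^ k) x)) (χ x)) ∧
      ∀ x, χ (U x) = s * (χ x - ψ x) := by
  have hs0 : 0 < s := hr0.trans hs
  have hsum : Summable (fun k : ℕ => ((s ^ k : ℝ) : ℂ)⁻¹ • ψ.comp (U ^ k)) := by
    obtain ⟨t, ht1, ht2⟩ := exists_between hs
    have ht0 : 0 < t := hr0.trans ht1
    have hg : Summable (fun k : ℕ => ‖ψ‖ * (t / s) ^ k) :=
      (summable_geometric_of_lt_one (by positivity) ((div_lt_one hs0).2 ht2)).mul_left _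
    refine hg.of_norm_bounded_eventually_nat ?_
    filter_upwards [hr.eventually (gt_mem_nhds ht1), eventually_gt_atTop 0] with k hk hk0
    have hk' : ‖U ^ k‖ ≤ t ^ k := by
      have h1 := pow_le_pow_left₀ (by positivity) hk.le k
      rwa [← Real.rpow_natCast, ← Real.rpow_mul (norm_nonneg _), one_div,
        inv_mul_cancel₀ (by positivity), Real.rpow_one] at h1
    rw [norm_smul, norm_inv, Complex.norm_real, Real.norm_of_nonneg (by positivity), div_pow]
    calc (s ^ k)⁻¹ * ‖ψ.comp (U ^ k)‖ ≤ (s ^ k)⁻¹ * (‖ψ‖ * t ^ k) := by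
          gcongr
          exact (ContinuousLinearMap.opNorm_comp_le _ _).trans (by gcongr)
      _ = _ := by ring
  have hx : ∀ x, HasSum (fun k : ℕ => ((s ^ k : ℝ) : ℂ)⁻¹ * ψ ((U ^ k) x))
      ((∑' k : ℕ, ((s ^ k : ℝ) : ℂ)⁻¹ • ψ.comp (U ^ k)) x) := fun x => by
    have := hsum.hasSum.mapL (ContinuousLinearMap.apply ℂ ℂ x)
    simpa using this
  refine ⟨_, hx, fun x => ?_⟩
  have h1 := (hasSum_nat_add_iff' 1).2 (hx x)
  have h2 := h1.mul_left (s : ℂ)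
  refine (hx (U x)).unique ?_
  convert h2 using 1
  · rfl
  · funext k
    have : (s:ℂ) ≠ 0 := by exact_mod_cast hs0.ne'
    have e1 : (U ^ (k + 1)) x = (U ^ k) (U x) := by rw [pow_succ]; rfl
    rw [e1, pow_succ]
    push_cast
    field_simp
  · simp

open scoped ComplexOrder in
lemma aux_functional {E : Type*} [NormedAddCommGroup E] [NormedSpace ℂ E] [CompleteSpace E]
    (U W K : E →L[ℂ] E) (P : E → Prop) (hP : ∀ x, P x → P (U x))
    (r : ℝ) (hr : Tendsto (fun n : ℕ => ‖U ^ n‖ ^ (1 / (n : ℝ))) atTop (nhds r))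
    (hr0 : 0 < r) (hsplit : U = W + K) (hW : ‖W‖ < r)
    (hcomp : ∀ lam : ℂ, ‖W‖ < ‖lam‖ → ∃ n : ℕ, 0 < n ∧
      IsCompactOperator ⇑((K * Ring.inverse (lam • (1 : E →L[ℂ] E) - W)) ^ n))
    (ψ : E →L[ℂ] ℂ) (hψ : ∀ x, P x → 0 ≤ ψ x) (e : E) (he : P e)
    (he' : P (U e - (r : ℂ) • e)) (hψe : 0 < (ψ e).re) :
    ∃ φ : E →L[ℂ] ℂ, φ ≠ 0 ∧ (∀ x, P x → 0 ≤ φ x) ∧ ∀ x, φ (U x) = r * φ x := by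
  have hnr : ‖W‖ < ‖(r : ℂ)‖ := by
    rwa [Complex.norm_real, Real.norm_of_nonneg hr0.le]
  obtain ⟨m, -, hA⟩ := hcomp r hnr
  set T : E →L[ℂ] E := (r : ℂ) • (1 : E →L[ℂ] E) - W with hT
  have he0 : e ≠ 0 := by rintro rfl; simp at hψe
  have : Nontrivial E := ⟨e, 0, he0⟩
  have hTu : IsUnit T := by
    have := spectrum.mem_resolventSet_of_norm_lt (𝕜 := ℂ) (a := W) (k := (r : ℂ)) hnr
    rw [spectrum.mem_resolventSet_iff, Algebra.algebraMap_eq_smul_one] at this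
    exact this
  have hVR : ((r : ℂ) • (1 : E →L[ℂ] E) - U) * Ring.inverse T = 1 - K * Ring.inverse T := by
    have : (r : ℂ) • (1 : E →L[ℂ] E) - U = T - K := by rw [hT, hsplit]; abel
    rw [this, sub_mul, Ring.mul_inverse_cancel _ hTu]
  -- the resolvent functionals
  let s : ℕ → ℝ := fun n => r + 1 / ((n : ℝ) + 1)
  have hs : ∀ n, r < s n := fun n => by
    have : 0 < 1 / ((n : ℝ) + 1) := by positivity
    simp only [s]; linarith
  have hslim : Tendsto (fun n => s n - r) atTop (nhds 0) := by
    simpa [s] using tendsto_one_div_add_atTop_nhds_zero_nat (𝕜 := ℝ)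
  choose χ hχ1 hχ2 using fun n => aux_resolvent U r hr0 hr ψ (s n) (hs n)
  have hPk : ∀ k x, P x → P ((U ^ k) x) := by
    intro k
    induction k with
    | zero => intro x hx; simpa using hx
    | succ k ih => intro x hx; rw [pow_succ]; exact ih _ (hP x hx)
  have hχpos : ∀ n x, P x → 0 ≤ χ n x := by
    intro n x hx
    refine (hχ1 n x).nonneg fun k => ?_
    have h1 : (0 : ℂ) ≤ (((s n) ^ k : ℝ) : ℂ)⁻¹ := by
      rw [← Complex.ofReal_inv]
      have := (hr0.trans (hs n)).le
      exact_mod_cast inv_nonneg.2 (pow_nonneg this k)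
    exact mul_nonneg h1 (hψ _ (hPk k x hx))
  have hχe : ∀ n, r * (ψ e).re ≤ (s n - r) * (‖χ n‖ * ‖e‖) := by
    intro n
    have h1 := (Complex.le_def.1 (hχpos n _ he')).1
    have h2 := (Complex.le_def.1 (hχpos n _ he)).1
    rw [map_sub, map_smul, hχ2, smul_eq_mul] at h1
    simp only [Complex.sub_re, Complex.zero_re, Complex.re_ofReal_mul] at h1 h2
    have h3 : (χ n e).re ≤ ‖χ n‖ * ‖e‖ :=
      (Complex.re_le_norm _).trans ((χ n).le_opNorm e)
    have h4 := hs n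
    nlinarith
  have hχn : ∀ n, 0 < ‖χ n‖ := by
    intro n
    rcases (norm_nonneg (χ n)).eq_or_lt with h | h
    · have := hχe n
      rw [← h] at this
      have : 0 < r * (ψ e).re := by positivity
      linarith
    · exact h
  have hχinv : Tendsto (fun n => ‖χ n‖⁻¹) atTop (nhds 0) := by
    have h1 : Tendsto (fun n => (s n - r) * (‖e‖ / (r * (ψ e).re))) atTop (nhds 0) := by
      simpa using hslim.mul_const (‖e‖ / (r * (ψ e).re))
    refine squeeze_zero (fun n => by positivity) (fun n => ?_) h1
    have hpos : 0 < r * (ψ e).re := by positivity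
    rw [inv_le_iff_one_le_mul₀ (hχn n), ← mul_div_assoc, div_mul_eq_mul_div, le_div_iff₀ hpos]
    linarith [hχe n]
  let φ : ℕ → E →L[ℂ] ℂ := fun n => ((‖χ n‖⁻¹ : ℝ) : ℂ) • χ n
  have hφ : ∀ n, ‖φ n‖ = 1 := fun n => by
    simp only [φ]
    rw [norm_smul, Complex.norm_real, norm_inv, norm_norm, inv_mul_cancel₀ (hχn n).ne']
  have hφV : Tendsto (fun n => ‖(φ n).comp ((r : ℂ) • (1 : E →L[ℂ] E) - U)‖) atTop (nhds 0) := by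
    have h1 : Tendsto (fun n => (s n - r) + (s n - r + r) * (‖χ n‖⁻¹ * ‖ψ‖)) atTop (nhds 0) := by
      simpa using hslim.add ((hslim.add_const r).mul (hχinv.mul_const ‖ψ‖))
    refine squeeze_zero (fun n => norm_nonneg _) (fun n => ?_) h1
    have e1 : (φ n).comp ((r : ℂ) • (1 : E →L[ℂ] E) - U) =
        -((s n - r : ℝ) : ℂ) • φ n + ((s n * ‖χ n‖⁻¹ : ℝ) : ℂ) • ψ := by
      ext x
      simp [φ, hχ2]
      ring
    rw [e1]
    refine (norm_add_le _ _).trans ?_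
    have h4 := hs n
    rw [norm_smul _ (φ n), norm_smul _ ψ, hφ, norm_neg, Complex.norm_real, Complex.norm_real,
      Real.norm_of_nonneg (by linarith),
      Real.norm_of_nonneg (mul_nonneg (by linarith) (by positivity))]
    apply le_of_eq; ring
  obtain ⟨φ₀, l, hne, hl, hlim⟩ := aux_limit _ _ _ hVR m hA φ hφ hφV
  refine ⟨φ₀, hne, fun x hx => ?_, fun x => ?_⟩
  · refine ge_of_tendsto' (hlim x) fun n => ?_
    simp only [φ, smul_apply, smul_eq_mul]
    refine mul_nonneg ?_ (hχpos n x hx)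
    exact_mod_cast (inv_nonneg.2 (norm_nonneg _))
  · have h1 : Tendsto (fun n => (φ n).comp ((r : ℂ) • (1 : E →L[ℂ] E) - U) x) l (nhds 0) := by
      refine squeeze_zero_norm (fun n => ContinuousLinearMap.le_opNorm _ x) ?_
      simpa using (hφV.mono_left hl).mul_const ‖x‖
    have h2 := hlim (((r : ℂ) • (1 : E →L[ℂ] E) - U) x)
    have h3 := tendsto_nhds_unique h1 h2
    simp at h3
    linear_combination h3

section LpPart

variable {α : Type*} [MeasurableSpace α] {μ : Measure α} {p : ℝ≥0∞}

lemma aux_ex_re (f : Lp ℂ p μ) : ∃ g : Lp ℂ p μ, ∀ᵐ x ∂μ, g x = (((f x).re : ℝ) : ℂ) :=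
  ⟨_, ((Lp.memLp f).re.ofReal (K := ℂ)).coeFn_toLp⟩

lemma aux_ex_abs (f : Lp ℂ p μ) : ∃ g : Lp ℂ p μ, ∀ᵐ x ∂μ, g x = ((‖f x‖ : ℝ) : ℂ) :=
  ⟨_, ((Lp.memLp f).norm.ofReal (K := ℂ)).coeFn_toLp⟩

lemma aux_ex_ind (f : Lp ℂ p μ) {B : Set α} (hB : MeasurableSet B) :
    ∃ g : Lp ℂ p μ, ∀ᵐ x ∂μ, g x = B.indicator f x :=
  ⟨_, ((Lp.memLp f).indicator hB).coeFn_toLp⟩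

variable [Fact (1 ≤ p)]

lemma aux_re (U : Lp ℂ p μ →L[ℂ] Lp ℂ p μ)
    (hreal : ∀ f : Lp ℂ p μ, (∀ᵐ x ∂μ, (f x).im = 0) → (∀ᵐ x ∂μ, ((U f) x).im = 0))
    (f g : Lp ℂ p μ) (hg : ∀ᵐ x ∂μ, g x = (((f x).re : ℝ) : ℂ)) :
    ∀ᵐ x ∂μ, (U g) x = ((((U f) x).re : ℝ) : ℂ) := by
  set k : Lp ℂ p μ := (-Complex.I) • (f - g) with hk
  have hkr : ∀ᵐ x ∂μ, (k x).im = 0 := by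
    filter_upwards [hg, Lp.coeFn_smul (-Complex.I) (f - g), Lp.coeFn_sub f g] with x h1 h2 h3
    rw [hk, h2, Pi.smul_apply, h3, Pi.sub_apply, h1]
    simp
  have hgr : ∀ᵐ x ∂μ, (g x).im = 0 := by
    filter_upwards [hg] with x h1
    rw [h1]; simp
  have hf : U f = U g + Complex.I • U k := by
    rw [← map_smul, ← map_add, hk, smul_smul]
    simp
  filter_upwards [hreal _ hkr, hreal _ hgr, Lp.coeFn_add (U g) (Complex.I • U k),
    Lp.coeFn_smul Complex.I (U k)] with x h1 h2 h3 h4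
  rw [hf, h3, Pi.add_apply, h4, Pi.smul_apply]
  apply Complex.ext <;> simp [h1, h2]

lemma aux_mod (U : Lp ℂ p μ →L[ℂ] Lp ℂ p μ)
    (hreal : ∀ f : Lp ℂ p μ, (∀ᵐ x ∂μ, (f x).im = 0) → (∀ᵐ x ∂μ, ((U f) x).im = 0))
    (hpos : ∀ f : Lp ℂ p μ, (∀ᵐ x ∂μ, (f x).im = 0 ∧ 0 ≤ (f x).re) →
      (∀ᵐ x ∂μ, ((U f) x).im = 0 ∧ 0 ≤ ((U f) x).re))
    (f h : Lp ℂ p μ) (hfh : ∀ᵐ x ∂μ, (h x).im = 0 ∧ ‖f x‖ ≤ (h x).re) :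
    ∀ᵐ x ∂μ, ((U h) x).im = 0 ∧ ‖(U f) x‖ ≤ ((U h) x).re := by
  have hhr := hreal h (hfh.mono fun x hx => hx.1)
  have key : ∀ c : ℂ, ∀ᵐ x ∂μ, (c * (U f) x).re ≤ ‖c‖ * ((U h) x).re := by
    intro c
    obtain ⟨g, hg⟩ := aux_ex_re (c • f)
    have h1 := aux_re U hreal (c • f) g hg
    have h2 : ∀ᵐ x ∂μ, ((((‖c‖ : ℝ) : ℂ) • h - g : Lp ℂ p μ) x).im = 0 ∧
        0 ≤ ((((‖c‖ : ℝ) : ℂ) • h - g : Lp ℂ p μ) x).re := by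
      filter_upwards [hfh, hg, Lp.coeFn_sub (((‖c‖ : ℝ) : ℂ) • h) g,
        Lp.coeFn_smul ((‖c‖ : ℝ) : ℂ) h, Lp.coeFn_smul c f] with x e1 e2 e3 e4 e5
      rw [e3, Pi.sub_apply, e4, e2, e5, Pi.smul_apply, Pi.smul_apply]
      have : (c * f x).re ≤ ‖c‖ * (h x).re :=
        (Complex.re_le_norm _).trans (by rw [norm_mul]; gcongr; exact e1.2)
      constructor
      · simp [e1.1]
      · simp only [smul_eq_mul, Complex.sub_re, Complex.re_ofReal_mul, Complex.ofReal_re]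
        linarith
    have h3 := hpos _ h2
    rw [map_sub, map_smul] at h3
    rw [map_smul] at h1
    filter_upwards [h1, h3, Lp.coeFn_sub (((‖c‖ : ℝ) : ℂ) • U h) (U g),
        Lp.coeFn_smul ((‖c‖ : ℝ) : ℂ) (U h), Lp.coeFn_smul c (U f)] with x e1 e2 e3 e4 e5
    rw [e3, Pi.sub_apply, e4, e1, e5, Pi.smul_apply, Pi.smul_apply] at e2
    have := e2.2
    simp only [smul_eq_mul, Complex.sub_re, Complex.re_ofReal_mul, Complex.ofReal_re] at this
    linarith
  have key2 : ∀ᵐ x ∂μ, ∀ n : ℕ, (TopologicalSpace.denseSeq ℂ n * (U f) x).re ≤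
      ‖TopologicalSpace.denseSeq ℂ n‖ * ((U h) x).re := ae_all_iff.2 fun n => key _
  filter_upwards [key2, hhr] with x hx hx2
  refine ⟨hx2, ?_⟩
  have hall : ∀ c : ℂ, (c * (U f) x).re ≤ ‖c‖ * ((U h) x).re := by
    intro c
    refine (TopologicalSpace.denseRange_denseSeq ℂ).induction_on c ?_ hx
    exact isClosed_le (by fun_prop) (by fun_prop)
  have h1 := hall ((starRingEnd ℂ) ((U f) x))
  rw [← Complex.normSq_eq_conj_mul_self, Complex.ofReal_re, Complex.normSq_eq_norm_sq,
    RCLike.norm_conj, sq] at h1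
  rcases (norm_nonneg ((U f) x)).eq_or_lt with h0 | h0
  · have h2 := hall 1
    have h3 := hall (-1)
    have h4 : (U f) x = 0 := by simpa using h0.symm
    rw [← h0]
    simpa [h4] using h2
  · exact le_of_mul_le_mul_left h1 h0

lemma aux_trunc (hp : p ≠ ∞) (f : Lp ℂ p μ) (B : ℕ → Set α) (_hB : ∀ n, MeasurableSet (B n))
    (hev : ∀ᵐ x ∂μ, ∀ᶠ n in atTop, x ∈ B n) (g : ℕ → Lp ℂ p μ)
    (hg : ∀ n, ∀ᵐ x ∂μ, g n x = (B n).indicator f x) :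
    Tendsto g atTop (nhds f) := by
  have hp0 : p ≠ 0 := (zero_lt_one.trans_le (Fact.out : 1 ≤ p)).ne'
  have hpt : 0 < p.toReal := ENNReal.toReal_pos hp0 hp
  rw [Lp.tendsto_Lp_iff_tendsto_eLpNorm']
  have h1 : ∀ n, eLpNorm (⇑(g n) - ⇑f) p μ =
      (∫⁻ x, ‖(g n - f) x‖ₑ ^ p.toReal ∂μ) ^ (1 / p.toReal) := fun n => by
    rw [← eLpNorm_eq_lintegral_rpow_enorm_toReal hp0 hp]
    exact eLpNorm_congr_ae (Lp.coeFn_sub _ _).symm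
  simp_rw [h1]
  have hval : ∀ n, ∀ᵐ x ∂μ, (g n - f) x = (B n).indicator f x - f x := fun n => by
    filter_upwards [hg n, Lp.coeFn_sub (g n) f] with x e1 e2
    rw [e2, Pi.sub_apply, e1]
  have h2 : Tendsto (fun n => ∫⁻ x, ‖(g n - f) x‖ₑ ^ p.toReal ∂μ) atTop
      (nhds (∫⁻ x, 0 ∂μ)) := by
    refine tendsto_lintegral_of_dominated_convergence (fun x => ‖f x‖ₑ ^ p.toReal) ?_ ?_ ?_ ?_
    · intro n
      exact (Lp.stronglyMeasurable _).enorm.pow_const _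
    · intro n
      filter_upwards [hval n] with x e1
      rw [e1]
      by_cases hx : x ∈ B n
      · simp [hx, hpt]
      · simp [hx]
    · exact (lintegral_rpow_enorm_lt_top_of_eLpNorm_lt_top hp0 hp (Lp.eLpNorm_lt_top f)).ne
    · filter_upwards [hev, ae_all_iff.2 hval] with x e1 e2
      refine tendsto_const_nhds.congr' ?_
      filter_upwards [e1] with n hn
      rw [e2]; simp [hn, hpt]
  have h3 := h2.ennrpow_const (1 / p.toReal)
  simpa [hpt] using h3

open scoped ComplexOrder in
lemma aux_faithful (hp : p ≠ ∞) (φ : Lp ℂ p μ →L[ℂ] ℂ)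
    (hφ : ∀ u : Lp ℂ p μ, (∀ᵐ x ∂μ, (u x).im = 0 ∧ 0 ≤ (u x).re) → 0 ≤ φ u)
    (h : Lp ℂ p μ) (hh : ∀ᵐ x ∂μ, (h x).im = 0 ∧ 0 < (h x).re) (h0 : φ h = 0) : φ = 0 := by
  have step1 : ∀ u : Lp ℂ p μ, (∀ᵐ x ∂μ, (u x).im = 0 ∧ 0 ≤ (u x).re) → φ u = 0 := by
    intro u hu
    let B : ℕ → Set α := fun n => {x | (u x).re ≤ n * (h x).re}
    have hB : ∀ n, MeasurableSet (B n) := fun n => by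
      have m1 := Complex.measurable_re.comp (Lp.stronglyMeasurable u).measurable
      have m2 := Complex.measurable_re.comp (Lp.stronglyMeasurable h).measurable
      exact measurableSet_le m1 (m2.const_mul _)
    choose g hg using fun n => aux_ex_ind u (hB n)
    have hlim := aux_trunc hp u B hB (by
      filter_upwards [hh] with x hx
      obtain ⟨N, hN⟩ := exists_nat_ge ((u x).re / (h x).re)
      filter_upwards [eventually_ge_atTop N] with n hn
      have : (N : ℝ) ≤ n := by exact_mod_cast hn
      exact (div_le_iff₀ hx.2).1 (hN.trans this)) g hg
    have hz : ∀ n, φ (g n) = 0 := by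
      intro n
      have a1 : 0 ≤ φ (g n) := by
        apply hφ
        filter_upwards [hg n, hu] with x e1 e2
        rw [e1]
        by_cases hx : x ∈ B n <;> simp [hx, e2]
      have a2 : 0 ≤ φ ((n : ℂ) • h - g n) := by
        apply hφ
        filter_upwards [hg n, hu, hh, Lp.coeFn_sub ((n : ℂ) • h) (g n),
          Lp.coeFn_smul (n : ℂ) h] with x e1 e2 e3 e4 e5
        rw [e4, Pi.sub_apply, e5, e1, Pi.smul_apply]
        by_cases hx : x ∈ B n
        · have : (u x).re ≤ n * (h x).re := hx
          simp [hx, e2, e3, this]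
        · have : 0 ≤ n * (h x).re := mul_nonneg (Nat.cast_nonneg _) e3.2.le
          simp [hx, e3, this]
      rw [map_sub, map_smul, h0, smul_zero, zero_sub] at a2
      exact le_antisymm (neg_nonneg.1 a2) a1
    have := (φ.continuous.tendsto u).comp hlim
    refine tendsto_nhds_unique this ?_
    simp [Function.comp_def, hz]
  have step2 : ∀ u : Lp ℂ p μ, (∀ᵐ x ∂μ, (u x).im = 0) → φ u = 0 := by
    intro u hu
    obtain ⟨a, ha⟩ := aux_ex_abs u
    have b1 := step1 a (by filter_upwards [ha] with x e; rw [e]; simp)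
    have b2 := step1 (a + u) (by
      filter_upwards [ha, hu, Lp.coeFn_add a u] with x e1 e2 e3
      rw [e3, Pi.add_apply, e1]
      have := neg_le_of_abs_le (Complex.abs_re_le_norm (u x))
      simp only [Complex.add_im, Complex.ofReal_im, e2, Complex.add_re, Complex.ofReal_re]
      exact ⟨by simp, by linarith⟩)
    rw [map_add, b1, zero_add] at b2
    exact b2
  ext f
  obtain ⟨g, hg⟩ := aux_ex_re f
  set k : Lp ℂ p μ := (-Complex.I) • (f - g) with hk
  have hkr : ∀ᵐ x ∂μ, (k x).im = 0 := by
    filter_upwards [hg, Lp.coeFn_smul (-Complex.I) (f - g), Lp.coeFn_sub f g] with x h1 h2 h3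
    rw [hk, h2, Pi.smul_apply, h3, Pi.sub_apply, h1]
    simp
  have hgr : ∀ᵐ x ∂μ, (g x).im = 0 := by
    filter_upwards [hg] with x h1
    rw [h1]; simp
  have hf : φ f = φ g + Complex.I • φ k := by
    rw [← map_smul, ← map_add, hk, smul_smul]
    simp
  rw [hf, step2 _ hkr, step2 _ hgr]
  simp

open scoped ComplexOrder in
lemma aux_psi [SigmaFinite μ] (f : Lp ℂ p μ) (hf : f ≠ 0)
    (e : Lp ℂ p μ) (he : ∀ᵐ x ∂μ, e x = ((‖f x‖ : ℝ) : ℂ)) :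
    ∃ ψ : Lp ℂ p μ →L[ℂ] ℂ,
      (∀ u : Lp ℂ p μ, (∀ᵐ x ∂μ, (u x).im = 0 ∧ 0 ≤ (u x).re) → 0 ≤ ψ u) ∧ 0 < (ψ e).re := by
  have hms : MeasurableSet {x | f x ≠ 0} :=
    (Lp.stronglyMeasurable f).measurable (measurableSet_singleton 0).compl
  have hpos : 0 < μ {x | f x ≠ 0} := by
    rw [pos_iff_ne_zero]
    intro h
    apply hf
    rw [Lp.eq_zero_iff_ae_eq_zero]
    rw [Filter.EventuallyEq, ae_iff]
    exact h
  obtain ⟨B, hBm, hBs, hB0, hBt⟩ := Measure.exists_subset_measure_lt_top hms hpos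
  let q : ℝ≥0∞ := (1 - p⁻¹)⁻¹
  have : ENNReal.HolderConjugate p q := ENNReal.HolderConjugate.inv_one_sub_inv' Fact.out
  have : ENNReal.HolderConjugate q p := ENNReal.HolderConjugate.symm
  have : Fact (1 ≤ q) := ⟨ENNReal.HolderConjugate.one_le q p⟩
  let ψ := (ContinuousLinearMap.mul ℂ ℂ).lpPairing μ q p (indicatorConstLp q hBm hBt.ne (1 : ℂ))
  have hψ : ∀ u : Lp ℂ p μ, ψ u = ∫ x in B, u x ∂μ := by
    intro u
    simp only [ψ]
    rw [ContinuousLinearMap.lpPairing_eq_integral, ← integral_indicator hBm]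
    refine integral_congr_ae ?_
    filter_upwards [indicatorConstLp_coeFn (p := q) (hs := hBm) (hμs := hBt.ne) (c := (1 : ℂ))]
      with x hx
    rw [hx]
    by_cases h : x ∈ B <;> simp [h]
  have hreal : ∀ u : Lp ℂ p μ, (∀ᵐ x ∂μ, (u x).im = 0) →
      ψ u = ((∫ x in B, (u x).re ∂μ : ℝ) : ℂ) := by
    intro u hu
    rw [hψ, ← integral_complex_ofReal]
    refine integral_congr_ae (ae_restrict_of_ae ?_)
    filter_upwards [hu] with x hx
    apply Complex.ext <;> simp [hx]
  refine ⟨ψ, fun u hu => ?_, ?_⟩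
  · rw [hreal u (hu.mono fun x hx => hx.1)]
    have : 0 ≤ ∫ x in B, (u x).re ∂μ :=
      integral_nonneg_of_ae (ae_restrict_of_ae (hu.mono fun x hx => hx.2))
    exact_mod_cast this
  · rw [hreal e (he.mono fun x hx => by rw [hx]; simp), Complex.ofReal_re]
    have hfin : IsFiniteMeasure (μ.restrict B) := ⟨by simpa using hBt⟩
    have hint : Integrable (fun x => (e x).re) (μ.restrict B) :=
      (((Lp.memLp e).restrict B).integrable Fact.out).re
    have heq : ∀ᵐ x ∂μ.restrict B, (e x).re = ‖f x‖ :=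
      ae_restrict_of_ae (he.mono fun x hx => by rw [hx]; simp)
    rw [integral_pos_iff_support_of_nonneg_ae (by
      filter_upwards [heq] with x hx; rw [hx]; simp) hint]
    have hsup : (Function.support fun x => (e x).re) =ᵐ[μ.restrict B] Set.univ := by
      filter_upwards [heq, ae_restrict_mem hBm] with x hx hxB
      apply propext
      change (e x).re ≠ 0 ↔ True
      rw [hx]
      simpa using hBs hxB
    rw [measure_congr hsup]
    simpa using hB0

end LpPart

lemma aux_align (F a : ℂ) (G b : ℝ) (hG : 0 < G) (hF : ‖F‖ = G) (ha : ‖a‖ ≤ b)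
    (hFa : ‖F - a‖ ≤ G - b) : a * G = F * b := by
  set w : ℂ := (starRingEnd ℂ) F * a with hw
  have h1 : ‖w‖ ≤ G * b := by
    rw [hw, norm_mul, RCLike.norm_conj, hF]; gcongr
  have h2 : ((starRingEnd ℂ) F * (F - a)).re ≤ G * (G - b) := by
    refine (Complex.re_le_norm _).trans ?_
    rw [norm_mul, RCLike.norm_conj, hF]; gcongr
  have hFF : (starRingEnd ℂ) F * F = ((G ^ 2 : ℝ) : ℂ) := by
    rw [← Complex.normSq_eq_conj_mul_self, Complex.normSq_eq_norm_sq, hF]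
  rw [mul_sub, hFF, ← hw, Complex.sub_re, Complex.ofReal_re] at h2
  have h3 := Complex.re_le_norm w
  have hre : w.re = G * b := by nlinarith
  have hn : ‖w‖ = w.re := by linarith
  have him : w.im = 0 := by
    have h4 := Complex.sq_norm w
    rw [hn, Complex.normSq_apply] at h4
    have : w.im * w.im = 0 := by nlinarith
    simpa using this
  have hwe : w = ((G * b : ℝ) : ℂ) := Complex.ext (by simpa using hre) (by simpa using him)
  have hGc : (G : ℂ) ≠ 0 := by exact_mod_cast hG.ne'
  have h5 : (G : ℂ) * (a * G) = G * (F * b) := by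
    have h6 : F * w = ((G ^ 2 : ℝ) : ℂ) * a := by rw [hw, ← hFF]; ring
    rw [hwe] at h6
    push_cast at h6
    linear_combination -h6
  exact mul_left_cancel₀ hGc h5

lemma aux_pt (z y a c : ℂ) (r b ε : ℝ) (hr : 0 < r) (hz : ‖z‖ = r) (hy : y ≠ 0)
    (ha : ‖a‖ ≤ b) (hFa : ‖z * y - a‖ ≤ r * ‖y‖ - b) (hb : 0 < b)
    (hac : ‖a - c * b‖ ≤ ε * b) (hyc : ‖y - c * ‖y‖‖ ≤ ε * ‖y‖) : ‖z - r‖ ≤ 2 * ε * r := by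
  have hy0 : 0 < ‖y‖ := norm_pos_iff.2 hy
  have h1 := aux_align (z * y) a (r * ‖y‖) b (by positivity) (by rw [norm_mul, hz]) ha hFa
  have h2 : ‖z * y - c * (r * ‖y‖)‖ ≤ ε * (r * ‖y‖) := by
    have e : (z * y - c * (r * ‖y‖)) * b = (a - c * b) * ((r * ‖y‖ : ℝ) : ℂ) := by
      rw [sub_mul, sub_mul, h1]; push_cast; ring
    have e' := congrArg norm e
    rw [norm_mul, norm_mul, Complex.norm_real, Complex.norm_real, Real.norm_of_nonneg hb.le,
      Real.norm_of_nonneg (by positivity)] at e'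
    have : ‖z * y - c * (r * ‖y‖)‖ * b ≤ ε * (r * ‖y‖) * b := by
      rw [e']
      calc _ ≤ (ε * b) * (r * ‖y‖) := by gcongr
        _ = _ := by ring
    exact le_of_mul_le_mul_right this hb
  have h3 : ‖(r : ℂ) * (y - c * ‖y‖)‖ ≤ r * (ε * ‖y‖) := by
    rw [norm_mul, Complex.norm_real, Real.norm_of_nonneg hr.le]; gcongr
  have h4 : ‖z - r‖ * ‖y‖ ≤ (2 * ε * r) * ‖y‖ := by
    rw [← norm_mul]
    have : (z - r) * y = (z * y - c * (r * ‖y‖)) - (r : ℂ) * (y - c * ‖y‖) := by ring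
    rw [this]
    refine (norm_sub_le _ _).trans ?_
    linarith
  exact le_of_mul_le_mul_right h4 hy0


/-- **Theorem 2.4 iii).** Let `U` be a positive bounded linear operator on the complex space
`X_ℂ = L^p(E, μ; ℂ)` whose restriction to the real subspace is strictly positive, with
spectral radius `r(U) > 0` (Gelfand formula), admitting a splitting `U = W + K` with
`‖W‖ < r(U)` and `K (λ - W)⁻¹` power compact for every `λ ∈ ℂ` with `|λ| > ‖W‖`.
Then every eigenvalue of `U` of modulus `r(U)` equals `r(U)`: the peripheral point
spectrum of `Ũ = U / r(U)` is reduced to `{1}`. -/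
theorem peripheral_point_spectrum_trivial
    {α : Type*} [MeasurableSpace α] {μ : Measure α} [SigmaFinite μ]
    {p : ℝ≥0∞} [Fact (1 ≤ p)] (hp : p ≠ ∞)
    (U W K : Lp ℂ p μ →L[ℂ] Lp ℂ p μ)
    (hreal : ∀ f : Lp ℂ p μ, (∀ᵐ x ∂μ, (f x).im = 0) → (∀ᵐ x ∂μ, ((U f) x).im = 0))
    (hpos : ∀ f : Lp ℂ p μ, (∀ᵐ x ∂μ, (f x).im = 0 ∧ 0 ≤ (f x).re) →
      (∀ᵐ x ∂μ, ((U f) x).im = 0 ∧ 0 ≤ ((U f) x).re))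
    (hstrict : ∀ f : Lp ℂ p μ, (∀ᵐ x ∂μ, (f x).im = 0 ∧ 0 ≤ (f x).re) → f ≠ 0 →
      (∀ᵐ x ∂μ, ((U f) x).im = 0 ∧ 0 < ((U f) x).re))
    (r : ℝ) (hr : Tendsto (fun n : ℕ => ‖U ^ n‖ ^ (1 / (n : ℝ))) atTop (nhds r))
    (hr0 : 0 < r) (hsplit : U = W + K) (hW : ‖W‖ < r)
    (hcomp : ∀ lam : ℂ, ‖W‖ < ‖lam‖ → ∃ n : ℕ, 0 < n ∧
      IsCompactOperator ⇑((K * Ring.inverse (lam • (1 : Lp ℂ p μ →L[ℂ] Lp ℂ p μ) - W)) ^ n)) :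
    ∀ z : ℂ, ‖z‖ = r → (∃ f : Lp ℂ p μ, f ≠ 0 ∧ U f = z • f) → z = (r : ℂ) := by
  rintro z hz ⟨f, hf0, hUf⟩
  obtain ⟨e, he⟩ := aux_ex_abs f
  have hePos : ∀ᵐ x ∂μ, (e x).im = 0 ∧ 0 ≤ (e x).re := by
    filter_upwards [he] with x hx; rw [hx]; simp
  have hUfx : ∀ᵐ x ∂μ, (U f) x = z * f x := by
    rw [hUf]
    filter_upwards [Lp.coeFn_smul z f] with x hx
    rw [hx]; simp
  have hmod : ∀ᵐ x ∂μ, ((U e) x).im = 0 ∧ ‖(U f) x‖ ≤ ((U e) x).re :=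
    aux_mod U hreal hpos f e (by filter_upwards [he] with x hx; rw [hx]; simp)
  have hg : ∀ᵐ x ∂μ, ((U e - (r : ℂ) • e : Lp ℂ p μ) x).im = 0 ∧
      0 ≤ ((U e - (r : ℂ) • e : Lp ℂ p μ) x).re := by
    filter_upwards [he, hUfx, hmod, Lp.coeFn_sub (U e) ((r : ℂ) • e),
      Lp.coeFn_smul (r : ℂ) e] with x e1 e2 e3 e4 e5
    rw [e4, Pi.sub_apply, e5, Pi.smul_apply, e1]
    rw [e2, norm_mul, hz] at e3
    simp [e3]
  obtain ⟨ψ, hψ, hψe⟩ := aux_psi f hf0 e he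
  obtain ⟨φ, hφ0, hφ, hφU⟩ := aux_functional U W K
    (fun u : Lp ℂ p μ => ∀ᵐ x ∂μ, (u x).im = 0 ∧ 0 ≤ (u x).re) hpos r hr hr0 hsplit hW hcomp
    ψ hψ e hePos hg hψe
  -- `|f|` is an eigenvector
  have heig : U e = (r : ℂ) • e := by
    by_contra hne
    have hne' : U e - (r : ℂ) • e ≠ 0 := sub_ne_zero.2 hne
    refine hφ0 (aux_faithful hp φ hφ _ (hstrict _ hg hne') ?_)
    rw [hφU, map_sub, hφU, map_smul, smul_eq_mul, sub_self, mul_zero]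
  have hUex : ∀ᵐ x ∂μ, (U e) x = ((r * ‖f x‖ : ℝ) : ℂ) := by
    rw [heig]
    filter_upwards [he, Lp.coeFn_smul (r : ℂ) e] with x e1 e2
    rw [e2, Pi.smul_apply, e1]; simp
  have key : ∀ ε : ℝ, 0 < ε → ‖z - r‖ ≤ 2 * ε * r := by
    intro ε hε
    let B : ℕ → Set α := fun n =>
      {x | f x ≠ 0 ∧ ‖f x - TopologicalSpace.denseSeq ℂ n * (‖f x‖ : ℝ)‖ ≤ ε * ‖f x‖}
    have hfm : Measurable f := (Lp.stronglyMeasurable f).measurable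
    have hB : ∀ n, MeasurableSet (B n) := fun n => by
      refine MeasurableSet.inter (hfm (measurableSet_singleton 0).compl) ?_
      have m1 : Measurable (fun x =>
          ‖f x - TopologicalSpace.denseSeq ℂ n * ((‖f x‖ : ℝ) : ℂ)‖) := by fun_prop
      have m2 : Measurable (fun x => ε * ‖f x‖) := by fun_prop
      exact measurableSet_le m1 m2
    have hex : ∃ n, μ (B n) ≠ 0 := by
      by_contra! hall
      have h0 : μ (⋃ n, B n) = 0 := measure_iUnion_null hall
      apply hf0
      rw [Lp.eq_zero_iff_ae_eq_zero, Filter.EventuallyEq, ae_iff]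
      refine measure_mono_null ?_ h0
      intro x hx
      have hx0 : f x ≠ 0 := hx
      have hxp : 0 < ‖f x‖ := norm_pos_iff.2 hx0
      obtain ⟨n, hn⟩ := (TopologicalSpace.denseRange_denseSeq ℂ).exists_dist_lt
        (f x / (‖f x‖ : ℝ)) hε
      refine Set.mem_iUnion.2 ⟨n, hx0, ?_⟩
      rw [dist_eq_norm] at hn
      have hc : ((‖f x‖ : ℝ) : ℂ) ≠ 0 := by exact_mod_cast hxp.ne'
      have : f x - TopologicalSpace.denseSeq ℂ n * (‖f x‖ : ℝ) =
          (f x / (‖f x‖ : ℝ) - TopologicalSpace.denseSeq ℂ n) * (‖f x‖ : ℝ) := by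
        field_simp
      rw [this, norm_mul, Complex.norm_real, norm_norm]
      gcongr
    obtain ⟨n, hn⟩ := hex
    set c := TopologicalSpace.denseSeq ℂ n with hc
    obtain ⟨f₁, hf₁⟩ := aux_ex_ind f (hB n)
    obtain ⟨e₁, he₁⟩ := aux_ex_ind e (hB n)
    have he₁pos : ∀ᵐ x ∂μ, (e₁ x).im = 0 ∧ 0 ≤ (e₁ x).re := by
      filter_upwards [he₁, hePos] with x h1 h2
      rw [h1]
      by_cases hx : x ∈ B n <;> simp [hx, h2]
    have he₁0 : e₁ ≠ 0 := by
      intro h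
      apply hn
      rw [Lp.eq_zero_iff_ae_eq_zero, Filter.EventuallyEq] at h
      have h' : ∀ᵐ x ∂μ, x ∉ B n := by
        filter_upwards [h, he₁, he] with x h1 h2 h3 hx
        rw [h2, Set.indicator_of_mem hx, h3] at h1
        have : f x = 0 := by simpa using h1
        exact hx.1 this
      simpa [ae_iff] using h'
    have hb := hstrict e₁ he₁pos he₁0
    have m1 := aux_mod U hreal hpos f₁ e₁ (by
      filter_upwards [hf₁, he₁, he] with x h1 h2 h3
      rw [h1, h2]
      by_cases hx : x ∈ B n <;> simp [hx, h3])
    have m2 := aux_mod U hreal hpos (f - f₁) (e - e₁) (by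
      filter_upwards [hf₁, he₁, he, Lp.coeFn_sub f f₁, Lp.coeFn_sub e e₁] with x h1 h2 h3 h4 h5
      rw [h4, h5, Pi.sub_apply, Pi.sub_apply, h1, h2]
      by_cases hx : x ∈ B n <;> simp [hx, h3])
    have m3 := aux_mod U hreal hpos (f₁ - c • e₁) ((ε : ℂ) • e₁) (by
      filter_upwards [hf₁, he₁, he, Lp.coeFn_sub f₁ (c • e₁), Lp.coeFn_smul c e₁,
        Lp.coeFn_smul (ε : ℂ) e₁] with x h1 h2 h3 h4 h5 h6
      rw [h4, h6, Pi.sub_apply, h5, Pi.smul_apply, Pi.smul_apply, h1, h2]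
      by_cases hx : x ∈ B n
      · have := hx.2
        simp only [Set.indicator_of_mem hx, h3]
        simpa using this
      · simp [hx])
    rw [map_sub, map_sub] at m2
    rw [map_sub, map_smul, map_smul] at m3
    have hfin : ∀ᵐ x ∂μ, x ∈ B n → ‖z - r‖ ≤ 2 * ε * r := by
      filter_upwards [hUfx, hUex, hb, m1, m2, m3, Lp.coeFn_sub (U f) (U f₁),
        Lp.coeFn_sub (U e) (U e₁), Lp.coeFn_sub (U f₁) (c • U e₁), Lp.coeFn_smul c (U e₁),
        Lp.coeFn_smul (ε : ℂ) (U e₁)] with x a1 a2 a3 a4 a5 a6 a7 a8 a9 a10 a11 hx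
      have hbx : (U e₁) x = ((((U e₁) x).re : ℝ) : ℂ) :=
        Complex.ext (by simp) (by simpa using a3.1)
      rw [a7, a8, Pi.sub_apply, Pi.sub_apply, a1, a2, Complex.sub_re, Complex.ofReal_re] at a5
      rw [a9, a11, Pi.sub_apply, a10, Pi.smul_apply, Pi.smul_apply, smul_eq_mul, smul_eq_mul,
        Complex.re_ofReal_mul] at a6
      have a6' := a6.2
      rw [hbx, Complex.ofReal_re] at a6'
      exact aux_pt z (f x) ((U f₁) x) c r ((U e₁) x).re ε hr0 hz hx.1 a4.2 a5.2 a3.2 a6' hx.2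
    by_contra hcon
    apply hn
    have h' : ∀ᵐ x ∂μ, x ∉ B n := by
      filter_upwards [hfin] with x hx hxB
      exact hcon (hx hxB)
    simpa [ae_iff] using h'
  have hzero : ‖z - r‖ ≤ 0 := by
    refine le_of_forall_pos_le_add fun δ hδ => ?_
    have := key (δ / (2 * r)) (by positivity)
    have e2 : 2 * (δ / (2 * r)) * r = δ := by field_simp
    linarith
  exact sub_eq_zero.1 (norm_le_zero_iff.1 hzero)
end

section
/- Let U be a strictly positive bounded linear operator on X = L^p(E, μ) with spectral radius r(U) > 0, admitting a splitting U = W + K with bounded linear operators W and K such that ‖W‖ < r(U) and K(λ − W)⁻¹ is power compact for every real λ > ‖W‖, and let φ₀ ∈ X'₊ \ {0} satisfy U* φ₀ = r(U) φ₀. Then, setting Ũ := U / r(U), there exist ζ ∈ (0, 1) and C ≥ 1 such that for every n ∈ ℕ and every f ∈ X with φ₀(f) = 0, one has ‖Ũⁿ f‖ ≤ C ζⁿ ‖f‖. -/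
open MeasureTheory Filter ENNReal

lemma ps_coeff {E : Type*} [NormedAddCommGroup E] [NormedSpace ℝ E] [CompleteSpace E]
    (a : ℕ → E) (f : ℝ → E) (R : ℝ) (hR : 0 < R) (M : ℝ) (hb : ∀ n, ‖a n‖ * R ^ n ≤ M)
    (hf : ∀ z : ℝ, |z| < R → HasSum (fun n => z ^ n • a n) (f z))
    (c d : ℝ) (hc : -R < c) (hd : d < R) (Z : Set ℝ) (hZ : Z.Infinite) (hZI : Z ⊆ Set.Icc c d)
    (hz : ∀ z ∈ Z, f z = 0) (n : ℕ) : a n = 0 := by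
  let P : FormalMultilinearSeries ℝ ℝ E := fun n => ContinuousMultilinearMap.mkPiRing ℝ (Fin n) (a n)
  lift R to NNReal using hR.le
  have hP : HasFPowerSeriesOnBall f P 0 (R : ℝ≥0∞) := by
    refine ⟨?_, ?_, ?_⟩
    · apply P.le_radius_of_bound M
      intro n
      simpa [P] using hb n
    · exact_mod_cast hR
    · intro y hy
      have : |y| < R := by
        simpa using hy
      simpa [P] using hf y this
  obtain ⟨z, hzI, hacc⟩ := hZ.exists_accPt_of_subset_isCompact isCompact_Icc hZI
  rw [accPt_iff_frequently_nhdsNE] at hacc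
  have hU : Metric.eball (0 : ℝ) (R : ℝ≥0∞) = Metric.ball 0 R := Metric.eball_coe
  have han := hP.analyticOnNhd
  rw [hU] at han
  have hzero := han.eqOn_zero_of_preconnected_of_frequently_eq_zero
    (Metric.isPreconnected_ball) (z₀ := z) (by
      rw [mem_ball_zero_iff, Real.norm_eq_abs, abs_lt]; exact ⟨by linarith [hzI.1], by linarith [hzI.2]⟩)
    (hacc.mono hz)
  have h0 : HasFPowerSeriesAt (0 : ℝ → E) P 0 := by
    refine hP.hasFPowerSeriesAt.congr ?_
    filter_upwards [Metric.ball_mem_nhds (0:ℝ) hR] with x hx using hzero hx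
  have := h0.eq_zero
  have h1 : P n = 0 := by rw [this]; rfl
  exact (ContinuousMultilinearMap.mkPiRing_eq_zero_iff _).1 h1

lemma ps_coeff_mem {E : Type*} [NormedAddCommGroup E] [NormedSpace ℝ E] [CompleteSpace E]
    (S : Submodule ℝ E) (hS : IsClosed (S : Set E))
    (a : ℕ → E) (f : ℝ → E) (R : ℝ) (hR : 0 < R) (M : ℝ) (hb : ∀ n, ‖a n‖ * R ^ n ≤ M)
    (hf : ∀ z : ℝ, |z| < R → HasSum (fun n => z ^ n • a n) (f z))
    (c d : ℝ) (hc : -R < c) (hd : d < R) (Z : Set ℝ) (hZ : Z.Infinite) (hZI : Z ⊆ Set.Icc c d)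
    (hz : ∀ z ∈ Z, f z ∈ S) (n : ℕ) : a n ∈ S := by
  have : IsClosed (S : Set E) := hS
  have := ps_coeff (fun n => S.mkQ (a n)) (fun z => S.mkQ (f z)) R hR M
    (fun n => le_trans (by gcongr; exact Submodule.Quotient.norm_mk_le S (a n)) (hb n))
    (fun z hz => by
      have := (hf z hz).mapL (S.mkQL)
      simpa using this) c d hc hd Z hZ hZI (fun z h => by
        simpa using hz z h) n
  simpa using this

/-- sum of words of length `N` in `W, K` having exactly `j` letters `K`. -/
noncomputable def wordSum {A : Type*} [Ring A] (W K : A) : ℕ → ℕ → A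
  | 0, N => W ^ N
  | _ + 1, 0 => 0
  | j + 1, N + 1 => wordSum W K (j + 1) N * W + wordSum W K j N * K

lemma wordSum_lt {A : Type*} [Ring A] (W K : A) (N : ℕ) : ∀ j, N < j → wordSum W K j N = 0 := by
  induction N with
  | zero => rintro (_ | j) h <;> simp_all [wordSum]
  | succ N ih =>
    rintro (_ | j) h
    · simp at h
    · rw [wordSum, ih _ (by omega), ih _ (by omega)]; simp

lemma wordSum_sum {A : Type*} [Ring A] (W K : A) (N : ℕ) :
    ∑ j ∈ Finset.range (N + 1), wordSum W K j N = (W + K) ^ N := by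
  induction N with
  | zero => simp [wordSum]
  | succ N ih =>
    rw [Finset.sum_range_succ']
    simp only [wordSum]
    rw [Finset.sum_add_distrib, ← Finset.sum_mul, ← Finset.sum_mul, ih]
    have h2 : ∑ j ∈ Finset.range (N + 1), wordSum W K (j + 1) N + W ^ N = (W + K) ^ N := by
      rw [← ih, Finset.sum_range_succ (fun j => wordSum W K (j+1) N),
        wordSum_lt W K N (N+1) (by omega), add_zero, Finset.sum_range_succ' _ N]
      simp only [wordSum]
    rw [pow_succ (W + K), mul_add]
    nth_rewrite 2 [← h2]
    rw [add_mul, pow_succ W]; abel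

lemma wordSum_bound {A : Type*} [NormedRing A] (W K : A) (ρ : ℝ) (hρ : ‖W‖ < ρ) (j : ℕ) :
    ∃ M : ℝ, 0 ≤ M ∧ ∀ N, ‖wordSum W K j N‖ ≤ M * ρ ^ N := by
  have hρ0 : 0 < ρ := lt_of_le_of_lt (norm_nonneg _) hρ
  induction j with
  | zero =>
    refine ⟨max 1 ‖(1 : A)‖, by positivity, fun N => ?_⟩
    rcases N with _ | N
    · simp [wordSum]
    · calc ‖W ^ (N+1)‖ ≤ ‖W‖ ^ (N+1) := norm_pow_le' _ (by omega)
        _ ≤ ρ ^ (N+1) := by gcongr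
        _ ≤ _ := le_mul_of_one_le_left (by positivity) (le_max_left _ _)
  | succ j ih =>
    obtain ⟨M, hM, h⟩ := ih
    have hp : 0 < ρ - ‖W‖ := by linarith
    refine ⟨M * ‖K‖ / (ρ - ‖W‖), by positivity, fun N => ?_⟩
    set M' := M * ‖K‖ / (ρ - ‖W‖) with hM'
    have hMM : M' * (ρ - ‖W‖) = M * ‖K‖ := by rw [hM']; field_simp
    have hM0 : 0 ≤ M' := by positivity
    induction N with
    | zero => simp [wordSum, hM0]
    | succ N ih =>
      calc ‖wordSum W K (j+1) (N+1)‖ ≤ ‖wordSum W K (j+1) N‖ * ‖W‖ + ‖wordSum W K j N‖ * ‖K‖ := by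
            rw [wordSum]
            exact (norm_add_le _ _).trans (add_le_add (norm_mul_le _ _) (norm_mul_le _ _))
        _ ≤ (M' * ρ ^ N) * ‖W‖ + (M * ρ ^ N) * ‖K‖ := by gcongr; exact h N
        _ = (M' * ‖W‖ + M * ‖K‖) * ρ ^ N := by ring
        _ = M' * ρ ^ (N+1) := by rw [← hMM]; ring

lemma wordSum_gen {A : Type*} [NormedRing A] [NormedAlgebra ℝ A] [CompleteSpace A] (W K : A)
    (z : ℝ) (hz : ‖W‖ * |z| < 1) (j : ℕ) :
    HasSum (fun N => z ^ N • wordSum W K j N)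
      (Ring.inverse (1 - z • W) * (z • (K * Ring.inverse (1 - z • W))) ^ j) := by
  have hn : ‖z • W‖ < 1 := by rw [norm_smul, Real.norm_eq_abs, mul_comm]; exact hz
  have hu : IsUnit (1 - z • W) := isUnit_one_sub_of_norm_lt_one hn
  -- summability
  have hsum : ∀ j, Summable (fun N => z ^ N • wordSum W K j N) := by
    intro j
    obtain ⟨ρ, h1, h2⟩ : ∃ ρ, ‖W‖ < ρ ∧ ρ * |z| < 1 := by
      rcases eq_or_ne z 0 with rfl | h
      · exact ⟨‖W‖ + 1, by linarith, by simp⟩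
      · have : 0 < |z| := abs_pos.mpr h
        obtain ⟨ρ, h1, h2⟩ := exists_between ((lt_div_iff₀ this).mpr hz)
        exact ⟨ρ, h1, (lt_div_iff₀ this).mp h2⟩
    have hρ0 : 0 < ρ := lt_of_le_of_lt (norm_nonneg _) h1
    obtain ⟨M, hM, h⟩ := wordSum_bound W K ρ h1 j
    refine Summable.of_norm_bounded (g := fun N => M * (ρ * |z|) ^ N)
      ((summable_geometric_of_lt_one (by positivity) h2).mul_left M) (fun N => ?_)
    rw [norm_smul, norm_pow, Real.norm_eq_abs]
    calc |z| ^ N * ‖wordSum W K j N‖ ≤ |z| ^ N * (M * ρ ^ N) := by gcongr; exact h N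
      _ = _ := by rw [mul_pow]; ring
  induction j with
  | zero =>
    have h := hsum 0
    have h' := h.hasSum
    have : (∑' N, z ^ N • wordSum W K 0 N) = Ring.inverse (1 - z • W) := by
      have h1 : ∀ N, z ^ N • wordSum W K 0 N = (z • W) ^ N := fun N => by
        rw [wordSum, smul_pow]
      simp only [h1] at h ⊢
      have h2 := h.tsum_pow_mul_one_sub
      calc _ = (∑' N, (z • W) ^ N) * ((1 - z • W) * Ring.inverse (1 - z • W)) := by
              rw [Ring.mul_inverse_cancel _ hu, mul_one]
        _ = _ := by rw [← mul_assoc, h2, one_mul]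
    rw [this] at h'
    simpa using h'
  | succ j ih =>
    have h := hsum (j + 1)
    set s := ∑' N, z ^ N • wordSum W K (j + 1) N with hs
    have h' : HasSum _ s := h.hasSum
    set t := Ring.inverse (1 - z • W) * (z • (K * Ring.inverse (1 - z • W))) ^ j with ht
    have e1 : HasSum (fun N => z ^ (N+1) • wordSum W K (j + 1) (N+1)) s := by
      have := (hasSum_nat_add_iff' (f := fun N => z ^ N • wordSum W K (j + 1) N) 1).mpr h'
      simpa [wordSum] using this
    have e2 : HasSum (fun N => z ^ (N+1) • wordSum W K (j + 1) (N+1)) (s * (z • W) + t * (z • K)) := by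
      have h3 := (h'.mul_right (z • W)).add (ih.mul_right (z • K))
      refine (funext fun N => ?_ : (fun N => z ^ (N+1) • wordSum W K (j + 1) (N+1)) = _) ▸ h3
      rw [show wordSum W K (j+1) (N+1) = wordSum W K (j + 1) N * W + wordSum W K j N * K from rfl, pow_succ']
      simp only [smul_add, smul_mul_assoc, mul_smul_comm, smul_smul]
    have e3 := e1.unique e2
    have e4 : s * (1 - z • W) = t * (z • K) := by
      rw [mul_sub, mul_one]; nth_rewrite 1 [e3]; abel
    have e5 : s = t * (z • K) * Ring.inverse (1 - z • W) := by
      rw [← e4, mul_assoc, Ring.mul_inverse_cancel _ hu, mul_one]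
    rw [pow_succ, ← mul_assoc (Ring.inverse _), ← ht]
    convert h' using 1
    rw [e5, ← smul_mul_assoc, mul_assoc t]

lemma quasi_compact {X : Type*} [NormedAddCommGroup X] [NormedSpace ℝ X] [CompleteSpace X]
    (U W K : X →L[ℝ] X) (r : ℝ) (hsplit : U = W + K) (hW : ‖W‖ < r)
    (hcomp : ∀ lam : ℝ, ‖W‖ < lam → ∃ n : ℕ, 0 < n ∧
      IsCompactOperator ⇑((K * Ring.inverse (lam • (1 : X →L[ℝ] X) - W)) ^ n))
    (ε : ℝ) (hε : 0 < ε) :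
    ∃ (n : ℕ) (C : X →L[ℝ] X), IsCompactOperator C ∧ ‖(r⁻¹ • U) ^ n - C‖ ≤ ε := by
  obtain ⟨ρ, h1, h2⟩ := exists_between hW
  have hρ0 : 0 < ρ := lt_of_le_of_lt (norm_nonneg _) h1
  have hr0 : 0 < r := hρ0.trans h2
  let S : Submodule ℝ (X →L[ℝ] X) := compactOperator (RingHom.id ℝ) X X
  have hS : IsClosed (S : Set (X →L[ℝ] X)) := isClosed_setOfPred_isCompactOperator
  have hSmem : ∀ T : X →L[ℝ] X, T ∈ S ↔ IsCompactOperator T := fun T => Iff.rfl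
  have hSl : ∀ T C : X →L[ℝ] X, C ∈ S → T * C ∈ S := fun T C h =>
    ((hSmem _).1 h).clm_comp T
  set R := ρ⁻¹ with hR
  have hR0 : 0 < R := by positivity
  have hWR : ∀ z : ℝ, |z| < R → ‖W‖ * |z| < 1 := by
    intro z hz
    calc ‖W‖ * |z| ≤ ‖W‖ * R := by gcongr
      _ < ρ * R := by gcongr
      _ = 1 := by rw [hR]; field_simp
  let x : ℝ → X →L[ℝ] X := fun z => z • (K * Ring.inverse (1 - z • W))
  have hx : ∀ z, 0 < z → z < R → ∃ n, (x z) ^ n ∈ S := by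
    intro z hz hzR
    obtain ⟨n, -, hn⟩ := hcomp z⁻¹ (by
      exact h1.trans ((lt_inv_comm₀ hz hρ0).1 hzR))
    refine ⟨n, ?_⟩
    rw [hSmem]
    have hu : IsUnit (1 - z • W) := isUnit_one_sub_of_norm_lt_one (by
      rw [norm_smul, Real.norm_eq_abs, mul_comm]; exact hWR z (by rwa [abs_of_pos hz]))
    have e : x z = K * Ring.inverse (z⁻¹ • (1 : X →L[ℝ] X) - W) := by
      have e1 : z⁻¹ • (1 : X →L[ℝ] X) - W = z⁻¹ • (1 - z • W) := by
        rw [smul_sub, smul_smul, inv_mul_cancel₀ hz.ne', one_smul]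
      have e2 : Ring.inverse (z⁻¹ • (1 : X →L[ℝ] X) - W) = z • Ring.inverse (1 - z • W) := by
        rw [e1]
        have hu' : IsUnit (z⁻¹ • (1 - z • W)) := (hu.smul (Units.mk0 z⁻¹ (inv_ne_zero hz.ne')))
        apply hu'.mul_left_cancel
        rw [Ring.mul_inverse_cancel _ hu', smul_mul_smul_comm, Ring.mul_inverse_cancel _ hu,
          inv_mul_cancel₀ hz.ne', one_smul]
      rw [e2, mul_smul_comm]
    rw [e]; exact hn
  obtain ⟨n, hn⟩ : ∃ n, {z ∈ Set.Icc (R/3) (R/2) | (x z) ^ n ∈ S}.Infinite := by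
    by_contra! hcon
    have hcov : Set.Icc (R/3) (R/2) ⊆ ⋃ n, {z ∈ Set.Icc (R/3) (R/2) | (x z) ^ n ∈ S} := by
      intro z hz
      obtain ⟨n, hn⟩ := hx z (by linarith [hz.1]) (by linarith [hz.2])
      exact Set.mem_iUnion.2 ⟨n, hz, hn⟩
    have : (Set.Icc (R/3) (R/2)).Countable :=
      (Set.countable_iUnion fun n => (hcon n).countable).mono hcov
    exact (Cardinal.Real.Icc_countable_iff.not.2 (by linarith)) this
  have hcoef : ∀ j, n ≤ j → ∀ N, wordSum W K j N ∈ S := by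
    intro j hj N
    obtain ⟨M, hM, hb⟩ := wordSum_bound W K ρ h1 j
    refine ps_coeff_mem S hS (fun N => wordSum W K j N) (fun z => Ring.inverse (1 - z • W) * x z ^ j)
      R hR0 M (fun N => ?_) (fun z hz => wordSum_gen W K z (hWR z hz) j) (R/3) (R/2) (by linarith)
      (by linarith) _ hn (fun z h => h.1) (fun z h => ?_) N
    · calc _ ≤ M * ρ ^ N * R ^ N := by gcongr; exact hb N
        _ = M := by rw [mul_assoc, ← mul_pow, hR, mul_inv_cancel₀ hρ0.ne', one_pow, mul_one]
    · obtain ⟨k, rfl⟩ := Nat.exists_eq_add_of_le' hj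
      rw [pow_add, ← mul_assoc]
      exact hSl _ _ h.2
  choose M hM hb using fun j => wordSum_bound W K ρ h1 j
  have hlim : Tendsto (fun N : ℕ => (∑ j ∈ Finset.range n, M j) * (ρ / r) ^ N) atTop (nhds 0) := by
    simpa using (tendsto_pow_atTop_nhds_zero_of_lt_one (by positivity)
      ((div_lt_one hr0).2 h2)).const_mul (∑ j ∈ Finset.range n, M j)
  obtain ⟨N, hN, hNn⟩ := ((hlim.eventually (gt_mem_nhds hε)).and (eventually_ge_atTop n)).exists
  refine ⟨N, (r⁻¹) ^ N • ∑ j ∈ Finset.Ico n (N + 1), wordSum W K j N, ?_, ?_⟩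
  · rw [← hSmem]
    exact S.smul_mem _ (S.sum_mem fun j hj => hcoef j (Finset.mem_Ico.1 hj).1 N)
  · have : (r⁻¹ • U) ^ N - (r⁻¹) ^ N • ∑ j ∈ Finset.Ico n (N + 1), wordSum W K j N
        = (r⁻¹) ^ N • ∑ j ∈ Finset.range n, wordSum W K j N := by
      rw [smul_pow, hsplit, ← wordSum_sum, ← smul_sub,
        ← Finset.sum_range_add_sum_Ico _ (show n ≤ N + 1 by omega), add_sub_cancel_right]
    rw [this, norm_smul, norm_pow, Real.norm_eq_abs, abs_of_pos (inv_pos.2 hr0)]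
    calc r⁻¹ ^ N * ‖∑ j ∈ Finset.range n, wordSum W K j N‖
        ≤ r⁻¹ ^ N * ∑ j ∈ Finset.range n, M j * ρ ^ N := by
          gcongr
          exact norm_sum_le_of_le _ fun j _ => hb j N
      _ = (∑ j ∈ Finset.range n, M j) * (ρ / r) ^ N := by
          rw [← Finset.sum_mul, div_pow, inv_pow]; field_simp
      _ ≤ ε := hN.le

lemma subseq_of_quasi_compact {X : Type*} [NormedAddCommGroup X] [NormedSpace ℝ X] [CompleteSpace X]
    (V : X →L[ℝ] X)
    (hQ : ∀ ε : ℝ, 0 < ε → ∃ (n : ℕ) (C : X →L[ℝ] X), IsCompactOperator C ∧ ‖V ^ n - C‖ ≤ ε)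
    (R : ℝ) (hR : 0 < R) (x : ℕ → X)
    (hx : ∀ m : ℕ, ∀ k, m ≤ k → ∃ y, ‖y‖ ≤ R ∧ x k = (V ^ m) y) :
    ∃ (g : X) (s : ℕ → ℕ), StrictMono s ∧ Tendsto (x ∘ s) atTop (nhds g) := by
  have htb : TotallyBounded (Set.range x) := by
    rw [Metric.totallyBounded_iff]
    intro ε hε
    obtain ⟨m, C, hC, hmC⟩ := hQ (ε / (2 * R)) (by positivity)
    have hcc : IsCompact (closure (C '' Metric.closedBall 0 R)) :=
      IsCompactOperator.isCompact_closure_image_closedBall (f := (C : X →ₗ[ℝ] X)) hC R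
    obtain ⟨t, ht, htc⟩ := Metric.totallyBounded_iff.1
      (hcc.totallyBounded.subset subset_closure) (ε / 2) (by positivity)
    refine ⟨t ∪ x '' (Set.Iio m), ht.union ((Set.finite_Iio m).image x), ?_⟩
    rintro _ ⟨k, rfl⟩
    rcases lt_or_ge k m with hk | hk
    · exact Set.mem_iUnion₂.2 ⟨x k, Or.inr ⟨k, hk, rfl⟩, Metric.mem_ball_self hε⟩
    · obtain ⟨y, hy, hxy⟩ := hx m k hk
      obtain ⟨c, hc, hyc⟩ := Set.mem_iUnion₂.1 (htc ⟨y, by simpa using hy, rfl⟩)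
      refine Set.mem_iUnion₂.2 ⟨c, Or.inl hc, ?_⟩
      rw [Metric.mem_ball] at hyc ⊢
      have h1 : dist (x k) (C y) ≤ ε / 2 := by
        rw [hxy, dist_eq_norm, ← sub_apply]
        calc _ ≤ ‖V ^ m - C‖ * ‖y‖ := ContinuousLinearMap.le_opNorm _ _
          _ ≤ ε / (2 * R) * R := by gcongr
          _ = ε / 2 := by field_simp
      linarith [dist_triangle (x k) (C y) c]
  have hcomp : IsCompact (closure (Set.range x)) :=
    htb.closure.isCompact_of_isClosed isClosed_closure
  obtain ⟨g, -, s, hs, h⟩ := hcomp.tendsto_subseq (x := x) (fun n => subset_closure ⟨n, rfl⟩)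
  exact ⟨g, s, hs, h⟩

lemma power_bounded {X : Type*} [NormedAddCommGroup X] [NormedSpace ℝ X] [CompleteSpace X]
    (V : X →L[ℝ] X)
    (hQ : ∀ ε : ℝ, 0 < ε → ∃ (n : ℕ) (C : X →L[ℝ] X), IsCompactOperator C ∧ ‖V ^ n - C‖ ≤ ε)
    (q : X → ℝ) (hqc : Continuous q) (hq0 : ∀ f, 0 ≤ q f) (hqs : ∀ (c : ℝ) f, q (c • f) = |c| * q f)
    (hqz : ∀ f, q f = 0 → f = 0) (M : ℝ) (hqM : ∀ f, q f ≤ M * ‖f‖)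
    (hqV : ∀ n f, q ((V ^ n) f) ≤ q f) :
    ∃ B : ℝ, ∀ n, ‖V ^ n‖ ≤ B := by
  by_contra! hcon
  have key : ∀ k : ℕ, ∃ (n : ℕ) (f : X), k ≤ n ∧ (k : ℝ) < ‖V ^ n‖ ∧ (∀ j ≤ n, ‖V ^ j‖ ≤ ‖V ^ n‖) ∧
      ‖f‖ ≤ 1 ∧ ‖V ^ n‖ / 2 ≤ ‖(V ^ n) f‖ := by
    intro k
    classical
    have hex := hcon (k + ∑ j ∈ Finset.range (k + 1), ‖V ^ j‖)
    set b := (k : ℝ) + ∑ j ∈ Finset.range (k + 1), ‖V ^ j‖ with hb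
    set n := Nat.find hex with hn
    have h1 : b < ‖V ^ n‖ := Nat.find_spec hex
    have h2 : ∀ j < n, ‖V ^ j‖ ≤ b := fun j hj => not_lt.1 (Nat.find_min hex hj)
    have hsn : 0 ≤ ∑ j ∈ Finset.range (k + 1), ‖V ^ j‖ := by positivity
    have hkb : (k : ℝ) ≤ b := by linarith
    have hpos : 0 < ‖V ^ n‖ := lt_of_le_of_lt (le_trans (by positivity) hkb) h1
    have hkn : k ≤ n := by
      by_contra! h
      have := Finset.single_le_sum (f := fun j => ‖V ^ j‖) (fun i _ => norm_nonneg _)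
        (Finset.mem_range.2 (show n < k + 1 by omega))
      have hk0 : (0 : ℝ) ≤ k := by positivity
      linarith
    obtain ⟨f, hf1, hf2⟩ := (V ^ n).exists_lt_apply_of_lt_opNorm (half_lt_self hpos)
    refine ⟨n, f, hkn, by linarith, fun j hj => ?_, hf1.le, hf2.le⟩
    rcases hj.lt_or_eq with h | h
    · exact (h2 j h).trans h1.le
    · rw [h]
  choose n f hkn hk hmax hf1 hf2 using key
  have hpos : ∀ k, 0 < ‖V ^ (n k)‖ := fun k => lt_of_le_of_lt (by positivity) (hk k)
  let g : ℕ → X := fun k => ‖V ^ (n k)‖⁻¹ • (V ^ (n k)) (f k)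
  obtain ⟨G, s, hs, hG⟩ := subseq_of_quasi_compact V hQ 1 one_pos g (by
    intro m k hmk
    refine ⟨‖V ^ (n k)‖⁻¹ • (V ^ (n k - m)) (f k), ?_, ?_⟩
    · rw [norm_smul, norm_inv, norm_norm, inv_mul_le_iff₀ (hpos k), mul_one]
      calc _ ≤ ‖V ^ (n k - m)‖ * ‖f k‖ := ContinuousLinearMap.le_opNorm _ _
        _ ≤ ‖V ^ (n k)‖ * 1 := by gcongr; exact hmax k _ (by omega); exact hf1 k
        _ = _ := mul_one _
    · rw [map_smul, ← mul_apply_eq_comp, ← pow_add, Nat.add_sub_cancel' (hmk.trans (hkn k))])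
  have h1 : 1 / 2 ≤ ‖G‖ := by
    refine ge_of_tendsto hG.norm (Eventually.of_forall fun k => ?_)
    simp only [Function.comp, g]
    rw [norm_smul, norm_inv, norm_norm, le_inv_mul_iff₀ (hpos _)]
    linarith [hf2 (s k)]
  have hM0 : ∀ k, q (f k) ≤ |M| := fun k =>
    (hqM _).trans (by
      calc M * ‖f k‖ ≤ |M| * ‖f k‖ := by gcongr; exact le_abs_self M
        _ ≤ |M| * 1 := by gcongr; exact hf1 k
        _ = _ := mul_one _)
  have h2 : q G ≤ 0 := by
    have t1 : Tendsto (fun k => q (g (s k))) atTop (nhds (q G)) := (hqc.tendsto G).comp hG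
    have t2 : Tendsto (fun k : ℕ => |M| / ((s k : ℕ) : ℝ)) atTop (nhds 0) :=
      tendsto_const_nhds.div_atTop (tendsto_natCast_atTop_atTop.comp hs.tendsto_atTop)
    refine le_of_tendsto_of_tendsto t1 t2 ?_
    filter_upwards [hs.tendsto_atTop.eventually (eventually_gt_atTop 0)] with k hk0
    simp only [g]
    have : (0 : ℝ) < s k := by exact_mod_cast hk0
    rw [hqs, abs_of_pos (inv_pos.2 (hpos _)), inv_mul_eq_div]
    have := (hqV (n (s k)) (f (s k))).trans (hM0 (s k))
    gcongr
    exact (hk (s k)).le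
  have := hqz G (le_antisymm h2 (hq0 G))
  rw [this] at h1
  norm_num at h1

lemma decay_abstract {X : Type*} [NormedAddCommGroup X] [NormedSpace ℝ X] [CompleteSpace X]
    (V : X →L[ℝ] X)
    (hQ : ∀ ε : ℝ, 0 < ε → ∃ (n : ℕ) (C : X →L[ℝ] X), IsCompactOperator C ∧ ‖V ^ n - C‖ ≤ ε)
    (q : X → ℝ) (hqc : Continuous q) (hq0 : ∀ f, 0 ≤ q f) (hqs : ∀ (c : ℝ) f, q (c • f) = |c| * q f)
    (hqz : ∀ f, q f = 0 → f = 0) (M : ℝ) (hqM : ∀ f, q f ≤ M * ‖f‖)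
    (hqV : ∀ f, q (V f) ≤ q f) (Y : Submodule ℝ X) (hYc : IsClosed (Y : Set X))
    (hYV : ∀ f ∈ Y, V f ∈ Y) (hlt : ∀ f ∈ Y, f ≠ 0 → q (V f) < q f) :
    ∃ ζ : ℝ, 0 < ζ ∧ ζ < 1 ∧ ∃ C : ℝ, 1 ≤ C ∧
      ∀ (n : ℕ), ∀ f ∈ Y, ‖(V ^ n) f‖ ≤ C * ζ ^ n * ‖f‖ := by
  have hqVn : ∀ n f, q ((V ^ n) f) ≤ q f := by
    intro n f
    induction n with
    | zero => simp
    | succ n ih => rw [pow_succ', mul_apply_eq_comp]; exact (hqV _).trans ih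
  have hYn : ∀ n, ∀ f ∈ Y, (V ^ n) f ∈ Y := by
    intro n f hf
    induction n with
    | zero => simpa
    | succ n ih => rw [pow_succ', mul_apply_eq_comp]; exact hYV _ ih
  have hqmono : ∀ m n f, m ≤ n → q ((V ^ n) f) ≤ q ((V ^ m) f) := by
    intro m n f hmn
    obtain ⟨k, rfl⟩ := Nat.exists_eq_add_of_le' hmn
    rw [pow_add, mul_apply_eq_comp]; exact hqVn _ _
  obtain ⟨B₀, hB₀⟩ := power_bounded V hQ q hqc hq0 hqs hqz M hqM hqVn
  obtain ⟨B, hB1, hB⟩ : ∃ B : ℝ, 1 ≤ B ∧ ∀ n, ‖V ^ n‖ ≤ B :=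
    ⟨max 1 B₀, le_max_left _ _, fun n => (hB₀ n).trans (le_max_right _ _)⟩
  have hBf : ∀ n f, ‖f‖ ≤ 1 → ‖(V ^ n) f‖ ≤ B := fun n f hf =>
    ((V ^ n).le_opNorm f).trans (by
      calc _ ≤ B * 1 := by gcongr; exact hB n
        _ = B := mul_one _)
  -- subsequence extraction
  have hsub : ∀ (n : ℕ → ℕ) (f : ℕ → X), (∀ k, k ≤ n k) → (∀ k, ‖f k‖ ≤ 1) →
      ∃ (g : X) (s : ℕ → ℕ), StrictMono s ∧ Tendsto (fun k => (V ^ (n (s k))) (f (s k))) atTop (nhds g) := by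
    intro n f hn hf
    refine subseq_of_quasi_compact V hQ B (by linarith) (fun k => (V ^ (n k)) (f k)) ?_
    intro m k hmk
    refine ⟨(V ^ (n k - m)) (f k), hBf _ _ (hf k), ?_⟩
    rw [← mul_apply_eq_comp, ← pow_add, Nat.add_sub_cancel' (hmk.trans (hn k))]
  -- the limiting sup of `q`
  let T : Set ℝ := {t | 0 ≤ t ∧ ∃ n, ∀ f ∈ Y, ‖f‖ ≤ 1 → q ((V ^ n) f) ≤ t}
  have hTne : T.Nonempty := ⟨|M|, abs_nonneg _, 0, fun f _ hf => by
    calc q f ≤ M * ‖f‖ := hqM f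
      _ ≤ |M| * ‖f‖ := by gcongr; exact le_abs_self M
      _ ≤ |M| * 1 := by gcongr
      _ = _ := mul_one _⟩
  have hTb : BddBelow T := ⟨0, fun t ht => ht.1⟩
  set σ := sInf T with hσ
  have hσ0 : σ ≤ 0 := by
    by_contra! hpos
    have key : ∀ k : ℕ, ∃ (n : ℕ) (f : X), k ≤ n ∧ f ∈ Y ∧ ‖f‖ ≤ 1 ∧
        q ((V ^ n) f) ≤ σ + 1 / ((k : ℝ) + 1) ∧ σ - 1 / ((k : ℝ) + 1) ≤ q (V ((V ^ n) f)) := by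
      intro k
      have hk : (0 : ℝ) < 1 / ((k : ℝ) + 1) := by positivity
      obtain ⟨t, ⟨ht0, n, hn⟩, htl⟩ := exists_lt_of_csInf_lt hTne (lt_add_of_pos_right σ hk)
      by_contra! hcon
      have hnn : ∀ f ∈ Y, ‖f‖ ≤ 1 → q ((V ^ (max n k)) f) ≤ σ + 1 / ((k : ℝ) + 1) := fun f hf hf1 =>
        (hqmono n _ f (le_max_left _ _)).trans ((hn f hf hf1).trans htl.le)
      have hmem : max 0 (σ - 1 / ((k : ℝ) + 1)) ∈ T := by
        refine ⟨le_max_left _ _, max n k + 1, fun f hf hf1 => ?_⟩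
        rw [pow_succ', mul_apply_eq_comp]
        exact (hcon _ f (le_max_right _ _) hf hf1 (hnn f hf hf1)).le.trans (le_max_right _ _)
      have := csInf_le hTb hmem
      rcases le_max_iff.1 this with h | h <;> linarith
    choose n f hkn hfY hf1 hup hlo using key
    obtain ⟨y, s, hs, hy⟩ := hsub n f hkn hf1
    have hyY : y ∈ Y := hYc.mem_of_tendsto hy (Eventually.of_forall fun k => hYn _ _ (hfY _))
    have t0 : Tendsto (fun k : ℕ => 1 / (((s k : ℕ) : ℝ) + 1)) atTop (nhds 0) :=
      tendsto_one_div_add_atTop_nhds_zero_nat.comp hs.tendsto_atTop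
    have l1 : q y ≤ σ := by
      have := t0.const_add σ
      rw [add_zero] at this
      exact le_of_tendsto_of_tendsto ((hqc.tendsto y).comp hy) this
        (Eventually.of_forall fun k => hup (s k))
    have l2 : σ ≤ q (V y) := by
      have := t0.const_sub σ
      rw [sub_zero] at this
      exact le_of_tendsto_of_tendsto this (((hqc.comp V.continuous).tendsto y).comp hy)
        (Eventually.of_forall fun k => hlo (s k))
    have hy0 : y = 0 := by
      by_contra h
      linarith [hlt y hyY h]
    have hq00 : q 0 = 0 := by simpa using hqs 0 0
    rw [hy0, map_zero, hq00] at l2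
    linarith
  obtain ⟨N, hN0, hN⟩ : ∃ N, 0 < N ∧ ∀ f ∈ Y, ‖f‖ ≤ 1 → ‖(V ^ N) f‖ ≤ 1 / 2 := by
    by_contra! hcon
    choose f hfY hf1 hf2 using fun k : ℕ => hcon (k + 1) (Nat.succ_pos k)
    obtain ⟨g, s, hs, hg⟩ := hsub (fun k => k + 1) f (fun k => Nat.le_succ k) hf1
    have h1 : 1 / 2 ≤ ‖g‖ := ge_of_tendsto hg.norm (Eventually.of_forall fun k => (hf2 _).le)
    have h2 : q g ≤ 0 := by
      refine le_of_forall_pos_le_add fun ε hε => ?_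
      rw [zero_add]
      obtain ⟨t, ⟨ht0, n, hn⟩, htl⟩ := exists_lt_of_csInf_lt hTne (lt_of_le_of_lt hσ0 hε)
      refine le_of_tendsto ((hqc.tendsto g).comp hg) ?_
      filter_upwards [hs.tendsto_atTop.eventually (eventually_ge_atTop n)] with k hk
      exact (hqmono n _ _ (by omega)).trans ((hn _ (hfY _) (hf1 _)).trans htl.le)
    have := hqz g (le_antisymm h2 (hq0 g))
    rw [this] at h1
    norm_num at h1
  have hN' : ∀ f ∈ Y, ‖(V ^ N) f‖ ≤ 1 / 2 * ‖f‖ := by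
    intro f hf
    rcases eq_or_ne f 0 with rfl | h
    · simp
    · have hp : 0 < ‖f‖ := norm_pos_iff.2 h
      have := hN (‖f‖⁻¹ • f) (Y.smul_mem _ hf) (by
        rw [norm_smul, norm_inv, norm_norm, inv_mul_cancel₀ hp.ne'])
      rw [map_smul, norm_smul, norm_inv, norm_norm, inv_mul_le_iff₀ hp] at this
      linarith
  have hNd : ∀ d, ∀ f ∈ Y, ‖(V ^ (N * d)) f‖ ≤ (1 / 2) ^ d * ‖f‖ := by
    intro d f hf
    induction d with
    | zero => simp
    | succ d ih =>
      rw [Nat.mul_succ, add_comm, pow_add, mul_apply_eq_comp, pow_succ']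
      refine (hN' _ (hYn _ _ hf)).trans ?_
      rw [mul_assoc]; gcongr
  set ζ : ℝ := (1 / 2 : ℝ) ^ (1 / (N : ℝ)) with hζ
  have hNr : (0 : ℝ) < N := by exact_mod_cast hN0
  have hζ0 : 0 < ζ := by positivity
  have hζ1 : ζ < 1 := Real.rpow_lt_one (by norm_num) (by norm_num) (by positivity)
  have hζN : ζ ^ N = 1 / 2 := by
    rw [hζ, ← Real.rpow_natCast, ← Real.rpow_mul (by norm_num), one_div_mul_cancel hNr.ne', Real.rpow_one]
  refine ⟨ζ, hζ0, hζ1, 2 * B, by linarith, fun n f hf => ?_⟩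
  have hd : n = n % N + N * (n / N) := (Nat.mod_add_div n N).symm
  have e1 : ‖(V ^ n) f‖ ≤ B * ((1 / 2) ^ (n / N) * ‖f‖) := by
    nth_rewrite 1 [hd]
    rw [pow_add, mul_apply_eq_comp]
    refine (ContinuousLinearMap.le_opNorm _ _).trans ?_
    gcongr
    · exact hB _
    · exact hNd _ f hf
  have e2 : (1 / 2 : ℝ) ^ (n / N) ≤ 2 * ζ ^ n := by
    have a1 : (1 / 2 : ℝ) ≤ ζ ^ (n % N) := by
      rw [← hζN]; exact pow_le_pow_of_le_one hζ0.le hζ1.le (Nat.mod_lt _ hN0).le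
    have a2 : ζ ^ n = ζ ^ (n % N) * (1 / 2) ^ (n / N) := by
      nth_rewrite 1 [hd]
      rw [pow_add, pow_mul, hζN]
    rw [a2]
    have : (0 : ℝ) < (1 / 2) ^ (n / N) := by positivity
    nlinarith
  calc _ ≤ B * ((1 / 2) ^ (n / N) * ‖f‖) := e1
    _ ≤ B * ((2 * ζ ^ n) * ‖f‖) := by gcongr
    _ = _ := by ring

lemma tendsto_trunc {α : Type*} [MeasurableSpace α] {μ : Measure α}
    {p : ℝ≥0∞} [Fact (1 ≤ p)] (hp : p ≠ ∞) (g h : Lp ℝ p μ) (hg : 0 ≤ g) (hh : ∀ᵐ x ∂μ, 0 < h x) :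
    Tendsto (fun k : ℕ => g ⊓ ((k : ℝ) • h)) atTop (nhds g) := by
  have hp0 : p ≠ 0 := (lt_of_lt_of_le one_pos (Fact.out : 1 ≤ p)).ne'
  have hpr : 0 < p.toReal := ENNReal.toReal_pos hp0 hp
  rw [Lp.tendsto_Lp_iff_tendsto_eLpNorm']
  have e : ∀ k : ℕ, (⇑(g ⊓ ((k : ℝ) • h)) - ⇑g : α → ℝ) =ᵐ[μ] fun x => min (g x) (k * h x) - g x := by
    intro k
    filter_upwards [Lp.coeFn_inf g ((k : ℝ) • h), Lp.coeFn_smul (k : ℝ) h] with x h1 h2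
    simp [h1, h2]
  simp only [eLpNorm_congr_ae (e _)]
  simp only [eLpNorm_eq_lintegral_rpow_enorm_toReal hp0 hp]
  have hz : (0 : ℝ≥0∞) = (∫⁻ x, (0 : ℝ≥0∞) ∂μ) ^ (1 / p.toReal) := by
    simp [hpr]
  rw [hz]
  refine ((ENNReal.continuous_rpow_const).tendsto _).comp ?_
  have hgx := (Lp.coeFn_nonneg g).2 hg
  refine tendsto_lintegral_of_dominated_convergence' (fun x => ‖g x‖ₑ ^ p.toReal) ?_ ?_ ?_ ?_
  · intro k
    have h1 := (Lp.aestronglyMeasurable g).aemeasurable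
    have h2 := (Lp.aestronglyMeasurable h).aemeasurable
    fun_prop
  · intro k
    filter_upwards [hgx, hh] with x h1 h2
    gcongr
    rw [enorm_le_iff_norm_le, Real.norm_eq_abs, Real.norm_eq_abs]
    have h1' : 0 ≤ g x := h1
    have h3 : 0 ≤ k * h x := by positivity
    rw [abs_of_nonneg h1', abs_le]
    constructor
    · have := le_min h1' h3
      linarith
    · have := min_le_left (g x) (k * h x)
      linarith
  · exact (lintegral_rpow_enorm_lt_top_of_eLpNorm_lt_top hp0 hp (Lp.eLpNorm_lt_top g)).ne
  · filter_upwards [hh] with x h2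
    have : ∀ᶠ k : ℕ in atTop, g x ≤ k * h x := by
      have := (tendsto_natCast_atTop_atTop (R := ℝ)).atTop_mul_const h2
      exact this.eventually_ge_atTop _
    refine tendsto_const_nhds.congr' ?_
    filter_upwards [this] with k hk
    rw [min_eq_left hk]
    simp [hpr]

lemma functional_strict {α : Type*} [MeasurableSpace α] {μ : Measure α}
    {p : ℝ≥0∞} [Fact (1 ≤ p)] (hp : p ≠ ∞) (φ : Lp ℝ p μ →L[ℝ] ℝ)
    (hpos : ∀ f, 0 ≤ f → 0 ≤ φ f) (h : Lp ℝ p μ) (hh : ∀ᵐ x ∂μ, 0 < h x) (h0 : φ h = 0) : φ = 0 := by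
  have hh0 : 0 ≤ h := (Lp.coeFn_nonneg h).1 (by filter_upwards [hh] with x hx using hx.le)
  have hg : ∀ g : Lp ℝ p μ, 0 ≤ g → φ g = 0 := by
    intro g hg
    refine le_antisymm ?_ (hpos g hg)
    refine le_of_tendsto ((φ.continuous.tendsto g).comp (tendsto_trunc hp g h hg hh))
      (Eventually.of_forall fun k => ?_)
    have h1 := hpos ((k : ℝ) • h - g ⊓ ((k : ℝ) • h)) (sub_nonneg.2 inf_le_right)
    rw [map_sub, map_smul, h0, smul_zero] at h1
    simp only [Function.comp]
    linarith
  ext f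
  rw [← posPart_sub_negPart f, map_sub, hg _ (posPart_nonneg f), hg _ (negPart_nonneg f)]
  simp

set_option maxHeartbeats 2000000

/-- **Theorem 2.4 iv).** Let `U` be a strictly positive bounded linear operator on
`X = L^p(E, μ)` with spectral radius `r(U) > 0` (Gelfand formula), admitting a splitting
`U = W + K` with `‖W‖ < r(U)` and `K (λ - W)⁻¹` power compact for every real `λ > ‖W‖`,
and let `φ₀ ∈ X'₊ \ {0}` satisfy `U* φ₀ = r(U) φ₀`.  Then, with `Ũ = U / r(U)`, there
exist `ζ ∈ (0,1)` and `C ≥ 1` such that `‖Ũⁿ f‖ ≤ C ζⁿ ‖f‖` for every `n` and every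
`f` with `φ₀(f) = 0`. -/
theorem geometric_decay_on_kernel_of_eigenfunctional
    {α : Type*} [MeasurableSpace α] {μ : Measure α} [SigmaFinite μ]
    {p : ℝ≥0∞} [Fact (1 ≤ p)] (hp : p ≠ ∞)
    (U W K : Lp ℝ p μ →L[ℝ] Lp ℝ p μ)
    (hstrict : ∀ f : Lp ℝ p μ, 0 ≤ f → f ≠ 0 → ∀ᵐ x ∂μ, 0 < (U f) x)
    (r : ℝ) (hr : Tendsto (fun n : ℕ => ‖U ^ n‖ ^ (1 / (n : ℝ))) atTop (nhds r))
    (hr0 : 0 < r) (hsplit : U = W + K) (hW : ‖W‖ < r)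
    (hcomp : ∀ lam : ℝ, ‖W‖ < lam → ∃ n : ℕ, 0 < n ∧
      IsCompactOperator ⇑((K * Ring.inverse (lam • (1 : Lp ℝ p μ →L[ℝ] Lp ℝ p μ) - W)) ^ n))
    (φ₀ : Lp ℝ p μ →L[ℝ] ℝ) (hφ₀pos : ∀ f, 0 ≤ f → 0 ≤ φ₀ f) (hφ₀ne : φ₀ ≠ 0)
    (hφ₀ : ∀ f, φ₀ (U f) = r * φ₀ f) :
    ∃ ζ : ℝ, 0 < ζ ∧ ζ < 1 ∧ ∃ C : ℝ, 1 ≤ C ∧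
      ∀ (n : ℕ) (f : Lp ℝ p μ), φ₀ f = 0 →
        ‖((r⁻¹ • U) ^ n) f‖ ≤ C * ζ ^ n * ‖f‖ := by
  have hQ := quasi_compact U W K r hsplit hW hcomp
  have hφs : ∀ f, 0 ≤ f → φ₀ f = 0 → f = 0 := by
    intro f hf h0
    by_contra hne
    exact hφ₀ne (functional_strict hp φ₀ hφ₀pos (U f) (hstrict f hf hne) (by rw [hφ₀, h0, mul_zero]))
  have hφm : ∀ f g, f ≤ g → φ₀ f ≤ φ₀ g := fun f g h => by
    have := hφ₀pos (g - f) (sub_nonneg.2 h)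
    rw [map_sub] at this
    linarith
  have hUpos : ∀ f, 0 ≤ f → 0 ≤ U f := by
    intro f hf
    rcases eq_or_ne f 0 with rfl | h
    · simp
    · exact (Lp.coeFn_nonneg _).1 (by filter_upwards [hstrict f hf h] with x hx using hx.le)
  have hUabs : ∀ f, |U f| ≤ U |f| := by
    intro f
    rw [abs_le']
    constructor
    · have := hUpos (|f| - f) (sub_nonneg.2 (le_abs_self f))
      rwa [map_sub, sub_nonneg] at this
    · have := hUpos (|f| + f) (by rw [← sub_neg_eq_add, sub_nonneg]; exact neg_le_abs f)
      rw [map_add, ← sub_neg_eq_add, sub_nonneg] at this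
      exact this
  have hUlt : ∀ f, φ₀ f = 0 → f ≠ 0 → φ₀ |U f| < φ₀ (U |f|) := by
    intro f hf hne
    refine lt_of_le_of_ne (hφm _ _ (hUabs f)) fun heq => ?_
    have h1 : U |f| - |U f| = 0 := hφs _ (sub_nonneg.2 (hUabs f)) (by rw [map_sub, heq, sub_self])
    have h1' : |U f| = U |f| := (sub_eq_zero.1 h1).symm
    have hφpn : φ₀ f⁺ = φ₀ f⁻ := by
      rw [← posPart_sub_negPart f, map_sub] at hf
      simpa using sub_eq_zero.1 hf
    have hp0 : f⁺ ≠ 0 := by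
      intro h
      have hn : f⁻ = 0 := hφs _ (negPart_nonneg f) (by rw [← hφpn, h, map_zero])
      exact hne (by rw [← posPart_sub_negPart f, h, hn, sub_zero])
    have hn0 : f⁻ ≠ 0 := by
      intro h
      exact hp0 (hφs _ (posPart_nonneg f) (by rw [hφpn, h, map_zero]))
    have e1 : U f = U f⁺ - U f⁻ := by rw [← map_sub, posPart_sub_negPart]
    have e2 : U |f| = U f⁺ + U f⁻ := by rw [← map_add, posPart_add_negPart]
    have hfalse : ∀ᵐ x ∂μ, False := by
      have c1 := Lp.coeFn_abs (U f)
      rw [h1', e2] at c1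
      have c2 := Lp.coeFn_sub (U f⁺) (U f⁻)
      rw [← e1] at c2
      filter_upwards [hstrict _ (posPart_nonneg f) hp0, hstrict _ (negPart_nonneg f) hn0, c1, c2,
        Lp.coeFn_add (U f⁺) (U f⁻)] with x a1 a2 a3 a4 a5
      rw [a5, a4] at a3
      simp only [Pi.add_apply, Pi.sub_apply] at a3
      rcases abs_cases ((U f⁺) x - (U f⁻) x) with h | h <;> linarith
    apply hne
    rw [Lp.eq_zero_iff_ae_eq_zero]
    filter_upwards [hfalse] with x hx using hx.elim
  have habs : Continuous (fun f : Lp ℝ p μ => |f|) := by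
    simp only [abs]
    exact continuous_id.sup continuous_neg
  have hri : (0 : ℝ) < r⁻¹ := inv_pos.2 hr0
  have hsm : ∀ (c : ℝ) (f : Lp ℝ p μ), |c • f| = |c| • |f| := by
    intro c f
    apply Lp.ext
    filter_upwards [Lp.coeFn_abs (c • f), Lp.coeFn_smul c f, Lp.coeFn_smul |c| |f|, Lp.coeFn_abs f]
      with x a1 a2 a3 a4
    rw [a1, a2, a3]
    simp [a4, abs_mul]
  have hqs : ∀ (c : ℝ) (f : Lp ℝ p μ), φ₀ |c • f| = |c| * φ₀ |f| := by
    intro c f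
    rw [hsm, map_smul, smul_eq_mul]
  have hV : ∀ f, φ₀ |(r⁻¹ • U) f| = r⁻¹ * φ₀ |U f| := by
    intro f
    rw [smul_apply, hqs, abs_of_pos hri]
  have hV' : ∀ f, φ₀ |f| = r⁻¹ * φ₀ (U |f|) := by
    intro f
    rw [hφ₀, ← mul_assoc, inv_mul_cancel₀ hr0.ne', one_mul]
  obtain ⟨ζ, h1, h2, C, hC, h⟩ := decay_abstract (r⁻¹ • U) hQ (fun f => φ₀ |f|) (φ₀.continuous.comp habs)
    (fun f => hφ₀pos _ (abs_nonneg f)) hqs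
    (fun f hf => by
      have h0 := hφs _ (abs_nonneg f) hf
      rw [← norm_eq_zero, ← norm_abs_eq_norm, h0, norm_zero]) ‖φ₀‖
    (fun f => by
      have := (le_abs_self _).trans (φ₀.le_opNorm |f|)
      rwa [norm_abs_eq_norm] at this)
    (fun f => by
      rw [hV, hV' f]
      have := hφm _ _ (hUabs f)
      exact mul_le_mul_of_nonneg_left this hri.le)
    (LinearMap.ker (φ₀ : Lp ℝ p μ →ₗ[ℝ] ℝ)) φ₀.isClosed_ker
    (fun f hf => by
      have hf : φ₀ f = 0 := hf
      change φ₀ ((r⁻¹ • U) f) = 0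
      rw [smul_apply, map_smul, hφ₀, hf]; simp)
    (fun f hf hne => by
      rw [hV, hV' f]
      have := hUlt f hf hne
      gcongr)
  exact ⟨ζ, h1, h2, C, hC, fun n f hf => h n f hf⟩
end
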